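/- Let K be a finite dimensional compact metric space and σ: K^ℤ → K^ℤ the full shift on the alphabet K. Then for every n ≥ 1, (dim Kⁿ − 1)/n ≤ mdim(K^ℤ, σ) ≤ (dim Kⁿ)/n. -/

import Mathlib

open Filter Set
open scoped ENNReal

namespace MeanDimPaper

variable {X : Type*} [TopologicalSpace X]

/-- `α` is an open cover of `X`. -/
def IsOpenCover (α : Set (Set X)) : Prop :=
  (∀ U ∈ α, IsOpen U) ∧ ⋃₀ α = Set.univ

/-- The order of a cover `α`: the maximum `n ≥ 0` such that there exist `n + 1`
pairwise distinct members of `α` with nonempty common intersection. -/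
noncomputable def ord (α : Set (Set X)) : ℕ∞ :=
  ⨆ n ∈ {n : ℕ | ∃ f : Fin (n + 1) → Set X,
      Function.Injective f ∧ (∀ i, f i ∈ α) ∧ (⋂ i, f i).Nonempty}, (n : ℕ∞)

/-- `β` refines `α`: every member of `β` is contained in some member of `α`. -/
def Refines (β α : Set (Set X)) : Prop := ∀ V ∈ β, ∃ U ∈ α, V ⊆ U

/-- `D(α)`: the minimum of `ord β` over open covers `β` refining `α`. -/
noncomputable def covD (α : Set (Set X)) : ℕ∞ :=
  ⨅ β ∈ {β : Set (Set X) | IsOpenCover β ∧ Refines β α}, ord β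

/-- Topological (covering) dimension: the supremum of `D(α)` over open covers `α`. -/
noncomputable def topDim (X : Type*) [TopologicalSpace X] : ℕ∞ :=
  ⨆ α ∈ {α : Set (Set X) | IsOpenCover α}, covD α

/-- Diameter of a set with respect to a distance function `d`. -/
noncomputable def diamD (d : X → X → ℝ) (U : Set X) : ℝ :=
  sSup {r | ∃ x ∈ U, ∃ y ∈ U, r = d x y}

/-- Mesh of a cover: the supremum of the diameters of its members. -/
noncomputable def mesh (d : X → X → ℝ) (α : Set (Set X)) : ℝ :=
  sSup (diamD d '' α)

/-- `widim_ε(X, d)`: the minimum of `D(α)` over open covers `α` with `mesh(α, d) < ε`. -/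
noncomputable def widim (ε : ℝ) (d : X → X → ℝ) : ℕ∞ :=
  ⨅ α ∈ {α : Set (Set X) | IsOpenCover α ∧ mesh d α < ε}, covD α

/-- `d` is a metric on `X` compatible with the topology of `X`. -/
structure IsCompatMetric {X : Type*} [TopologicalSpace X] (d : X → X → ℝ) : Prop where
  refl : ∀ x, d x x = 0
  eq_of : ∀ x y, d x y = 0 → x = y
  symm : ∀ x y, d x y = d y x
  triangle : ∀ x y z, d x z ≤ d x y + d y z
  isOpen_iff : ∀ U : Set X, IsOpen U ↔ ∀ x ∈ U, ∃ ε > 0, ∀ y, d x y < ε → y ∈ U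

/-- The dynamical distance `d_n(x, y) = max_{0 ≤ i < n} d(Tⁱ x, Tⁱ y)`. -/
noncomputable def dynDist (d : X → X → ℝ) (T : X → X) (n : ℕ) (x y : X) : ℝ :=
  sSup {r | ∃ i < n, r = d (T^[i] x) (T^[i] y)}

/-- Mean dimension `mdim(X, T)` computed with the metric `d`:
`lim_{ε → 0} lim_{n → ∞} widim_ε(X, d_n) / n`.  The inner limit exists (by
subadditivity of `n ↦ widim_ε(X, d_n)`) so it coincides with the liminf, and the inner
quantity is monotone as `ε` decreases, so the limit as `ε → 0` is the supremum over
`ε > 0`. -/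
noncomputable def mdim (T : X → X) (d : X → X → ℝ) : ℝ≥0∞ :=
  ⨆ (ε : ℝ) (_ : 0 < ε),
    Filter.liminf (fun n : ℕ => (widim ε (dynDist d T n) : ℝ≥0∞) / (n : ℝ≥0∞)) Filter.atTop

/-- The full shift `σ` on the alphabet `K`: `σ((xₙ)ₙ) = (xₙ₊₁)ₙ`. -/
def shift (K : Type*) : (ℤ → K) → ℤ → K := fun x n => x (n + 1)

end MeanDimPaper

namespace MDP
open FreeAbelianGroup

/-- integral chains on lists (augmented ordered chain complex) -/
abbrev Ch (V : Type*) := FreeAbelianGroup (List V)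

/-- cone operator -/
def cn {V : Type*} (v : V) : Ch V →+ Ch V := FreeAbelianGroup.map (List.cons v)

theorem cn_of {V : Type*} (v : V) (l : List V) : cn v (of l) = of (v :: l) := by
  simp [cn]

/-- boundary of a list -/
def bdl {V : Type*} : List V → Ch V
  | [] => 0
  | v :: t => of t - cn v (bdl t)

/-- boundary -/
def bd {V : Type*} : Ch V →+ Ch V := lift bdl

theorem bd_of {V : Type*} (l : List V) : bd (of l) = bdl l := by simp [bd]

theorem hom_ext {V : Type*} {B : Type*} [AddCommGroup B] {f g : Ch V →+ B}
    (h : ∀ l, f (of l) = g (of l)) (c : Ch V) : f c = g c := by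
  have : f = g := FreeAbelianGroup.lift_ext _ _ h
  rw [this]

theorem bd_cn {V : Type*} (v : V) (c : Ch V) : bd (cn v c) = c - cn v (bd c) := by
  have := hom_ext (f := bd.comp (cn v)) (g := AddMonoidHom.id _ - (cn v).comp bd)
    (by intro l; simp [cn_of, bd_of, bdl]) c
  simpa using this

theorem bd_bdl {V : Type*} (l : List V) : bd (bdl l) = 0 := by
  induction l with
  | nil => simp [bdl]
  | cons v t ih => simp [bdl, bd_cn, bd_of, ih]

theorem bd_bd {V : Type*} (c : Ch V) : bd (bd c) = 0 := by
  have := hom_ext (f := bd.comp bd) (g := (0 : Ch V →+ Ch V))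
    (by intro l; simp [bd_of, bd_bdl]) c
  simpa using this

/-- chains supported on lists with property P -/
def Sp {V : Type*} (P : List V → Prop) : AddSubgroup (Ch V) :=
  AddSubgroup.closure (of '' {l | P l})

theorem of_mem_Sp {V : Type*} {P : List V → Prop} {l : List V} (h : P l) : of l ∈ Sp P :=
  AddSubgroup.subset_closure ⟨l, h, rfl⟩

theorem map_mem_of_Sp {V B : Type*} [AddCommGroup B] {P : List V → Prop} (S : AddSubgroup B)
    (f : Ch V →+ B) (h : ∀ l, P l → f (of l) ∈ S) {c : Ch V} (hc : c ∈ Sp P) : f c ∈ S := by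
  have : Sp P ≤ S.comap f := by
    rw [Sp, AddSubgroup.closure_le]
    rintro _ ⟨l, hl, rfl⟩
    exact h l hl
  exact this hc

theorem eq_of_Sp {V B : Type*} [AddCommGroup B] {P : List V → Prop}
    (f g : Ch V →+ B) (h : ∀ l, P l → f (of l) = g (of l)) {c : Ch V} (hc : c ∈ Sp P) :
    f c = g c := by
  have := map_mem_of_Sp (⊥ : AddSubgroup B) (f - g) (fun l hl => by simp [h l hl]) hc
  simpa [sub_eq_zero] using this

theorem Sp_mono {V : Type*} {P Q : List V → Prop} (h : ∀ l, P l → Q l) : Sp P ≤ Sp Q :=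
  AddSubgroup.closure_mono (Set.image_mono h)

theorem eq_zero_of_Sp {V : Type*} {P : List V → Prop} (h : ∀ l, ¬ P l) {c : Ch V}
    (hc : c ∈ Sp P) : c = 0 := by
  have := eq_of_Sp (AddMonoidHom.id _) 0 (fun l hl => (h l hl).elim) hc
  simpa using this

theorem bdl_mem {V : Type*} (l : List V) :
    bdl l ∈ Sp (fun s : List V => s.length + 1 = l.length ∧ s.Sublist l) := by
  induction l with
  | nil => simp [bdl, zero_mem]
  | cons v t ih =>
    refine sub_mem (of_mem_Sp ⟨rfl, List.sublist_cons_self v t⟩) ?_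
    refine map_mem_of_Sp _ (cn v) ?_ ih
    rintro s ⟨h1, h2⟩
    rw [cn_of]
    exact of_mem_Sp ⟨by simp [h1], h2.cons_cons v⟩

section hom
variable {V : Type*} (Ψ : Ch V →+ Ch V)

/-- auxiliary homotopy -/
noncomputable def Hn : ℕ → List V → Ch V
  | 0, _ => 0
  | _ + 1, [] => 0
  | n + 1, v :: t => cn v (of (v :: t) - Ψ (of (v :: t)) - lift (Hn n) (bdl (v :: t)))

/-- homotopy on lists -/
noncomputable def Hl (l : List V) : Ch V := Hn Ψ l.length l

/-- homotopy -/
noncomputable def HH : Ch V →+ Ch V := lift (Hl Ψ)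

theorem Hl_cons (v : V) (t : List V) :
    Hl Ψ (v :: t) = cn v (of (v :: t) - Ψ (of (v :: t)) - HH Ψ (bdl (v :: t))) := by
  have : lift (Hn Ψ t.length) (bdl (v :: t)) = HH Ψ (bdl (v :: t)) := by
    refine eq_of_Sp _ _ ?_ (bdl_mem (v :: t))
    rintro s ⟨h1, -⟩
    have : s.length = t.length := by simpa using h1
    simp [HH, Hl, this]
  rw [← this]; simp [Hl, Hn]

theorem HH_spec (hΨ : ∀ c, bd (Ψ c) = Ψ (bd c)) (h0 : Ψ (of []) = of []) (c : Ch V) :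
    bd (HH Ψ c) + HH Ψ (bd c) = c - Ψ c := by
  have key : ∀ n, ∀ l : List V, l.length = n → bd (HH Ψ (of l)) + HH Ψ (bdl l) = of l - Ψ (of l) := by
    intro n
    induction n with
    | zero =>
      intro l hl
      obtain rfl : l = [] := List.length_eq_zero_iff.1 hl
      simp [HH, Hl, Hn, bdl, h0]
    | succ n ih =>
      intro l hl
      obtain ⟨v, t, rfl⟩ : ∃ v t, l = v :: t := by
        cases l with
        | nil => simp at hl
        | cons v t => exact ⟨v, t, rfl⟩
      have e1 : HH Ψ (of (v :: t)) = Hl Ψ (v :: t) := by simp [HH]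
      have e2 : bd (HH Ψ (bdl (v :: t))) + HH Ψ (bd (bdl (v :: t)))
          = bdl (v :: t) - Ψ (bdl (v :: t)) := by
        have := eq_of_Sp (bd.comp (HH Ψ) + (HH Ψ).comp bd) (AddMonoidHom.id _ - Ψ)
          (fun s hs => by
            have := ih s (by have := hs.1; simp at this hl; omega)
            simpa [bd_of] using this) (bdl_mem (v :: t))
        simpa using this
      rw [bd_bdl, map_zero, add_zero] at e2
      have e3 : bd (of (v :: t) - Ψ (of (v :: t)) - HH Ψ (bdl (v :: t))) = 0 := by
        rw [map_sub, map_sub, hΨ, bd_of, e2, sub_self]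
      rw [e1, Hl_cons, bd_cn, e3]
      simp
  have := hom_ext (f := bd.comp (HH Ψ) + (HH Ψ).comp bd) (g := AddMonoidHom.id _ - Ψ)
    (by intro l; simpa [bd_of] using key _ l rfl) c
  simpa using this

theorem HH_car (K : List V → Set V) (hK : ∀ s l : List V, s.Sublist l → K s ⊆ K l)
    (hK' : ∀ l : List V, ∀ x ∈ l, x ∈ K l)
    (hc : ∀ l, Ψ (of l) ∈ Sp (fun s => s.length = l.length ∧ ∀ x ∈ s, x ∈ K l)) (l : List V) :
    HH Ψ (of l) ∈ Sp (fun s => s.length = l.length + 1 ∧ ∀ x ∈ s, x ∈ K l) := by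
  have key : ∀ n, ∀ l : List V, l.length = n →
      HH Ψ (of l) ∈ Sp (fun s => s.length = l.length + 1 ∧ ∀ x ∈ s, x ∈ K l) := by
    intro n
    induction n with
    | zero =>
      intro l hl
      obtain rfl : l = [] := List.length_eq_zero_iff.1 hl
      simp [HH, Hl, Hn, zero_mem]
    | succ n ih =>
      intro l hl
      obtain ⟨v, t, rfl⟩ : ∃ v t, l = v :: t := by
        cases l with
        | nil => simp at hl
        | cons v t => exact ⟨v, t, rfl⟩
      have e1 : HH Ψ (of (v :: t)) = Hl Ψ (v :: t) := by simp [HH]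
      rw [e1, Hl_cons]
      refine map_mem_of_Sp (P := fun s => s.length = (v :: t).length ∧ ∀ x ∈ s, x ∈ K (v :: t))
        _ (cn v) ?_ ?_
      · rintro s ⟨h1, h2⟩
        rw [cn_of]
        refine of_mem_Sp ⟨by simp [h1], ?_⟩
        intro x hx
        rcases List.mem_cons.1 hx with rfl | hx
        · exact hK' _ _ (by simp)
        · exact h2 x hx
      · refine sub_mem (sub_mem (of_mem_Sp ⟨rfl, hK' _⟩) (hc _)) ?_
        refine map_mem_of_Sp _ (HH Ψ) ?_ (bdl_mem (v :: t))
        rintro s ⟨h1, h2⟩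
        refine Sp_mono ?_ (ih s (by simp at h1 hl; omega))
        rintro s' ⟨h3, h4⟩
        exact ⟨by omega, fun x hx => hK _ _ h2 (h4 x hx)⟩
  exact key _ l rfl
end hom

section phi
variable {V : Type*} [LinearOrder V]

/-- cone for increasing lists -/
def incl (v : V) (s : List V) : Ch V := if v ∈ s then 0 else of (v :: s)

/-- cone for increasing lists -/
def inc (v : V) : Ch V →+ Ch V := lift (incl v)

theorem bd_inc (v : V) {c : Ch V}
    (hc : c ∈ Sp (fun s : List V => s.Pairwise (· < ·) ∧ ∀ x ∈ s, v ≤ x)) :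
    bd (inc v c) = c - inc v (bd c) := by
  have := eq_of_Sp (bd.comp (inc v)) (AddMonoidHom.id _ - (inc v).comp bd) ?_ hc
  · simpa using this
  · rintro s ⟨h1, h2⟩
    have hcn : ∀ (s : List V), v ∉ s → inc v (bdl s) = cn v (bdl s) := by
      intro s hs
      refine eq_of_Sp _ _ ?_ (bdl_mem s)
      rintro s' ⟨-, h⟩
      have : v ∉ s' := fun hv => hs (h.subset hv)
      simp [inc, incl, this, cn_of]
    by_cases hv : v ∈ s
    · cases s with
      | nil => simp at hv
      | cons w t =>
        have hw : w = v := by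
          rcases List.mem_cons.1 hv with h | h
          · exact h.symm
          · have := (List.pairwise_cons.1 h1).1 v h
            exact absurd (h2 w (by simp)) (not_le.2 this)
        subst hw
        have hwt : w ∉ t := fun h => lt_irrefl _ ((List.pairwise_cons.1 h1).1 w h)
        have e : inc w (cn w (bdl t)) = 0 := by
          have := hom_ext (f := (inc w).comp (cn w)) (g := 0)
            (by intro l; simp [cn_of, inc, incl]) (bdl t)
          simpa using this
        simp [inc, incl, bd_of, bdl, hwt]
        simpa [inc] using e.symm
    · simp [bd_of, hcn s hv]
      simp [inc, incl, hv, bd_of, bdl]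

/-- minimum of a nonempty list -/
def mnl (v : V) (t : List V) : V := t.foldr min v

theorem mnl_mem (v : V) (t : List V) : mnl v t ∈ v :: t := by
  induction t with
  | nil => simp [mnl]
  | cons w t ih =>
    simp only [mnl, List.foldr_cons] at *
    rcases min_choice w (t.foldr min v) with h | h
    · rw [h]; simp
    · rw [h]; rcases List.mem_cons.1 ih with h | h
      · rw [h]; simp
      · simp [h]

theorem mnl_le (v : V) (t : List V) : ∀ x ∈ v :: t, mnl v t ≤ x := by
  induction t with
  | nil => simp [mnl]
  | cons w t ih =>
    intro x hx
    simp only [mnl, List.foldr_cons] at *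
    rcases List.mem_cons.1 hx with rfl | hx
    · exact (min_le_right _ _).trans (ih _ (by simp))
    · rcases List.mem_cons.1 hx with rfl | hx
      · exact min_le_left _ _
      · exact (min_le_right _ _).trans (ih _ (by simp [hx]))

/-- auxiliary sorting chain map -/
noncomputable def Fn : ℕ → List V → Ch V
  | 0, _ => of []
  | _ + 1, [] => of []
  | n + 1, v :: t => inc (mnl v t) (lift (Fn n) (bdl (v :: t)))

/-- sorting chain map -/
noncomputable def FF : Ch V →+ Ch V := lift (fun l : List V => Fn l.length l)

theorem FF_nil : FF (of ([] : List V)) = of [] := by simp [FF, Fn]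

theorem FF_cons (v : V) (t : List V) :
    FF (of (v :: t)) = inc (mnl v t) (FF (bdl (v :: t))) := by
  have : lift (Fn t.length) (bdl (v :: t)) = FF (bdl (v :: t)) := by
    refine eq_of_Sp _ _ ?_ (bdl_mem (v :: t))
    rintro s ⟨h1, -⟩
    have : s.length = t.length := by simpa using h1
    simp [FF, this]
  rw [← this]; simp [FF, Fn]

theorem FF_car (l : List V) : FF (of l) ∈
    Sp (fun s : List V => s.length = l.length ∧ s ⊆ l ∧ s.Pairwise (· < ·)) := by
  have key : ∀ n, ∀ l : List V, l.length = n → FF (of l) ∈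
    Sp (fun s : List V => s.length = l.length ∧ s ⊆ l ∧ s.Pairwise (· < ·)) := by
    intro n
    induction n with
    | zero =>
      intro l hl
      obtain rfl : l = [] := List.length_eq_zero_iff.1 hl
      rw [FF_nil]; exact of_mem_Sp (by simp)
    | succ n ih =>
      intro l hl
      obtain ⟨v, t, rfl⟩ : ∃ v t, l = v :: t := by
        cases l with
        | nil => simp at hl
        | cons v t => exact ⟨v, t, rfl⟩
      rw [FF_cons]
      have : FF (bdl (v :: t)) ∈
          Sp (fun s : List V => s.length = n ∧ s ⊆ (v :: t) ∧ s.Pairwise (· < ·)) := by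
        refine map_mem_of_Sp _ FF ?_ (bdl_mem (v :: t))
        rintro s ⟨h1, h2⟩
        refine Sp_mono ?_ (ih s (by simp at h1 hl; omega))
        rintro s' ⟨h3, h4, h5⟩
        exact ⟨by simp at h1 hl; omega, fun x hx => h2.subset (h4 hx), h5⟩
      refine map_mem_of_Sp _ (inc _) ?_ this
      rintro s ⟨h1, h2, h3⟩
      simp only [inc, lift_apply_of, incl]
      split_ifs with h
      · exact zero_mem _
      · refine of_mem_Sp ⟨by simp at hl ⊢; omega, ?_, ?_⟩
        · intro x hx
          rcases List.mem_cons.1 hx with rfl | hx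
          · exact mnl_mem _ _
          · exact h2 hx
        · rw [List.pairwise_cons]
          refine ⟨fun x hx => lt_of_le_of_ne (mnl_le _ _ _ (h2 hx)) ?_, h3⟩
          rintro rfl; exact h hx
  exact key _ l rfl

theorem bd_FF (c : Ch V) : bd (FF c) = FF (bd c) := by
  have key : ∀ n, ∀ l : List V, l.length = n → bd (FF (of l)) = FF (bdl l) := by
    intro n
    induction n with
    | zero =>
      intro l hl
      obtain rfl : l = [] := List.length_eq_zero_iff.1 hl
      simp [FF_nil, bd_of, bdl]
    | succ n ih =>
      intro l hl
      obtain ⟨v, t, rfl⟩ : ∃ v t, l = v :: t := by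
        cases l with
        | nil => simp at hl
        | cons v t => exact ⟨v, t, rfl⟩
      have e : bd (FF (bdl (v :: t))) = FF (bd (bdl (v :: t))) := by
        refine eq_of_Sp (bd.comp FF) (FF.comp bd) ?_ (bdl_mem (v :: t))
        rintro s ⟨h1, -⟩
        simpa [bd_of] using ih s (by simp at h1 hl; omega)
      rw [FF_cons, bd_inc, e, bd_bdl]
      · simp
      · refine map_mem_of_Sp _ FF ?_ (bdl_mem (v :: t))
        rintro s ⟨h1, h2⟩
        refine Sp_mono ?_ (FF_car s)
        rintro s' ⟨h3, h4, h5⟩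
        exact ⟨h5, fun x hx => mnl_le _ _ _ (h2.subset (h4 hx))⟩
  have := hom_ext (f := bd.comp FF) (g := FF.comp bd)
    (by intro l; simpa [bd_of] using key _ l rfl) c
  simpa using this

theorem FF_card (l : List V) (h : l.toFinset.card < l.length) : FF (of l) = 0 := by
  refine eq_zero_of_Sp ?_ (FF_car l)
  rintro s ⟨h1, h2, h3⟩
  have hn : s.Nodup := h3.imp (fun h => ne_of_lt h)
  have : s.toFinset ⊆ l.toFinset := fun x hx => by
    simp only [List.mem_toFinset] at *; exact h2 hx
  have := Finset.card_le_card this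
  rw [List.toFinset_card_of_nodup hn] at this
  omega

theorem FF_dup (l : List V) (h : ¬ l.Nodup) : FF (of l) = 0 := by
  refine FF_card l (lt_of_le_of_ne (List.toFinset_card_le l) ?_)
  intro h2
  exact h (Multiset.toFinset_card_eq_card_iff_nodup (m := (l : Multiset V)).1 h2)

theorem FF_sorted (l : List V) (h : l.Pairwise (· < ·)) : FF (of l) = of l := by
  have key : ∀ n, ∀ l : List V, l.length = n → l.Pairwise (· < ·) → FF (of l) = of l := by
    intro n
    induction n with
    | zero =>
      intro l hl _
      obtain rfl : l = [] := List.length_eq_zero_iff.1 hl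
      exact FF_nil
    | succ n ih =>
      intro l hl hs
      obtain ⟨v, t, rfl⟩ : ∃ v t, l = v :: t := by
        cases l with
        | nil => simp at hl
        | cons v t => exact ⟨v, t, rfl⟩
      have hv := (List.pairwise_cons.1 hs).1
      have hm : mnl v t = v := by
        refine le_antisymm (mnl_le v t v (by simp)) ?_
        rcases List.mem_cons.1 (mnl_mem v t) with h | h
        · exact h.ge
        · exact (hv _ h).le
      have e : FF (bdl (v :: t)) = bdl (v :: t) := by
        refine eq_of_Sp FF (AddMonoidHom.id _) ?_ (bdl_mem (v :: t))
        rintro s ⟨h1, h2⟩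
        exact ih s (by simp at h1 hl; omega) (hs.sublist h2)
      have hvt : v ∉ t := fun h => lt_irrefl _ (hv v h)
      have e2 : inc v (cn v (bdl t)) = 0 := by
        have := hom_ext (f := (inc v).comp (cn v)) (g := 0)
          (by intro l; simp [cn_of, inc, incl]) (bdl t)
        simpa using this
      rw [FF_cons, e, hm, bdl, map_sub, e2]
      simp [inc, incl, hvt]
  exact key _ l rfl h

end phi
end MDP

namespace MDP
open FreeAbelianGroup

section metric
variable {X : Type*} [MetricSpace X]

/-- all entries pairwise closer than ε -/
def Small (ε : ℝ) (l : List X) : Prop := ∀ x ∈ l, ∀ y ∈ l, dist x y < ε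

/-- all entries closer than ε to a common point of A -/
def Near (A : Set X) (ε : ℝ) (l : List X) : Prop := ∃ a ∈ A, ∀ x ∈ l, dist x a < ε

variable {F : Type*} [AddCommGroup F]

/-- u is a relative coboundary at scale ε -/
def Cob (A : Set X) (ε : ℝ) (q : ℕ) (u : List X → F) : Prop :=
  ∃ b : List X → F, (∀ l, l.length = q → Near A ε l → b l = 0) ∧
    ∀ l, l.length = q + 1 → Small ε l → u l = lift b (bdl l)

/-- u is a relative cocycle at scale ε -/
def Coc (A : Set X) (ε : ℝ) (q : ℕ) (u : List X → F) : Prop :=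
  (∀ l, l.length = q + 1 → Near A ε l → u l = 0) ∧
    ∀ l, l.length = q + 2 → Small ε l → lift u (bdl l) = 0

/-- not a relative coboundary at any scale -/
def Ess (A : Set X) (q : ℕ) (u : List X → F) : Prop := ∀ ε > 0, ¬ Cob A ε q u

theorem Small.mono {ε ε' : ℝ} (h : ε ≤ ε') {l : List X} (hl : Small ε l) : Small ε' l :=
  fun x hx y hy => (hl x hx y hy).trans_le h

theorem Near.mono {A : Set X} {ε ε' : ℝ} (h : ε ≤ ε') {l : List X} (hl : Near A ε l) :
    Near A ε' l := by
  obtain ⟨a, ha, H⟩ := hl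
  exact ⟨a, ha, fun x hx => (H x hx).trans_le h⟩

theorem Coc.mono {A : Set X} {ε ε' : ℝ} (h : ε ≤ ε') {q : ℕ} {u : List X → F}
    (hu : Coc A ε' q u) : Coc A ε q u :=
  ⟨fun l hl hn => hu.1 l hl (hn.mono h), fun l hl hn => hu.2 l hl (hn.mono h)⟩

theorem Cob.mono {A : Set X} {ε ε' : ℝ} (h : ε ≤ ε') {q : ℕ} {u : List X → F}
    (hu : Cob A ε' q u) : Cob A ε q u := by
  obtain ⟨b, h1, h2⟩ := hu
  exact ⟨b, fun l hl hn => h1 l hl (hn.mono h), fun l hl hn => h2 l hl (hn.mono h)⟩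

/-- lists in the δ-neighbourhood of entries -/
def Nb (δ : ℝ) (l s : List X) : Prop := ∀ x ∈ s, ∃ y ∈ l, dist x y < δ

theorem Small.nb {ε δ ε0 : ℝ} (h : ε + 2 * δ ≤ ε0) {l s : List X} (hl : Small ε l)
    (hs : Nb δ l s) : Small ε0 s := by
  intro x hx y hy
  obtain ⟨x', hx', h1⟩ := hs x hx
  obtain ⟨y', hy', h2⟩ := hs y hy
  have := hl x' hx' y' hy'
  have := dist_triangle4 x x' y' y
  rw [dist_comm y' y] at this
  linarith

theorem Near.nb {A : Set X} {ε δ ε0 : ℝ} (h : ε + δ ≤ ε0) {l s : List X} (hl : Near A ε l)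
    (hs : Nb δ l s) : Near A ε0 s := by
  obtain ⟨a, ha, H⟩ := hl
  refine ⟨a, ha, fun x hx => ?_⟩
  obtain ⟨y, hy, h1⟩ := hs x hx
  have := H y hy
  have := dist_triangle x y a
  linarith

theorem homotopy {A : Set X} {ε δ ε0 : ℝ} (hδ : 0 < δ) (h : ε + 2 * δ ≤ ε0) {q : ℕ}
    {u : List X → F} (hu : Coc A ε0 q u) (Ψ : Ch X →+ Ch X)
    (hΨ : ∀ c, bd (Ψ c) = Ψ (bd c)) (h0 : Ψ (of []) = of [])
    (hc : ∀ l, Ψ (of l) ∈ Sp (fun s => s.length = l.length ∧ Nb δ l s)) :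
    (∀ l, l.length = q → Near A ε l → lift u (HH Ψ (of l)) = 0) ∧
    (∀ l, l.length = q + 1 → Small ε l →
      u l - lift u (Ψ (of l)) = lift (fun s => lift u (HH Ψ (of s))) (bdl l)) := by
  have hcar := HH_car Ψ (fun l => {x | ∃ y ∈ l, dist x y < δ})
    (by
      rintro s l hsl x ⟨y, hy, hxy⟩
      exact ⟨y, hsl.subset hy, hxy⟩)
    (fun l x hx => ⟨x, hx, by simpa using hδ⟩) hc
  constructor
  · intro l hl hn
    have := eq_of_Sp (lift u) 0 ?_ (hcar l)
    · simpa using this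
    · rintro s ⟨h1, h2⟩
      simpa using hu.1 s (by omega) (hn.nb (by linarith) h2)
  · intro l hl hs
    have e := congrArg (lift u) (HH_spec Ψ hΨ h0 (of l))
    rw [map_add, map_sub, bd_of] at e
    have e1 : lift u (bd (HH Ψ (of l))) = 0 := by
      have := eq_of_Sp ((lift u).comp bd) 0 ?_ (hcar l)
      · simpa using this
      · rintro s ⟨h1, h2⟩
        simpa [bd_of] using hu.2 s (by omega) (hs.nb h h2)
    rw [e1, zero_add] at e
    have e2 : lift u (HH Ψ (bdl l)) = lift (fun s => lift u (HH Ψ (of s))) (bdl l) :=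
      hom_ext (f := (lift u).comp (HH Ψ)) (by intro l; simp) (bdl l)
    rw [← e2, e]; simp

theorem Coc.ess_comp {A : Set X} {ε0 : ℝ} (he : 0 < ε0) {q : ℕ} {u : List X → F}
    (hu : Coc A ε0 q u) (hE : Ess A q u) (Ψ : Ch X →+ Ch X) {δ : ℝ} (hδ : 0 < δ)
    (hδ0 : 2 * δ < ε0)
    (hΨ : ∀ c, bd (Ψ c) = Ψ (bd c)) (h0 : Ψ (of []) = of [])
    (hc : ∀ l, Ψ (of l) ∈ Sp (fun s => s.length = l.length ∧ Nb δ l s)) :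
    Ess A q (fun l => lift u (Ψ (of l))) := by
  rintro ε hε ⟨b, hb1, hb2⟩
  have hm : 0 < min ε (ε0 - 2 * δ) := lt_min hε (by linarith)
  obtain ⟨h1, h2⟩ := homotopy (ε := min ε (ε0 - 2 * δ)) hδ
    (by have := min_le_right ε (ε0 - 2 * δ); linarith) hu Ψ hΨ h0 hc
  refine hE _ hm ⟨fun s => b s + lift u (HH Ψ (of s)), ?_, ?_⟩
  · intro l hl hn
    simp [h1 l hl hn, hb1 l hl (hn.mono (min_le_left _ _))]
  · intro l hl hn
    have e1 := h2 l hl hn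
    have e2 := hb2 l hl (hn.mono (min_le_left _ _))
    have e3 : lift (fun s => b s + lift u (HH Ψ (of s))) (bdl l)
        = lift b (bdl l) + lift (fun s => lift u (HH Ψ (of s))) (bdl l) :=
      hom_ext (g := lift b + lift (fun s => lift u (HH Ψ (of s)))) (by intro l; simp) (bdl l)
    rw [e3, ← e1, ← e2]; simp

theorem exists_normalized {A : Set X} {ε0 : ℝ} (he : 0 < ε0) {q : ℕ} {u : List X → F}
    (hu : Coc A ε0 q u) (hE : Ess A q u) : ∃ u' : List X → F, Coc A ε0 q u' ∧ Ess A q u' ∧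
      ∀ l, ¬ l.Nodup → u' l = 0 := by
  classical
  let _ : LinearOrder X := IsWellOrder.linearOrder (WellOrderingRel)
  refine ⟨fun l => lift u (FF (of l)), ⟨?_, ?_⟩, ?_, ?_⟩
  · intro l hl ⟨a, ha, hn⟩
    have := eq_of_Sp (lift u) 0 ?_ (FF_car l)
    · simpa using this
    · rintro s ⟨h1, h2, -⟩
      simpa using hu.1 s (by omega) ⟨a, ha, fun x hx => hn x (h2 hx)⟩
  · intro l hl hs
    have e : lift (fun s => lift u (FF (of s))) (bdl l) = lift u (FF (bdl l)) :=
      hom_ext (g := (lift u).comp FF) (by intro l; simp) (bdl l)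
    rw [e, ← bd_of, ← bd_FF]
    have := eq_of_Sp ((lift u).comp bd) 0 ?_ (FF_car l)
    · simpa using this
    · rintro s ⟨h1, h2, -⟩
      simpa [bd_of] using hu.2 s (by omega) (fun x hx y hy => hs x (h2 hx) y (h2 hy))
  · refine hu.ess_comp he hE FF (δ := ε0 / 4) (by linarith) (by linarith) bd_FF FF_nil ?_
    intro l
    refine Sp_mono ?_ (FF_car l)
    rintro s ⟨h1, h2, -⟩
    exact ⟨h1, fun x hx => ⟨x, h2 hx, by simp; linarith⟩⟩
  · intro l hl
    simp [FF_dup l hl]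

theorem bd_map {V W : Type*} (f : V → W) (c : Ch V) :
    bd (FreeAbelianGroup.map (List.map f) c) = FreeAbelianGroup.map (List.map f) (bd c) := by
  have key : ∀ l : List V, bdl (l.map f) = FreeAbelianGroup.map (List.map f) (bdl l) := by
    intro l
    induction l with
    | nil => simp [bdl]
    | cons v t ih =>
      have : ∀ c, cn (f v) (FreeAbelianGroup.map (List.map f) c)
          = FreeAbelianGroup.map (List.map f) (cn v c) := fun c =>
        hom_ext (f := (cn (f v)).comp (FreeAbelianGroup.map (List.map f)))
          (g := (FreeAbelianGroup.map (List.map f)).comp (cn v))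
          (by intro l; simp [cn_of]) c
      simp [bdl, ih, this]
  exact hom_ext (f := bd.comp (FreeAbelianGroup.map (List.map f)))
    (g := (FreeAbelianGroup.map (List.map f)).comp bd)
    (by intro l; simp [bd_of, key]) c

/-- an essential class prevents low order covers -/
theorem no_cover [CompactSpace X] {A : Set X} {ε0 : ℝ} (he : 0 < ε0) {q : ℕ} {u : List X → F}
    (hu : Coc A ε0 q u) (hE : Ess A q u) (β : Set (Set X)) (hβ : ∀ V ∈ β, IsOpen V)
    (hcov : ⋃₀ β = Set.univ) (hsm : ∀ V ∈ β, ∀ x ∈ V, ∀ y ∈ V, dist x y < ε0 / 3)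
    (hord : ∀ s : Finset (Set X), (↑s : Set (Set X)) ⊆ β → ∀ x, (∀ V ∈ s, x ∈ V) → s.card ≤ q) :
    False := by
  classical
  let _ : LinearOrder (Set X) := IsWellOrder.linearOrder (WellOrderingRel)
  obtain ⟨η, hη, hL⟩ := lebesgue_number_lemma_of_metric_sUnion isCompact_univ hβ hcov.ge
  choose! θ hθ1 hθ2 using fun x => hL x trivial
  have hθx : ∀ x, x ∈ θ x := fun x => hθ2 x (Metric.mem_ball_self hη)
  let r : Set X → X := fun V => if h : V.Nonempty then h.choose else (Classical.choice
    (by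
      by_contra hne
      rw [not_nonempty_iff] at hne
      refine hE 1 one_pos ⟨fun _ => 0, fun _ _ _ => rfl, fun l hl _ => ?_⟩
      cases l with
      | nil => simp at hl
      | cons v t => exact (hne.false v).elim))
  have hr : ∀ x, r (θ x) ∈ θ x := by
    intro x
    have : (θ x).Nonempty := ⟨x, hθx x⟩
    simp only [r, dif_pos this]
    exact this.choose_spec
  let Ψ : Ch X →+ Ch X := ((FreeAbelianGroup.map (List.map r)).comp FF).comp
    (FreeAbelianGroup.map (List.map θ))
  have hΨ : ∀ c, bd (Ψ c) = Ψ (bd c) := by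
    intro c
    simp only [Ψ, AddMonoidHom.comp_apply, bd_map, bd_FF]
  have hc : ∀ l, Ψ (of l) ∈ Sp (fun s => s.length = l.length ∧ Nb (ε0 / 3) l s) := by
    intro l
    have := FF_car (l.map θ)
    refine map_mem_of_Sp _ (FreeAbelianGroup.map (List.map r)) ?_ (c := FF (FreeAbelianGroup.map (List.map θ) (of l))) (by simpa using this)
    rintro s ⟨h1, h2, -⟩
    rw [FreeAbelianGroup.map_of_apply]
    refine of_mem_Sp ⟨by simpa using h1, ?_⟩
    intro x hx
    obtain ⟨V, hV, rfl⟩ := List.mem_map.1 hx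
    obtain ⟨y, hy, rfl⟩ := List.mem_map.1 (h2 hV)
    exact ⟨y, hy, hsm _ (hθ1 y) _ (hr y) _ (hθx y)⟩
  obtain ⟨h1, h2⟩ := homotopy (ε := ε0 / 3) (δ := ε0 / 3) (by linarith) (by linarith) hu Ψ hΨ
    (by simp [Ψ, FF_nil]) hc
  refine hE (min (ε0 / 3) η) (lt_min (by linarith) hη) ⟨_, fun l hl hn => h1 l hl (hn.mono (min_le_left _ _)), ?_⟩
  intro l hl hs
  have := h2 l hl (hs.mono (min_le_left _ _))
  rw [← this]
  have e : Ψ (of l) = 0 := by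
    have : FF (of (l.map θ)) = 0 := by
      apply FF_card
      obtain ⟨x, hx⟩ : ∃ x, x ∈ l := by
        cases l with
        | nil => simp at hl
        | cons v t => exact ⟨v, by simp⟩
      have := hord (l.map θ).toFinset (by
        intro V hV
        simp only [Finset.mem_coe, List.mem_toFinset, List.mem_map] at hV
        obtain ⟨y, hy, rfl⟩ := hV
        exact hθ1 y) x (by
        intro V hV
        simp only [List.mem_toFinset, List.mem_map] at hV
        obtain ⟨y, hy, rfl⟩ := hV
        exact hθ2 y (Metric.mem_ball.2 ((hs x hx y hy).trans_le (min_le_right _ _))))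
      simp only [List.length_map, hl]
      refine Nat.lt_succ_of_le ?_
      convert this
    simp [Ψ, this]
  simp [e]

end metric
end MDP

namespace MDP
open FreeAbelianGroup

section cup
variable {Z F : Type*} [Field F]

/-- cup product of cochains on lists -/
def cup (p : ℕ) (u w : List Z → F) (z : List Z) : F := u (z.take (p + 1)) * w (z.drop p)

theorem lift_cn {F : Type*} [AddCommGroup F] (f : List Z → F) (v : Z) (c : Ch Z) :
    lift f (cn v c) = lift (fun s => f (v :: s)) c :=
  hom_ext (f := (lift f).comp (cn v)) (by intro l; simp [cn_of]) c

theorem lift_bdl_cons {F : Type*} [AddCommGroup F] (f : List Z → F) (v : Z) (t : List Z) :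
    lift f (bdl (v :: t)) = f t - lift (fun s => f (v :: s)) (bdl t) := by
  simp [bdl, lift_cn]

theorem lift_mul (a : F) (f : List Z → F) (c : Ch Z) :
    lift (fun s => a * f s) c = a * lift f c :=
  hom_ext (g := (AddMonoidHom.mulLeft a).comp (lift f)) (by intro l; simp) c

theorem cup_leibniz (w : List Z → F) (p : ℕ) : ∀ (u : List Z → F) (z : List Z), p + 2 ≤ z.length →
    lift (cup p u w) (bdl z) = lift u (bdl (z.take (p + 2))) * w (z.drop (p + 1))
      + (-1) ^ p * (u (z.take (p + 1)) * lift w (bdl (z.drop p))) := by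
  induction p with
  | zero =>
    intro u z hz
    match z, hz with
    | v :: v' :: t, _ =>
      have e : (fun s => cup 0 u w (v :: s)) = fun s => u [v] * w (v :: s) := by
        funext s; simp [cup]
      rw [lift_bdl_cons, e, lift_mul]
      simp only [cup, List.take, List.drop, lift_bdl_cons]
      simp [bdl]
      ring
  | succ p ih =>
    intro u z hz
    match z, hz with
    | v :: t, hz =>
      have e : (fun s => cup (p + 1) u w (v :: s)) = cup p (fun s => u (v :: s)) w := by
        funext s; simp [cup]
      rw [lift_bdl_cons, e, ih _ _ (by simpa using hz)]
      simp only [List.take_succ_cons, List.drop_succ_cons, lift_bdl_cons, cup]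
      ring
end cup

section shuffle
variable {X Y : Type*}

/-- shuffle product -/
noncomputable def EE : List X → List Y → Ch (X × Y)
  | [], [] => 0
  | [], [_] => of []
  | [], _ :: _ :: _ => 0
  | _ :: _, [] => 0
  | x :: s, y :: t => cn (x, y) (EE s (y :: t) + (-1 : ℤ) ^ s.length • EE (x :: s) t)
termination_by σ τ => σ.length + τ.length

theorem EE_nil_right (σ : List X) : EE σ ([] : List Y) = 0 := by
  cases σ <;> simp [EE]

theorem EE_car (σ : List X) (τ : List Y) : EE σ τ ∈
    Sp (fun z : List (X × Y) => z.length + 1 = σ.length + τ.length ∧ ∀ a ∈ z, a.1 ∈ σ ∧ a.2 ∈ τ) := by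
  induction σ, τ using EE.induct with
  | case1 => simp [EE, zero_mem]
  | case2 y => simp only [EE]; exact of_mem_Sp (by simp)
  | case3 => simp [EE, zero_mem]
  | case4 => simp [EE, zero_mem]
  | case5 x s y t h1 h2 =>
    rw [EE]
    refine map_mem_of_Sp (P := fun z : List (X × Y) => z.length + 1 = s.length + t.length + 1 ∧
      ∀ a ∈ z, a.1 ∈ (x :: s) ∧ a.2 ∈ (y :: t)) _ (cn (x, y)) ?_ ?_
    · rintro z ⟨ha, hb⟩
      rw [cn_of]
      refine of_mem_Sp ⟨by simp; omega, ?_⟩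
      intro a ha
      rcases List.mem_cons.1 ha with rfl | ha
      · simp
      · exact hb a ha
    · refine add_mem (Sp_mono ?_ h1) (AddSubgroup.zsmul_mem _ (Sp_mono ?_ h2) _)
      · rintro z ⟨ha, hb⟩
        simp at ha
        exact ⟨by omega, fun a ha => ⟨by simp [(hb a ha).1], (hb a ha).2⟩⟩
      · rintro z ⟨ha, hb⟩
        simp at ha
        exact ⟨by omega, fun a ha => ⟨(hb a ha).1, by simp [(hb a ha).2]⟩⟩

/-- bilinear shuffle -/
noncomputable def E1 (τ : List Y) : Ch X →+ Ch (X × Y) := lift (fun σ => EE σ τ)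
/-- bilinear shuffle -/
noncomputable def E2 (σ : List X) : Ch Y →+ Ch (X × Y) := lift (fun τ => EE σ τ)

theorem bd_EE (σ : List X) (τ : List Y) :
    bd (EE σ τ) = E1 τ (bdl σ) + (-1 : ℤ) ^ (σ.length + 1) • E2 σ (bdl τ) := by
  induction σ, τ using EE.induct with
  | case1 => simp [EE, bdl]
  | case2 y => simp [EE, bdl, bd_of, E2]
  | case3 y y' t =>
    cases t with
    | nil => simp [EE, bdl, E2, cn_of]
    | cons y'' t =>
      have : ∀ c : Ch Y, lift (EE ([] : List X)) (cn y (cn y' c)) = 0 := fun c =>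
        hom_ext (f := ((lift (EE ([] : List X))).comp (cn y)).comp (cn y')) (g := 0)
          (by intro l; simp [cn_of, EE]) c
      simp [EE, bdl, E2, cn_of, this]
  | case4 x s =>
    have : ∀ c : Ch X, E1 ([] : List Y) c = 0 := fun c =>
      hom_ext (f := E1 ([] : List Y)) (g := 0) (by intro l; simp [E1, EE_nil_right]) c
    simp [EE, this, bdl]
  | case5 x s y t h1 h2 =>
    have k1 : E1 (y :: t) (cn x (bdl s)) =
        cn (x, y) (E1 (y :: t) (bdl s) - (-1 : ℤ) ^ s.length • E1 t (cn x (bdl s))) := by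
      refine eq_of_Sp ((E1 (y :: t)).comp (cn x)) ((cn (x, y)).comp (E1 (y :: t) -
        (-1 : ℤ) ^ s.length • ((E1 t).comp (cn x)))) ?_ (bdl_mem s)
      rintro s' ⟨h, -⟩
      simp only [AddMonoidHom.comp_apply, cn_of, E1, lift_apply_of, AddMonoidHom.sub_apply,
        AddMonoidHom.smul_apply]
      rw [EE, ← h, pow_succ]
      simp
    have k2 : E2 (x :: s) (cn y (bdl t)) =
        cn (x, y) (E2 s (cn y (bdl t)) + (-1 : ℤ) ^ s.length • E2 (x :: s) (bdl t)) := by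
      refine hom_ext (f := (E2 (x :: s)).comp (cn y)) (g := (cn (x, y)).comp ((E2 s).comp (cn y) +
        (-1 : ℤ) ^ s.length • (E2 (x :: s)))) ?_ (bdl t)
      intro t'
      simp only [AddMonoidHom.comp_apply, cn_of, E2, lift_apply_of, AddMonoidHom.add_apply,
        AddMonoidHom.smul_apply]
      rw [EE]
    have k3 : E1 (y :: t) (of s) = EE s (y :: t) := by simp [E1]
    have k4 : E2 (x :: s) (of t) = EE (x :: s) t := by simp [E2]
    have k5 : E2 s (of t) = EE s t := by simp [E2]
    have k6 : E1 t (of s) = EE s t := by simp [E1]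
    have hs : ((-1 : ℤ) ^ s.length) = 1 ∨ ((-1 : ℤ) ^ s.length) = -1 := neg_one_pow_eq_or ℤ _
    rw [EE, bd_cn, map_add, map_zsmul, h1, h2]
    simp only [bdl, map_sub, k1, k2, k3, k4, k5, k6, List.length_cons, pow_succ]
    rcases hs with h | h <;> rw [h] <;> simp <;> abel

theorem EE_single (x : X) (τ : List Y) (hτ : τ ≠ []) : EE [x] τ = of (τ.map (fun y => (x, y))) := by
  induction τ with
  | nil => simp at hτ
  | cons y t ih =>
    rw [EE]
    cases t with
    | nil => simp [EE, cn_of]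
    | cons y' t => 
      rw [ih (by simp)]; simp [EE, cn_of]

theorem cup_EE {F : Type*} [Field F] (w : List Y → F) (p : ℕ) :
    ∀ (u : List X → F) (σ : List X) (τ : List Y),
    (∀ l, ¬ l.Nodup → u l = 0) → σ.length = p + 1 → τ ≠ [] →
    lift (cup p (fun z => u (z.map Prod.fst)) (fun z => w (z.map Prod.snd))) (EE σ τ)
      = u σ * w τ := by
  induction p with
  | zero =>
    intro u σ τ hu hσ hτ
    obtain ⟨x, rfl⟩ := List.length_eq_one_iff.1 hσ
    rw [EE_single x τ hτ]
    obtain ⟨y, t, rfl⟩ := List.exists_cons_of_ne_nil hτ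
    simp [cup, Function.comp_def]
  | succ p ih =>
    intro u σ τ hu hσ hτ
    obtain ⟨y, t, rfl⟩ := List.exists_cons_of_ne_nil hτ
    match σ, hσ with
    | x :: s, hσ =>
      rw [EE, lift_cn]
      have e : (fun z : List (X × Y) => cup (p + 1) (fun z => u (z.map Prod.fst))
          (fun z => w (z.map Prod.snd)) ((x, y) :: z)) =
          cup p (fun z => (fun l => u (x :: l)) (z.map Prod.fst)) (fun z => w (z.map Prod.snd)) := by
        funext z; simp [cup]
      rw [e, map_add, ih (fun l => u (x :: l)) s (y :: t) (by
        intro l hl; apply hu; rw [List.nodup_cons]; tauto) (by simpa using hσ) hτ, map_zsmul]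
      have e2 : lift (cup p (fun z => (fun l => u (x :: l)) (z.map Prod.fst))
          (fun z : List (X × Y) => w (z.map Prod.snd))) (EE (x :: s) t) = 0 := by
        cases t with
        | nil => simp [EE]
        | cons y' t =>
          rw [EE, lift_cn]
          have : (fun z : List (X × Y) => cup p (fun z => (fun l => u (x :: l)) (z.map Prod.fst))
            (fun z : List (X × Y) => w (z.map Prod.snd)) ((x, y') :: z)) = fun _ => 0 := by
            funext z
            simp only [cup, List.take_succ_cons, List.map_cons]
            rw [hu _ (by simp), zero_mul]
          rw [this]
          exact hom_ext (g := 0) (by intro l; simp) _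
      rw [e2]; simp
end shuffle

section prod
variable {X Y F : Type*} [MetricSpace X] [MetricSpace Y] [Field F]

theorem product_ess {A : Set X} {B : Set Y} {ε0 : ℝ} {p r : ℕ}
    {u : List X → F} {w : List Y → F}
    (hu : Coc A ε0 p u) (huE : Ess A p u) (hun : ∀ l, ¬ l.Nodup → u l = 0)
    (hw : Coc B ε0 r w) (hwE : Ess B r w) :
    ∃ v : List (X × Y) → F, Coc {z : X × Y | z.1 ∈ A ∨ z.2 ∈ B} ε0 (p + r) v ∧
      Ess {z : X × Y | z.1 ∈ A ∨ z.2 ∈ B} (p + r) v := by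
  refine ⟨cup p (fun z => u (z.map Prod.fst)) (fun z => w (z.map Prod.snd)), ⟨?_, ?_⟩, ?_⟩
  · rintro z hz ⟨⟨a, b⟩, hab | hab, hn⟩
    · rw [cup]
      have := hu.1 ((z.take (p + 1)).map Prod.fst) (by simp; omega) ⟨a, hab, by
        intro x hx
        obtain ⟨q, hq, rfl⟩ := List.mem_map.1 hx
        exact (le_max_left _ _).trans_lt (hn q (List.mem_of_mem_take hq))⟩
      rw [this, zero_mul]
    · rw [cup]
      have := hw.1 ((z.drop p).map Prod.snd) (by simp; omega) ⟨b, hab, by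
        intro x hx
        obtain ⟨q, hq, rfl⟩ := List.mem_map.1 hx
        exact (le_max_right _ _).trans_lt (hn q (List.mem_of_mem_drop hq))⟩
      rw [this, mul_zero]
  · intro z hz hs
    rw [cup_leibniz _ _ _ _ (by omega)]
    have f1 : ∀ (c : List (X × Y)), lift (fun z => u (z.map Prod.fst)) (bdl c)
        = lift u (bdl (c.map Prod.fst)) := by
      intro c
      have := bd_map (Prod.fst : X × Y → X) (of c)
      rw [FreeAbelianGroup.map_of_apply, bd_of, bd_of] at this
      rw [this]
      exact hom_ext (g := (lift u).comp (FreeAbelianGroup.map (List.map Prod.fst)))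
        (by intro l; simp) _
    have f2 : ∀ (c : List (X × Y)), lift (fun z => w (z.map Prod.snd)) (bdl c)
        = lift w (bdl (c.map Prod.snd)) := by
      intro c
      have := bd_map (Prod.snd : X × Y → Y) (of c)
      rw [FreeAbelianGroup.map_of_apply, bd_of, bd_of] at this
      rw [this]
      exact hom_ext (g := (lift w).comp (FreeAbelianGroup.map (List.map Prod.snd)))
        (by intro l; simp) _
    rw [f1, f2, hu.2 _ (by simp; omega), hw.2 _ (by simp; omega)]
    · simp
    · intro x hx y hy
      obtain ⟨q, hq, rfl⟩ := List.mem_map.1 hx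
      obtain ⟨q', hq', rfl⟩ := List.mem_map.1 hy
      exact (le_max_right _ _).trans_lt (hs q (List.mem_of_mem_drop hq) q' (List.mem_of_mem_drop hq'))
    · intro x hx y hy
      obtain ⟨q, hq, rfl⟩ := List.mem_map.1 hx
      obtain ⟨q', hq', rfl⟩ := List.mem_map.1 hy
      exact (le_max_left _ _).trans_lt (hs q (List.mem_of_mem_take hq) q' (List.mem_of_mem_take hq'))
  · rintro ε hε ⟨b, hb1, hb2⟩
    -- the submodule of coboundaries at scale ε
    let N : Submodule F (List X → F) :=
      { carrier := {f | Cob A ε p f}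
        zero_mem' := ⟨0, by simp, by
          intro l _ _
          exact (hom_ext (f := 0) (by intro l; simp) _)⟩
        add_mem' := by
          rintro f g ⟨b1, h1, h2⟩ ⟨b2, h3, h4⟩
          refine ⟨fun l => b1 l + b2 l, fun l hl hn => by simp [h1 l hl hn, h3 l hl hn], ?_⟩
          intro l hl hs
          have : lift (fun l => b1 l + b2 l) (bdl l) = lift b1 (bdl l) + lift b2 (bdl l) :=
            hom_ext (g := lift b1 + lift b2) (by intro l; simp) _
          rw [this, ← h2 l hl hs, ← h4 l hl hs]; rfl
        smul_mem' := by
          rintro a f ⟨b1, h1, h2⟩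
          refine ⟨fun l => a * b1 l, fun l hl hn => by simp [h1 l hl hn], ?_⟩
          intro l hl hs
          rw [lift_mul, ← h2 l hl hs]; rfl }
    have huN : u ∉ N := huE ε hε
    obtain ⟨φ, hφu, hφN⟩ : ∃ φ : (List X → F) →ₗ[F] F, φ u = 1 ∧ ∀ f ∈ N, φ f = 0 := by
      obtain ⟨g, hg1, hg2⟩ := Submodule.exists_le_ker_of_notMem huN
      refine ⟨(g u)⁻¹ • g, by simp [hg1], fun f hf => ?_⟩
      have : g f = 0 := hg2 hf
      simp [this]
    have hsmall : ∀ f : List X → F, (∀ l, l.length = p + 1 → Small ε l → f l = 0) → φ f = 0 := by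
      intro f hf
      refine hφN f ⟨0, by simp, ?_⟩
      intro l hl hs
      rw [hf l hl hs]
      exact (hom_ext (f := 0) (by intro l; simp) _)
    refine hwE ε hε ⟨fun τ => (-1) ^ p * φ (fun σ => lift b (EE σ τ)), ?_, ?_⟩
    · rintro τ hτ ⟨b0, hb0, hn⟩
      beta_reduce
      rw [hsmall, mul_zero]
      intro σ hσ hs
      have := eq_of_Sp (lift b) 0 ?_ (EE_car σ τ)
      · simpa using this
      · rintro z ⟨h1, h2⟩
        obtain ⟨x0, hx0⟩ : ∃ x, x ∈ σ := List.exists_mem_of_length_pos (by omega)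
        simp only [lift_apply_of, AddMonoidHom.zero_apply]
        refine hb1 z (by omega) ⟨(x0, b0), Or.inr hb0, fun a ha => ?_⟩
        exact max_lt (hs _ (h2 a ha).1 _ hx0) (hn _ (h2 a ha).2)
    · intro τ hτ hs
      obtain ⟨y0, hy0⟩ : ∃ x, x ∈ τ := List.exists_mem_of_length_pos (by omega)
      rw [lift_mul]
      have hlin : ∀ c : Ch Y, lift (fun τ => φ (fun σ => lift b (EE σ τ))) c
          = φ (fun σ => lift b (E2 σ c)) := by
        intro c
        refine hom_ext (g := AddMonoidHom.mk' (fun c => φ (fun σ => lift b (E2 σ c))) ?_) ?_ c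
        · intro c c'
          rw [← map_add]; congr 1; funext σ; simp
        · intro l; simp [E2]
      rw [hlin]
      have h2 : φ (fun σ => lift b (E1 τ (bdl σ))) = 0 := by
        refine hφN _ ⟨fun s => lift b (EE s τ), ?_, ?_⟩
        · rintro s hsl ⟨a, ha, hn⟩
          have := eq_of_Sp (lift b) 0 ?_ (EE_car s τ)
          · simpa using this
          · rintro z ⟨h1, h2⟩
            simp only [lift_apply_of, AddMonoidHom.zero_apply]
            refine hb1 z (by omega) ⟨(a, y0), Or.inl ha, fun q hq => ?_⟩
            exact max_lt (hn _ (h2 q hq).1) (hs _ (h2 q hq).2 _ hy0)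
        · intro l _ _
          exact hom_ext (f := (lift b).comp (E1 τ)) (by intro l; simp [E1]) _
      have h3 : φ (w τ • u - (fun σ => lift b (E1 τ (bdl σ))) -
          ((-1 : F) ^ p) • fun σ => lift b (E2 σ (bdl τ))) = 0 := by
        apply hsmall
        intro σ hσ hσs
        have e1 := cup_EE w p u σ τ hun hσ (by rintro rfl; simp at hτ)
        have e2 : lift (cup p (fun z => u (z.map Prod.fst)) (fun z => w (z.map Prod.snd))) (EE σ τ)
            = lift b (bd (EE σ τ)) := by
          refine eq_of_Sp _ ((lift b).comp bd) ?_ (EE_car σ τ)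
          rintro z ⟨h1, h2⟩
          simp only [lift_apply_of, AddMonoidHom.comp_apply, bd_of]
          refine hb2 z (by omega) ?_
          intro q hq q' hq'
          exact max_lt (hσs _ (h2 q hq).1 _ (h2 q' hq').1) (hs _ (h2 q hq).2 _ (h2 q' hq').2)
        rw [bd_EE, map_add, map_zsmul, hσ, e1] at e2
        simp only [Pi.sub_apply, Pi.smul_apply, smul_eq_mul]
        rw [mul_comm, e2, pow_add, pow_add]
        simp [zsmul_eq_mul]
      rw [map_sub, map_sub, map_smul, map_smul, hφu, h2] at h3
      simp only [smul_eq_mul, mul_one, sub_zero] at h3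
      exact sub_eq_zero.1 h3

end prod
end MDP

namespace MDP
open FreeAbelianGroup

section coeff
variable {X : Type*} [MetricSpace X]

theorem lift_hom {V F G : Type*} [AddCommGroup F] [AddCommGroup G] (g : F →+ G) (f : List V → F)
    (c : Ch V) : lift (fun s => g (f s)) c = g (lift f c) :=
  hom_ext (g := g.comp (lift f)) (by intro l; simp) c

theorem lift_add' {V F : Type*} [AddCommGroup F] (f g : List V → F)
    (c : Ch V) : lift (fun s => f s + g s) c = lift f c + lift g c :=
  hom_ext (g := lift f + lift g) (by intro l; simp) c

theorem lift_sub' {V F : Type*} [AddCommGroup F] (f g : List V → F)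
    (c : Ch V) : lift (fun s => f s - g s) c = lift f c - lift g c :=
  hom_ext (g := lift f - lift g) (by intro l; simp) c

theorem lift_bdl_congr {V F : Type*} [AddCommGroup F] (f g : List V → F) (l : List V)
    (h : ∀ s : List V, s.length + 1 = l.length → s.Sublist l → f s = g s) :
    lift f (bdl l) = lift g (bdl l) :=
  eq_of_Sp _ _ (fun s hs => by simpa using h s hs.1 hs.2) (bdl_mem l)

theorem lift_bdl_zero {V F : Type*} [AddCommGroup F] (f : List V → F) (l : List V)
    (h : ∀ s : List V, s.length + 1 = l.length → s.Sublist l → f s = 0) :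
    lift f (bdl l) = 0 :=
  eq_of_Sp _ 0 (fun s hs => by simpa using h s hs.1 hs.2) (bdl_mem l)

theorem lift_bdl_bdl {V F : Type*} [AddCommGroup F] (f : List V → F) (l : List V) :
    lift (fun s => lift f (bdl s)) (bdl l) = 0 := by
  have := hom_ext (f := lift (fun s => lift f (bdl s))) (g := (lift f).comp bd)
    (by intro l; simp [bd_of]) (bdl l)
  rw [this]; simp [bd_bdl]

theorem Small.sub {ε : ℝ} {l s : List X} (hl : Small ε l) (h : s.Sublist l) : Small ε s :=
  fun x hx y hy => hl x (h.subset hx) y (h.subset hy)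

theorem Near.sub {A : Set X} {ε : ℝ} {l s : List X} (hl : Near A ε l) (h : s.Sublist l) :
    Near A ε s := by
  obtain ⟨a, ha, H⟩ := hl
  exact ⟨a, ha, fun x hx => H x (h.subset hx)⟩

theorem Near.small {A : Set X} {ε : ℝ} {l : List X} (hl : Near A ε l) : Small (2 * ε) l := by
  obtain ⟨a, ha, H⟩ := hl
  intro x hx y hy
  have := dist_triangle_right x y a
  have := H x hx
  have := H y hy
  linarith

theorem exists_den {ι : Type*} (s : Finset ι) (f : ι → ℚ) : ∃ N : ℕ, 1 ≤ N ∧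
    ∀ i ∈ s, ((N * f i).num : ℚ) = N * f i := by
  classical
  refine ⟨∏ i ∈ s, (f i).den, Nat.one_le_iff_ne_zero.2 (Finset.prod_ne_zero_iff.2
    (fun i _ => (f i).den_nz)), fun i hi => ?_⟩
  have h : (((∏ i ∈ s, (f i).den : ℕ) : ℚ)) * f i
      = (((∏ j ∈ s.erase i, (f j).den : ℕ) : ℤ) * (f i).num : ℤ) := by
    rw [← Finset.prod_erase_mul _ _ hi]
    push_cast
    rw [mul_assoc]
    congr 1
    have := Rat.num_div_den (f i)
    have h0 : ((f i).den : ℚ) ≠ 0 := by exact_mod_cast (f i).den_nz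
    field_simp at this
    rw [this]; try ring
  rw [h, Rat.num_intCast]

theorem finite_lists {V : Type*} {S : Set V} (hS : S.Finite) (n : ℕ) :
    {l : List V | l.length = n ∧ ∀ x ∈ l, x ∈ S}.Finite := by
  have : Finite S := hS
  have h := List.finite_length_eq S n
  refine (h.image (List.map Subtype.val)).subset ?_
  rintro l ⟨h1, h2⟩
  refine ⟨l.attach.map (fun x => ⟨x.1, h2 _ x.2⟩), by simp [h1], by simp [Function.comp_def]⟩

theorem to_field [CompactSpace X] {A : Set X} {ε0 : ℝ} (he : 0 < ε0) {m : ℕ} {c : List X → ℤ}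
    (hc : Coc A ε0 (m + 1) c) (hE : Ess A (m + 1) c) :
    ∃ (F : Type) (_ : Field F) (q : ℕ) (ε : ℝ) (u : List X → F), m ≤ q ∧ 0 < ε ∧
      Coc A ε q u ∧ Ess A q u := by
  by_cases hN : ∀ N : ℕ, 1 ≤ N → Ess A (m + 1) (fun l => (N : ℤ) * c l)
  · refine ⟨ℚ, inferInstance, m + 1, ε0, fun l => (c l : ℚ), by omega, he, ⟨?_, ?_⟩, ?_⟩
    · intro l hl hn
      simp [hc.1 l hl hn]
    · intro l hl hs
      have := lift_hom (Int.castAddHom ℚ) c (bdl l)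
      rw [hc.2 l hl hs] at this
      simpa using this
    · rintro ε hε ⟨b, hb1, hb2⟩
      set δ := min ε ε0 / 3 with hδ
      have hδ0 : 0 < δ := by have := lt_min hε he; positivity
      have hδ1 : 3 * δ ≤ ε := by have := min_le_left ε ε0; linarith
      have hδ2 : 3 * δ ≤ ε0 := by have := min_le_right ε ε0; linarith
      obtain ⟨T, hT, hT1, hT2⟩ := Metric.finite_approx_of_totallyBounded
        (isCompact_univ (X := X)).totallyBounded δ hδ0 |>.imp (fun T hT => (⟨hT.2.1, hT.2.2, trivial⟩ : T.Finite ∧ _ ∧ True))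
      have : ∀ x : X, ∃ y ∈ T, dist x y < δ := by
        intro x
        have := hT1 (Set.mem_univ x)
        simpa using this
      choose ρ hρT hρ using this
      let Ψ : Ch X →+ Ch X := FreeAbelianGroup.map (List.map ρ)
      obtain ⟨k1, k2⟩ := homotopy (ε := δ) (δ := δ) hδ0 (by linarith) hc Ψ
        (fun c => bd_map ρ c) (by simp [Ψ]) (by
          intro l
          simp only [Ψ, FreeAbelianGroup.map_of_apply]
          refine of_mem_Sp ⟨by simp, ?_⟩
          intro x hx
          obtain ⟨y, hy, rfl⟩ := List.mem_map.1 hx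
          exact ⟨y, hy, by rw [dist_comm]; exact hρ y⟩)
      have hNb : ∀ l : List X, Nb δ l (l.map ρ) := by
        intro l x hx
        obtain ⟨y, hy, rfl⟩ := List.mem_map.1 hx
        exact ⟨y, hy, by rw [dist_comm]; exact hρ y⟩
      obtain ⟨N, hN1, hN2⟩ := exists_den (finite_lists hT (m + 1)).toFinset b
      refine hN N hN1 δ hδ0 ⟨fun l => (N * b (l.map ρ)).num + N * lift c (HH Ψ (of l)), ?_, ?_⟩
      · intro l hl hn
        simp [k1 l hl hn, hb1 (l.map ρ) (by simpa using hl) (hn.nb (by linarith) (hNb l))]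
      · intro l hl hs
        have e1 := k2 l hl hs
        have e2 := hb2 (l.map ρ) (by simpa using hl) (hs.nb (by linarith) (hNb l))
        beta_reduce at e2
        have e3 : lift c (Ψ (of l)) = c (l.map ρ) := by simp [Ψ]
        rw [e3] at e1
        rw [lift_add']
        have e4 : lift (fun s => (N : ℤ) * lift c (HH Ψ (of s))) (bdl l) =
          N * lift (fun s => lift c (HH Ψ (of s))) (bdl l) :=
          lift_hom (AddMonoidHom.mulLeft (N : ℤ)) _ _
        rw [e4, ← e1]
        have e5 : ((lift (fun s : List X => ((N : ℚ) * b (s.map ρ)).num) (bdl l) : ℤ) : ℚ)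
            = N * c (l.map ρ) := by
          have a0 := bd_map ρ (of l)
          rw [FreeAbelianGroup.map_of_apply, bd_of, bd_of] at a0
          rw [e2, a0]
          have a1 := lift_hom (Int.castAddHom ℚ) (fun s : List X => ((N : ℚ) * b (s.map ρ)).num) (bdl l)
          have a2 := lift_bdl_congr (fun s : List X => (Int.castAddHom ℚ) (((N : ℚ) * b (s.map ρ)).num))
            (fun s : List X => (N : ℚ) * b (s.map ρ)) l (by
              intro s hs1 _
              refine hN2 (s.map ρ) ?_
              simp only [Set.Finite.mem_toFinset, Set.mem_setOf_eq, List.length_map]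
              refine ⟨by omega, ?_⟩
              intro x hx
              obtain ⟨y, hy, rfl⟩ := List.mem_map.1 hx
              exact hρT y)
          rw [a2] at a1
          rw [lift_mul] at a1
          have a3 := hom_ext (f := lift (fun s : List X => b (s.map ρ)))
            (g := (lift b).comp (FreeAbelianGroup.map (List.map ρ))) (by intro l; simp) (bdl l)
          rw [a3] at a1
          simpa using a1.symm
        have e6 : lift (fun s : List X => ((N : ℚ) * b (s.map ρ)).num) (bdl l) = N * c (l.map ρ) := by
          exact_mod_cast e5
        rw [e6]; ring
  · push Not at hN
    classical
    let N := Nat.find hN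
    obtain ⟨hN1, hN2⟩ := Nat.find_spec hN
    have hmin : ∀ M < N, 1 ≤ M → Ess A (m + 1) (fun l => (M : ℤ) * c l) := by
      intro M hM h1
      have := Nat.find_min hN hM
      push Not at this
      exact this h1
    have hne : N ≠ 1 := by
      intro h
      change Nat.find hN = 1 at h
      rw [h] at hN2
      exact hN2 (by simpa using hE)
    have hp : (Nat.minFac N).Prime := Nat.minFac_prime hne
    set p := Nat.minFac N with hpdef
    obtain ⟨M, hM⟩ := Nat.minFac_dvd N
    rw [← hpdef] at hM
    have hN0 : 0 < N := hN1
    have hM0 : 1 ≤ M := by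
      rcases Nat.eq_zero_or_pos M with h | h
      · rw [h] at hM; omega
      · exact h
    have hMN : M < N := by have := hp.two_le; nlinarith
    have hMc := hmin M hMN hM0
    have hN3 : ¬ Ess A (m + 1) (fun l => (N : ℤ) * c l) := hN2
    unfold Ess at hN3
    push Not at hN3
    obtain ⟨ε, hε, b, hb1, hb2⟩ := hN3
    have : Fact p.Prime := ⟨hp⟩
    have hp0 : (p : ℤ) ≠ 0 := by exact_mod_cast hp.ne_zero
    refine ⟨ZMod p, inferInstance, m, ε, fun l => (b l : ZMod p), le_rfl, hε, ⟨?_, ?_⟩, ?_⟩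
    · intro l hl hn
      simp [hb1 l hl hn]
    · intro l hl hs
      have := lift_hom (Int.castAddHom (ZMod p)) b (bdl l)
      rw [← hb2 l hl hs, hM] at this
      simpa using this
    · rintro ε' hε' ⟨g, hg1, hg2⟩
      have hm := lt_min hε hε'
      let g' : List X → ℤ := fun l => ((g l).val : ℤ)
      refine hMc (min ε ε') hm ⟨fun l => (b l - lift g' (bdl l)) / p, ?_, ?_⟩
      · intro l hl hn
        have : lift g' (bdl l) = 0 := by
          apply lift_bdl_zero
          intro s hs1 hs2
          simp [g', hg1 s (by omega) ((hn.sub hs2).mono (min_le_right _ _))]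
        simp [this, hb1 l hl (hn.mono (min_le_left _ _))]
      · intro l hl hs
        have k1 := hb2 l hl (hs.mono (min_le_left _ _))
        beta_reduce at k1
        apply mul_left_cancel₀ hp0
        have k2 := lift_hom (AddMonoidHom.mulLeft (p : ℤ)) (fun l => (b l - lift g' (bdl l)) / p) (bdl l)
        simp only [AddMonoidHom.coe_mulLeft] at k2
        rw [← k2]
        have k3 := lift_bdl_congr (fun s => (p : ℤ) * ((b s - lift g' (bdl s)) / p))
          (fun s => b s - lift g' (bdl s)) l (by
            intro s hs1 hs2
            apply Int.mul_ediv_cancel'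
            rw [← ZMod.intCast_zmod_eq_zero_iff_dvd]
            have := hg2 s (by omega) ((hs.sub hs2).mono (min_le_right _ _))
            beta_reduce at this
            push_cast
            rw [this]
            have h4 := lift_hom (Int.castAddHom (ZMod p)) g' (bdl s)
            have h5 : (fun s => (Int.castAddHom (ZMod p)) (g' s)) = g := by
              funext s; simp [g']
            rw [h5] at h4
            rw [h4]; simp)
        rw [k3, lift_sub', lift_bdl_bdl, ← k1, hM]
        push_cast; ring

end coeff

section power

theorem power_ess.{uu} {X : Type uu} [MetricSpace X] [CompactSpace X] {F : Type} [Field F] {A : Set X} {ε0 : ℝ}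
    (he : 0 < ε0) {q : ℕ} {u : List X → F} (hu : Coc A ε0 q u) (hE : Ess A q u) (k : ℕ) :
    ∃ (Y : Type uu) (_ : MetricSpace Y) (_ : CompactSpace Y) (π : Fin (k + 1) → Y → X)
      (B : Set Y) (w : List Y → F), (∀ i, Continuous (π i)) ∧
      (∀ y y' : Y, ∀ ε > 0, (∀ i, dist (π i y) (π i y') < ε) → dist y y' < ε) ∧
      Coc B ε0 ((k + 1) * q) w ∧ Ess B ((k + 1) * q) w := by
  induction k with
  | zero =>
    refine ⟨X, inferInstance, inferInstance, fun _ => id, A, u, fun _ => continuous_id,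
      fun y y' ε hε h => h 0, ?_, ?_⟩
    · simpa using hu
    · simpa using hE
  | succ k ih =>
    obtain ⟨Y, _, _, π, B, w, h1, h2, h3, h4⟩ := ih
    obtain ⟨u', hu', hE', hn'⟩ := exists_normalized he hu hE
    obtain ⟨v, hv1, hv2⟩ := product_ess hu' hE' hn' h3 h4
    have e : q + (k + 1) * q = (k + 1 + 1) * q := by ring
    rw [e] at hv1 hv2
    refine ⟨X × Y, inferInstance, inferInstance, Fin.cons Prod.fst (fun i z => π i z.2), _, v, ?_, ?_,
      hv1, hv2⟩
    · intro i
      refine Fin.cases ?_ (fun i => ?_) i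
      · simpa using continuous_fst
      · exact (h1 i).comp continuous_snd
    · intro y y' ε hε h
      refine max_lt ?_ (h2 _ _ ε hε ?_)
      · simpa using h 0
      · intro i; simpa using h i.succ
end power
end MDP

namespace MDP

theorem glue_closed {Z W ι : Type*} [TopologicalSpace Z] [TopologicalSpace W] [Finite ι] [Nonempty W]
    (S : ι → Set Z) (f : ι → Z → W) (hS : ∀ i, IsClosed (S i)) (hf : ∀ i, ContinuousOn (f i) (S i))
    (hag : ∀ i j, ∀ x ∈ S i, x ∈ S j → f i x = f j x) :
    ∃ g : Z → W, ContinuousOn g (⋃ i, S i) ∧ ∀ i, ∀ x ∈ S i, g x = f i x := by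
  classical
  let g : Z → W := fun x => if h : ∃ i, x ∈ S i then f h.choose x else Classical.arbitrary W
  have hg : ∀ i, ∀ x ∈ S i, g x = f i x := by
    intro i x hx
    have h : ∃ i, x ∈ S i := ⟨i, hx⟩
    simp only [g, dif_pos h]
    exact hag _ _ x h.choose_spec hx
  exact ⟨g, (locallyFinite_of_finite S).continuousOn_iUnion hS
    (fun i => (hf i).congr (fun x hx => hg i x hx)), hg⟩

/-- target space -/
abbrev TT (k : ℕ) := ℂ × (Fin k → ℝ)

/-- phase part -/
noncomputable def qq (k : ℕ) (s l : ℝ) (r : Fin k → ℝ) : ℂ :=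
  (((k + 2 : ℝ) ^ (k + 1) / 2 * ∏ i, r i : ℝ) : ℂ) *
    ((s : ℂ) * (Complex.exp ((2 * Real.pi * (l / s) : ℝ) * Complex.I) - 1))

/-- basic bubble -/
noncomputable def BB (k : ℕ) (s l : ℝ) (r : Fin k → ℝ) : TT k :=
  (1 + qq k s l r, fun i => ‖qq k s l r‖ * (2 * r i - s))

theorem BB_cont {Z : Type*} [TopologicalSpace Z] {k : ℕ} {s l : Z → ℝ} {r : Z → Fin k → ℝ}
    (hs : Continuous s) (hl : Continuous l) (hr : Continuous r) :
    Continuous (fun z => BB k (s z) (l z) (r z)) := by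
  have h1 : Continuous (fun z => (s z : ℂ) *
      (Complex.exp ((2 * Real.pi * (l z / s z) : ℝ) * Complex.I) - 1)) := by
    rw [continuous_iff_continuousAt]
    intro z
    by_cases h : s z = 0
    · have h0 : (s z : ℂ) * (Complex.exp ((2 * Real.pi * (l z / s z) : ℝ) * Complex.I) - 1) = 0 := by
        rw [h]; simp
      rw [ContinuousAt, h0]
      refine squeeze_zero_norm (a := fun z => |s z| * 2) ?_ ?_
      · intro z
        rw [norm_mul, Complex.norm_real, Real.norm_eq_abs]
        refine mul_le_mul_of_nonneg_left ?_ (abs_nonneg _)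
        refine (norm_sub_le _ _).trans ?_
        rw [Complex.norm_exp_ofReal_mul_I]; norm_num
      · have : Continuous (fun z => |s z| * 2) := by fun_prop
        have := this.tendsto z
        simpa [h] using this
    · have : ContinuousAt (fun z => l z / s z) z := hl.continuousAt.div hs.continuousAt h
      have h2 : ContinuousAt (fun z => (2 * Real.pi * (l z / s z) : ℝ)) z := this.const_mul _
      have h3 := (Complex.continuous_ofReal.continuousAt.comp h2)
      exact (Complex.continuous_ofReal.continuousAt.comp hs.continuousAt).mul
        (((Complex.continuous_exp.continuousAt).comp (h3.mul continuousAt_const)).sub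
          continuousAt_const)
  have h2 : Continuous (fun z => qq k (s z) (l z) (r z)) := by
    unfold qq
    refine Continuous.mul ?_ h1
    have : ∀ i, Continuous (fun z => r z i) := fun i => (continuous_apply i).comp hr
    fun_prop
  have : ∀ i, Continuous (fun z => r z i) := fun i => (continuous_apply i).comp hr
  unfold BB
  fun_prop

theorem BB_one {k : ℕ} {s l : ℝ} {r : Fin k → ℝ} (h : qq k s l r = 0) : BB k s l r = (1, 0) := by
  unfold BB
  rw [h]; ext <;> simp

theorem BB_r {k : ℕ} {s l : ℝ} {r : Fin k → ℝ} (i : Fin k) (h : r i = 0) : BB k s l r = (1, 0) := by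
  apply BB_one
  unfold qq
  rw [Finset.prod_eq_zero (Finset.mem_univ i) h]; simp

theorem BB_s {k : ℕ} {l : ℝ} {r : Fin k → ℝ} : BB k 0 l r = (1, 0) := by
  apply BB_one
  unfold qq; simp

theorem BB_int {k : ℕ} {s : ℝ} (n : ℤ) {r : Fin k → ℝ} : BB k s (n * s) r = (1, 0) := by
  by_cases hs : s = 0
  · rw [hs]; exact BB_s
  apply BB_one
  unfold qq
  have : ((2 * Real.pi * (n * s / s) : ℝ) : ℂ) * Complex.I = n * (2 * Real.pi * Complex.I) := by
    rw [mul_div_cancel_right₀ _ hs]; push_cast; ring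
  rw [this, Complex.exp_int_mul_two_pi_mul_I]; simp

theorem BB_shift {k : ℕ} {s l : ℝ} (n : ℤ) {r : Fin k → ℝ} : BB k s (l + n * s) r = BB k s l r := by
  by_cases hs : s = 0
  · rw [hs, BB_s, BB_s]
  have : qq k s (l + n * s) r = qq k s l r := by
    unfold qq
    have : ((2 * Real.pi * ((l + n * s) / s) : ℝ) : ℂ) * Complex.I =
        ((2 * Real.pi * (l / s) : ℝ) : ℂ) * Complex.I + n * (2 * Real.pi * Complex.I) := by
      rw [add_div, mul_div_cancel_right₀ _ hs]; push_cast; ring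
    rw [this, Complex.exp_add, Complex.exp_int_mul_two_pi_mul_I, mul_one]
  unfold BB; rw [this]

theorem BB_ne {k : ℕ} {s l : ℝ} {r : Fin k → ℝ} (hsum : s + ∑ i, r i = 1) : BB k s l r ≠ 0 := by
  intro h
  have h1 : 1 + qq k s l r = 0 := congrArg Prod.fst h
  have h2 : ∀ i, ‖qq k s l r‖ * (2 * r i - s) = 0 := fun i => congrFun (congrArg Prod.snd h) i
  have hq : ‖qq k s l r‖ ≠ 0 := by
    intro h0
    rw [norm_eq_zero] at h0
    rw [h0] at h1; simp at h1
  have hr : ∀ i, r i = s / 2 := by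
    intro i
    rcases mul_eq_zero.1 (h2 i) with h | h
    · exact (hq h).elim
    · linarith
  simp only [hr, Finset.sum_const, Finset.card_univ, Fintype.card_fin, nsmul_eq_mul] at hsum
  have hs : s = 2 / (k + 2) := by
    field_simp; linarith
  have hp : (k + 2 : ℝ) ^ (k + 1) / 2 * (∏ i, r i) * s = 1 := by
    simp only [hr, Finset.prod_const, Finset.card_univ, Fintype.card_fin, hs]
    have : (k + 2 : ℝ) ≠ 0 := by positivity
    rw [div_div, mul_comm (k + 2 : ℝ) 2, ← div_div, div_self two_ne_zero, one_div, inv_pow, pow_succ]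
    field_simp
  have : qq k s l r = Complex.exp ((2 * Real.pi * (l / s) : ℝ) * Complex.I) - 1 := by
    unfold qq
    rw [← mul_assoc, ← Complex.ofReal_mul, hp]; simp
  rw [this] at h1
  simp at h1

/-- bubble on the simplex with k+2 vertices -/
noncomputable def B (k : ℕ) (a : ℤ) (w : Fin (k + 2) → ℝ) : TT k :=
  BB k (w 0 + w 1) (a * w 0) (fun i => w i.succ.succ)

theorem B_cont {k : ℕ} (a : ℤ) : Continuous (B k a) :=
  BB_cont (by fun_prop) (by fun_prop) (by fun_prop)

theorem B_zero {k : ℕ} (w : Fin (k + 2) → ℝ) : B k 0 w = (1, 0) := by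
  have := @BB_int k (w 0 + w 1) 0 (fun i => w i.succ.succ)
  simpa [B] using this

theorem B_face {k : ℕ} (a : ℤ) (w : Fin (k + 2) → ℝ) (i : Fin (k + 2)) (h : w i = 0) :
    B k a w = (1, 0) := by
  unfold B
  revert h
  refine Fin.cases ?_ (fun i => Fin.cases ?_ (fun i => ?_) i) i
  · intro h
    rw [h]
    simpa using @BB_int k (0 + w 1) 0 (fun i => w i.succ.succ)
  · intro h
    have h : w 1 = 0 := h
    rw [h, add_zero]
    exact BB_int a
  · intro h
    exact BB_r i h

theorem B_ne {k : ℕ} (a : ℤ) (w : Fin (k + 2) → ℝ) (h : ∑ i, w i = 1) : B k a w ≠ 0 := by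
  refine BB_ne ?_
  rw [← h, Fin.sum_univ_succ, Fin.sum_univ_succ]
  simp [add_assoc]

/-- fillable tuples -/
def RR (k : ℕ) (c : ℕ → ℤ) : Prop := ∃ G : (Fin (k + 3) → ℝ) → TT k,
  ContinuousOn G (stdSimplex ℝ (Fin (k + 3))) ∧ ∀ t ∈ stdSimplex ℝ (Fin (k + 3)), G t ≠ 0 ∧
    ∀ j : Fin (k + 3), t j = 0 → G t = B k (c j) (j.removeNth t)

theorem RR_congr {k : ℕ} {c c' : ℕ → ℤ} (h : ∀ j < k + 3, c j = c' j) (hc : RR k c) : RR k c' := by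
  obtain ⟨G, h1, h2⟩ := hc
  refine ⟨G, h1, fun t ht => ⟨(h2 t ht).1, fun j hj => ?_⟩⟩
  rw [(h2 t ht).2 j hj, h j j.2]

theorem RR_deg {k : ℕ} (p : ℕ) (hp : p < k + 2) (a : ℤ) :
    RR k (fun j => if j = p ∨ j = p + 1 then a else 0) := by
  let P : Fin (k + 2) := ⟨p, hp⟩
  let M : (Fin (k + 3) → ℝ) → (Fin (k + 2) → ℝ) := fun t =>
    fun i => t (P.succ.succAbove i) + if i = P then t P.succ else 0
  have hM : Continuous M := by
    refine continuous_pi fun i => ?_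
    by_cases h : i = P
    · simp only [M, h, if_true]; fun_prop
    · simp only [M, h, if_false]; fun_prop
  have hsum : ∀ t, ∑ i, M t i = ∑ i, t i := by
    intro t
    simp only [M, Finset.sum_add_distrib]
    rw [Fin.sum_univ_succAbove t P.succ]; simp [add_comm]
  refine ⟨fun t => B k a (M t), ((B_cont a).comp hM).continuousOn, fun t ht =>
    ⟨B_ne _ _ (by rw [hsum]; exact ht.2), ?_⟩⟩
  intro j hj
  beta_reduce
  by_cases h1 : j = P.succ
  · subst h1
    have : ((P.succ : Fin (k + 3)) : ℕ) = p + 1 := by simp [P]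
    rw [if_pos (Or.inr this)]
    congr 1
    funext i
    simp [M, hj, Fin.removeNth]
  · by_cases h2 : j = P.castSucc
    · have : (j : ℕ) = p := by simp [h2, P]
      rw [if_pos (Or.inl this)]
      congr 1
      funext i
      subst h2
      simp only [M, Fin.removeNth]
      by_cases hi : i = P
      · subst hi
        simp [hj]
      · rcases lt_or_gt_of_ne hi with h | h
        · have e1 : P.succ.succAbove i = i.castSucc := Fin.succAbove_of_castSucc_lt _ _ (by
            rw [Fin.lt_def]; simp; rw [Fin.lt_def] at h; omega)
          have e2 : P.castSucc.succAbove i = i.castSucc := Fin.succAbove_of_castSucc_lt _ _ (by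
            rw [Fin.lt_def]; simpa using h)
          rw [e1, e2]; simp [hi]
        · have e1 : P.succ.succAbove i = i.succ := Fin.succAbove_of_le_castSucc _ _ (by
            rw [Fin.le_def]; rw [Fin.lt_def] at h; simp at h ⊢; omega)
          have e2 : P.castSucc.succAbove i = i.succ := Fin.succAbove_of_le_castSucc _ _ (by
            rw [Fin.le_def]; rw [Fin.lt_def] at h; simp at h ⊢; omega)
          rw [e1, e2]; simp [hi]
    · have n1 : (j : ℕ) ≠ p + 1 := fun h => h1 (Fin.ext (by simp [h, P]))
      have n2 : (j : ℕ) ≠ p := fun h => h2 (Fin.ext (by simp [h, P]))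
      rw [if_neg (by tauto), B_zero]
      obtain ⟨i, rfl⟩ := Fin.exists_succAbove_eq h1
      refine B_face _ _ i ?_
      have : i ≠ P := by
        rintro rfl
        apply h2
        simp
      simp [M, this, hj]

theorem RR_T0 {k : ℕ} (x y : ℤ) :
    RR k (fun j => if j = 0 then x else if j = 1 then x + y else if j = 2 then y else 0) := by
  refine ⟨fun t => BB k (t 0 + t 1 + t 2) ((x + y : ℤ) * t 0 + x * t 1)
    (fun i => t i.succ.succ.succ), (BB_cont (by fun_prop) (by fun_prop) (by fun_prop)).continuousOn,
    fun t ht => ⟨BB_ne ?_, ?_⟩⟩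
  · rw [← ht.2, Fin.sum_univ_succ, Fin.sum_univ_succ, Fin.sum_univ_succ]
    have e1 : (Fin.succ 0 : Fin (k + 3)) = 1 := rfl
    have e2 : (Fin.succ (Fin.succ 0) : Fin (k + 3)) = 2 := rfl
    rw [e2, e1]; ring
  · intro j
    refine Fin.cases ?_ (fun j => Fin.cases ?_ (fun j => Fin.cases ?_ (fun j => ?_) j) j) j
    · intro h
      simp only [B, h, Fin.removeNth]
      have e1 : (Fin.succAbove 0 0 : Fin (k + 3)) = 1 := rfl
      have e2 : (Fin.succAbove 0 1 : Fin (k + 3)) = 2 := rfl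
      simp [e1, e2]
    · intro h
      have h : t 1 = 0 := h
      simp only [B, Fin.removeNth]
      have e1 : (Fin.succAbove (Fin.succ 0) 0 : Fin (k + 3)) = 0 := rfl
      have e2 : (Fin.succAbove (Fin.succ 0) 1 : Fin (k + 3)) = 2 := rfl
      rw [e1, e2, h]
      simp
    · intro h
      have h : t 2 = 0 := h
      simp only [B, Fin.removeNth]
      have e1 : (Fin.succAbove (Fin.succ (Fin.succ 0)) 0 : Fin (k + 3)) = 0 := rfl
      have e2 : (Fin.succAbove (Fin.succ (Fin.succ 0)) 1 : Fin (k + 3)) = 1 := rfl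
      rw [e1, e2, h]
      have e3 : (((x + y : ℤ) : ℝ) * t 0 + x * t 1) = y * t 0 + x * (t 0 + t 1 + 0) := by
        push_cast; ring
      rw [e3, BB_shift]
      have e4 : ((Fin.succ (Fin.succ 0) : Fin (k + 3)) : ℕ) = 2 := rfl
      have e5 : ∀ i : Fin k, (Fin.succ (Fin.succ 0) : Fin (k + 3)).succAbove i.succ.succ
          = i.succ.succ.succ := fun i => by simp only [Fin.succ_succAbove_succ, Fin.succAbove_zero]
      simp only [e4, e5]
      norm_num
    · intro h
      beta_reduce
      rw [BB_r (r := fun i : Fin k => t i.succ.succ.succ) j h]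
      have : ∀ n : ℕ, n + 1 + 1 + 1 ≠ 1 := fun n => by omega
      have h2 : ∀ n : ℕ, n + 1 + 1 + 1 ≠ 2 := fun n => by omega
      simp [B_zero]

end MDP

namespace MDP

theorem removeNth_simplex {n : ℕ} {t : Fin (n + 1) → ℝ} (ht : t ∈ stdSimplex ℝ (Fin (n + 1)))
    (i : Fin (n + 1)) (h : t i = 0) : i.removeNth t ∈ stdSimplex ℝ (Fin n) := by
  refine ⟨fun j => ht.1 _, ?_⟩
  have := ht.2
  rw [Fin.sum_univ_succAbove t i, h, zero_add] at this
  exact this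

theorem RR_horn {k : ℕ} (a : ℕ → ℕ → ℤ) (hsym : ∀ i j, a i j = a j i) (p : ℕ) (hp : p < k + 4)
    (hR : ∀ i < k + 4, i ≠ p → RR k (fun j => a i (if j < i then j else j + 1))) :
    RR k (fun j => a p (if j < p then j else j + 1)) := by
  let P : Fin (k + 4) := ⟨p, hp⟩
  have hval : ∀ (i : Fin (k + 4)) (j : Fin (k + 3)),
      ((i.succAbove j : Fin (k + 4)) : ℕ) = if (j : ℕ) < i then (j : ℕ) else j + 1 := by
    intro i j
    rw [Fin.succAbove]
    simp only [Fin.lt_def, Fin.val_castSucc]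
    split_ifs <;> simp
  have hR' : ∀ j : Fin (k + 3), ∃ G : (Fin (k + 3) → ℝ) → TT k,
      ContinuousOn G (stdSimplex ℝ (Fin (k + 3))) ∧ ∀ t ∈ stdSimplex ℝ (Fin (k + 3)), G t ≠ 0 ∧
      ∀ l : Fin (k + 3), t l = 0 → G t =
        B k (a (P.succAbove j) ((P.succAbove j).succAbove l)) (l.removeNth t) := by
    intro j
    obtain ⟨G, h1, h2⟩ := hR (P.succAbove j) (Fin.is_lt _) (fun h =>
      Fin.succAbove_ne P j (Fin.ext h))
    refine ⟨G, h1, fun t ht => ⟨(h2 t ht).1, fun l hl => ?_⟩⟩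
    rw [(h2 t ht).2 l hl]
    beta_reduce
    rw [← hval]
  choose G hG1 hG2 using hR'
  let μ : (Fin (k + 3) → ℝ) → ℝ := fun x => Finset.univ.inf' Finset.univ_nonempty x
  have hμ : Continuous μ := by
    have := Continuous.finset_inf'_apply (ι := Fin (k + 3)) (s := Finset.univ)
      (f := fun i (x : Fin (k + 3) → ℝ) => x i) Finset.univ_nonempty (fun i _ => continuous_apply i)
    exact this
  have hμle : ∀ x j, μ x ≤ x j := fun x j => Finset.inf'_le _ (Finset.mem_univ j)
  have hμex : ∀ x, ∃ j, x j = μ x := fun x => by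
    obtain ⟨j, -, hj⟩ := Finset.exists_mem_eq_inf' (Finset.univ_nonempty (α := Fin (k + 3))) x
    exact ⟨j, hj.symm⟩
  let ret : (Fin (k + 3) → ℝ) → (Fin (k + 4) → ℝ) := fun x =>
    P.insertNth ((k + 3) * μ x) (fun j => x j - μ x)
  have hretP : ∀ x, ret x P = (k + 3) * μ x := fun x => by simp [ret]
  have hretj : ∀ x j, ret x (P.succAbove j) = x j - μ x := fun x j => by simp [ret]
  have hretc : Continuous ret := by
    refine continuous_pi fun i => ?_
    rcases Fin.eq_self_or_eq_succAbove P i with rfl | ⟨j, rfl⟩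
    · simp only [hretP]; fun_prop
    · simp only [hretj]; fun_prop
  have hret : ∀ x ∈ stdSimplex ℝ (Fin (k + 3)), ret x ∈ stdSimplex ℝ (Fin (k + 4)) := by
    intro x hx
    have h0 : 0 ≤ μ x := by
      obtain ⟨j, hj⟩ := hμex x
      rw [← hj]; exact hx.1 j
    refine ⟨fun i => ?_, ?_⟩
    · rcases Fin.eq_self_or_eq_succAbove P i with rfl | ⟨j, rfl⟩
      · rw [hretP]; positivity
      · rw [hretj]; linarith [hμle x j]
    · rw [Fin.sum_univ_succAbove _ P, hretP]
      simp only [hretj, Finset.sum_sub_distrib, hx.2]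
      simp
  have hcoh : ∀ t ∈ stdSimplex ℝ (Fin (k + 4)), ∀ j j' : Fin (k + 3), t (P.succAbove j) = 0 →
      t (P.succAbove j') = 0 → G j ((P.succAbove j).removeNth t) = G j' ((P.succAbove j').removeNth t) := by
    intro t ht j j' h1 h2
    by_cases hjj : j = j'
    · rw [hjj]
    have hne : P.succAbove j' ≠ P.succAbove j := fun h => hjj (Fin.succAbove_right_injective h).symm
    obtain ⟨l, hl⟩ := Fin.exists_succAbove_eq hne
    have e1 : (P.succAbove j).removeNth t l = 0 := by
      rw [Fin.removeNth, hl, h2]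
    have e2 : (P.succAbove j').succAbove (l.predAbove (P.succAbove j)) = P.succAbove j := by
      rw [← hl]; exact Fin.succAbove_succAbove_predAbove _ _
    have e3 : (P.succAbove j').removeNth t (l.predAbove (P.succAbove j)) = 0 := by
      rw [Fin.removeNth, e2, h1]
    rw [(hG2 j _ (removeNth_simplex ht _ h1)).2 l e1, (hG2 j' _ (removeNth_simplex ht _ h2)).2 _ e3,
      e2, hl, hsym, Fin.removeNth_removeNth_eq_swap, hl]
  obtain ⟨H, hH1, hH2⟩ := glue_closed (ι := Fin (k + 3))
    (fun j => stdSimplex ℝ (Fin (k + 3)) ∩ {x | x j = μ x})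
    (fun j x => G j ((P.succAbove j).removeNth (ret x)))
    (fun j => (isClosed_stdSimplex ℝ (Fin (k + 3))).inter (isClosed_eq (continuous_apply j) hμ))
    (fun j => by
      refine (hG1 j).comp (Continuous.continuousOn ?_) ?_
      · refine continuous_pi fun i => ?_
        exact (continuous_apply _).comp hretc
      · rintro x ⟨hx, hxj⟩
        refine removeNth_simplex (hret x hx) _ ?_
        rw [hretj]; simpa [sub_eq_zero] using hxj)
    (by
      rintro j j' x ⟨hx, h1⟩ ⟨-, h2⟩
      refine hcoh _ (hret x hx) j j' ?_ ?_
      · rw [hretj]; simpa [sub_eq_zero] using h1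
      · rw [hretj]; simpa [sub_eq_zero] using h2)
  have hun : (⋃ j, stdSimplex ℝ (Fin (k + 3)) ∩ {x | x j = μ x}) = stdSimplex ℝ (Fin (k + 3)) := by
    ext x
    simp only [Set.mem_iUnion, Set.mem_inter_iff]
    constructor
    · rintro ⟨j, h, -⟩; exact h
    · intro h
      obtain ⟨j, hj⟩ := hμex x
      exact ⟨j, h, hj⟩
  rw [hun] at hH1
  refine ⟨H, hH1, fun x hx => ⟨?_, ?_⟩⟩
  · obtain ⟨j, hj⟩ := hμex x
    rw [hH2 j x ⟨hx, hj⟩]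
    refine (hG2 j _ (removeNth_simplex (hret x hx) _ ?_)).1
    rw [hretj]; linarith
  · intro j hj
    have h0 : μ x = 0 := by
      obtain ⟨j', hj'⟩ := hμex x
      exact le_antisymm (hj ▸ hμle x j) (hj' ▸ hx.1 j')
    have hz : ret x (P.succAbove j) = 0 := by rw [hretj, hj, h0, sub_zero]
    have hzP : ret x P = 0 := by rw [hretP, h0, mul_zero]
    obtain ⟨l, hl⟩ := Fin.exists_succAbove_eq (Fin.succAbove_ne P j).symm
    have hl' : l = j.predAbove P := by
      apply Fin.succAbove_right_injective (p := P.succAbove j)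
      rw [hl, Fin.succAbove_succAbove_predAbove]
    rw [hH2 j x ⟨hx, by rw [Set.mem_ofPred_eq, hj, h0]⟩,
      (hG2 j _ (removeNth_simplex (hret x hx) _ hz)).2 l (by rw [Fin.removeNth, hl, hzP]), hl, hsym]
    have e1 : (if (j : ℕ) < p then (j : ℕ) else j + 1) = (P.succAbove j : ℕ) := (hval P j).symm
    beta_reduce
    rw [e1, hl', ← Fin.removeNth_removeNth_eq_swap]
    have e2 : P.removeNth (ret x) = x := by
      funext i
      rw [Fin.removeNth, hretj, h0, sub_zero]
    rw [e2]

/-- triple tuples -/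
def TR (k p : ℕ) : Prop := ∀ x y : ℤ, RR k (fun j => if j = p then x else if j = p + 1 then x + y else
  if j = p + 2 then y else 0)

theorem RR_deg' {k : ℕ} (p : ℕ) (hp : p < k + 2) (a : ℤ) {c : ℕ → ℤ} (h1 : c p = a) (h2 : c (p + 1) = a)
    (h : ∀ j, j ≠ p → j ≠ p + 1 → c j = 0) : RR k c := by
  refine RR_congr ?_ (RR_deg p hp a)
  intro j _
  beta_reduce
  by_cases e1 : j = p
  · rw [if_pos (Or.inl e1), e1, h1]
  by_cases e2 : j = p + 1
  · rw [if_pos (Or.inr e2), e2, h2]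
  rw [if_neg (by tauto), h j e1 e2]

theorem TR.use {k p : ℕ} (h : TR k p) {c : ℕ → ℤ} (h1 : c (p + 1) = c p + c (p + 2))
    (h0 : ∀ j, j ≠ p → j ≠ p + 1 → j ≠ p + 2 → c j = 0) : RR k c := by
  refine RR_congr ?_ (h (c p) (c (p + 2)))
  intro j _
  beta_reduce
  by_cases e1 : j = p
  · rw [if_pos e1, e1]
  by_cases e2 : j = p + 1
  · rw [if_neg e1, if_pos e2, e2, h1]
  by_cases e3 : j = p + 2
  · rw [if_neg e1, if_neg e2, if_pos e3, e3]
  rw [if_neg e1, if_neg e2, if_neg e3, h0 j e1 e2 e3]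

/-- matrix from upper data, symmetrized -/
def symz (f : ℕ → ℕ → ℤ) (i j : ℕ) : ℤ := if i < j then f i j else f j i

theorem symz_symm (f : ℕ → ℕ → ℤ) (i j : ℕ) : symz f i j = symz f j i := by
  unfold symz
  rcases lt_trichotomy i j with h | h | h
  · rw [if_pos h, if_neg (by omega)]
  · rw [h]
  · rw [if_neg (by omega), if_pos h]

theorem move1 {k p : ℕ} (hp : p ≤ k) (hT : TR k p) (c : ℕ → ℤ) (x : ℤ) (hc : RR k c) :
    RR k (fun j => if j = p ∨ j = p + 1 then c j + x else c j) := by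
  let cS : ℕ → ℤ := fun i => if i < p + 3 then c i else c (i - 1)
  -- entries of row Q = p+2, row S = p+3, rows p, p+1
  let a : ℕ → ℕ → ℤ := fun i j =>
    if i = p + 3 then cS j else if j = p + 3 then cS i else
    if i = p + 2 then (if j = p ∨ j = p + 1 then cS j + x else cS j) else
    if j = p + 2 then (if i = p ∨ i = p + 1 then cS i + x else cS i) else
    if (i = p ∧ j = p + 1) ∨ (i = p + 1 ∧ j = p) then x else 0
  have hsym : ∀ i j, (if i = j then 0 else a i j) = (if j = i then 0 else a j i) := by
    intro i j
    simp only [a]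
    grind
  have key := RR_horn (k := k) (fun i j => if i = j then 0 else a i j) hsym (p + 2) (by omega) ?_
  · refine RR_congr ?_ key
    intro j _
    simp only [a, cS]
    grind
  · intro i hi hip
    by_cases h3 : i = p + 3
    · refine RR_congr ?_ hc
      intro j _
      simp only [a, cS]
      grind
    by_cases h0 : i = p
    · apply hT.use
      · simp only [a, cS]; grind
      · intro j; simp only [a, cS]; grind
    by_cases h1 : i = p + 1
    · apply hT.use
      · simp only [a, cS]; grind
      · intro j; simp only [a, cS]; grind
    by_cases hlt : i < p
    · apply RR_deg' (p + 1) (by omega) (cS i)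
      · simp only [a, cS]; grind
      · simp only [a, cS]; grind
      · intro j; simp only [a, cS]; grind
    · apply RR_deg' (p + 2) (by omega) (cS i)
      · simp only [a, cS]; grind
      · simp only [a, cS]; grind
      · intro j; simp only [a, cS]; grind

theorem move2 {k p : ℕ} (hp : p ≤ k) (hT : TR k p) (c : ℕ → ℤ) (x : ℤ) (hc : RR k c) :
    RR k (fun j => if j = p then c j - x else if j = p + 2 then c j + x else c j) := by
  let cS : ℕ → ℤ := fun i => if i < p + 2 then c i else c (i - 1)
  let cQ : ℕ → ℤ := fun i => if i = p then cS i - x else if i = p + 3 then cS i + x else cS i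
  let a : ℕ → ℕ → ℤ := fun i j =>
    if i = p + 2 then cS j else if j = p + 2 then cS i else
    if i = p + 1 then cQ j else if j = p + 1 then cQ i else
    if (i = p ∧ j = p + 3) ∨ (i = p + 3 ∧ j = p) then x else 0
  have hsym : ∀ i j, (if i = j then 0 else a i j) = (if j = i then 0 else a j i) := by
    intro i j
    simp only [a, cQ, cS]
    grind
  have key := RR_horn (k := k) (fun i j => if i = j then 0 else a i j) hsym (p + 1) (by omega) ?_
  · refine RR_congr ?_ key
    intro j _
    simp only [a, cQ, cS]
    grind
  · intro i hi hip
    by_cases h3 : i = p + 2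
    · refine RR_congr ?_ hc
      intro j _
      simp only [a, cS]
      grind
    by_cases h0 : i = p
    · apply hT.use
      · simp only [a, cQ, cS]; grind
      · intro j; simp only [a, cQ, cS]; grind
    by_cases h1 : i = p + 3
    · apply hT.use
      · simp only [a, cQ, cS]; grind
      · intro j; simp only [a, cQ, cS]; grind
    by_cases hlt : i < p
    · apply RR_deg' p (by omega) (cS i)
      · simp only [a, cQ, cS]; grind
      · simp only [a, cQ, cS]; grind
      · intro j; simp only [a, cQ, cS]; grind
    · apply RR_deg' (p + 1) (by omega) (cS i)
      · simp only [a, cQ, cS]; grind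
      · simp only [a, cQ, cS]; grind
      · intro j; simp only [a, cQ, cS]; grind

theorem move3 {k p : ℕ} (hp : p ≤ k) (hT : TR k p) (c : ℕ → ℤ) (x : ℤ) (hc : RR k c) :
    RR k (fun j => if j = p + 1 ∨ j = p + 2 then c j + x else c j) := by
  refine RR_congr ?_ (move2 hp hT _ x (move1 hp hT c x hc))
  intro j _
  grind

theorem TR_all {k : ℕ} (p : ℕ) (hp : p ≤ k) : TR k p := by
  induction p with
  | zero => intro x y; exact RR_T0 x y
  | succ p ih =>
    intro x y
    refine RR_congr ?_ (move3 (by omega) (ih (by omega)) _ x (RR_deg (p + 2) (by omega) y))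
    intro j _
    grind

theorem RR_add {k p : ℕ} (hp : p ≤ k + 1) (c : ℕ → ℤ) (x : ℤ) (hc : RR k c) :
    RR k (fun j => if j = p ∨ j = p + 1 then c j + x else c j) := by
  rcases Nat.lt_or_ge k p with h | h
  · obtain rfl : p = k + 1 := by omega
    exact move3 le_rfl (TR_all k le_rfl) c x hc
  · exact move1 h (TR_all p h) c x hc

theorem RR_all {k : ℕ} (c : ℕ → ℤ) (h : ∑ j ∈ Finset.range (k + 3), (-1) ^ j * c j = 0) : RR k c := by
  have key : ∀ q, q ≤ k + 2 → ∀ c : ℕ → ℤ, (∀ j, q < j → c j = 0) →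
      ∑ j ∈ Finset.range (q + 1), (-1) ^ j * c j = 0 → RR k c := by
    intro q
    induction q with
    | zero =>
      intro _ c h1 h2
      simp at h2
      refine RR_deg' 0 (by omega) 0 h2 (h1 _ (by omega)) ?_
      intro j hj _
      exact h1 j (by omega)
    | succ q ih =>
      intro hq c h1 h2
      have := ih (by omega) (fun j => if j = q then c q - c (q + 1) else if j ≤ q then c j else 0)
        (by intro j hj; grind) (by
          rw [Finset.sum_range_succ, Finset.sum_range_succ] at h2
          rw [Finset.sum_range_succ]
          have e : ∑ j ∈ Finset.range q, (-1 : ℤ) ^ j * (if j = q then c q - c (q + 1) else if j ≤ q then c j else 0)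
              = ∑ j ∈ Finset.range q, (-1 : ℤ) ^ j * c j := by
            refine Finset.sum_congr rfl fun j hj => ?_
            have := Finset.mem_range.1 hj
            rw [if_neg (by omega), if_pos (by omega)]
          rw [e, if_pos rfl, ← h2, pow_succ]; ring)
      refine RR_congr ?_ (RR_add (p := q) (by omega) _ (c (q + 1)) this)
      intro j _
      have := h1 j
      grind
  refine RR_congr ?_ (key (k + 2) le_rfl (fun j => if j < k + 3 then c j else 0) ?_ ?_)
  · intro j hj; simp [hj]
  · intro j hj; rw [if_neg (by omega)]
  · rw [← h]
    refine Finset.sum_congr rfl fun j hj => ?_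
    rw [if_pos (Finset.mem_range.1 hj)]

end MDP

namespace MDP

/-- linear map with kernel the constants -/
noncomputable def Yv (k : ℕ) (t : Fin (k + 3) → ℝ) : TT k :=
  (⟨(k + 2) * t 0 - ∑ i : Fin (k + 2), t i.succ, t 2 - t 1⟩, fun i => 2 * t i.succ.succ.succ - t 1 - t 2)

/-- the model map -/
noncomputable def Vv (k : ℕ) (t : Fin (k + 3) → ℝ) : TT k := B k 1 (fun i => t i.succ)

theorem Yv_cont {k : ℕ} : Continuous (Yv k) := by
  unfold Yv
  refine Continuous.prodMk ?_ (by fun_prop)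
  have h : Continuous fun t : Fin (k + 3) → ℝ =>
      (((k + 2) * t 0 - ∑ i : Fin (k + 2), t i.succ : ℝ) : ℂ) + ((t 2 - t 1 : ℝ) : ℂ) * Complex.I := by
    fun_prop
  convert h using 2 with t
  exact Complex.mk_eq_add_mul_I _ _

theorem Vv_cont {k : ℕ} : Continuous (Vv k) := (B_cont 1).comp (by fun_prop)

theorem Yv_tail {k : ℕ} {t : Fin (k + 3) → ℝ} (h1 : t 2 = t 1)
    (h2 : ∀ i : Fin k, 2 * t i.succ.succ.succ = t 1 + t 2) (i : Fin (k + 2)) : t i.succ = t 1 := by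
  induction i using Fin.cases with
  | zero => rfl
  | succ i =>
    induction i using Fin.cases with
    | zero => exact h1
    | succ i => have := h2 i; linarith

theorem Yv_zero {k : ℕ} {t : Fin (k + 3) → ℝ} (h : Yv k t = 0) (i : Fin (k + 3)) : t i = t 0 := by
  have h1 := congrArg (fun p : TT k => p.1.re) h
  have h2 := congrArg (fun p : TT k => p.1.im) h
  have h3 := fun i => congrFun (congrArg (fun p : TT k => p.2) h) i
  simp only [Yv, Prod.fst_zero, Prod.snd_zero, Complex.zero_re, Complex.zero_im, Pi.zero_apply] at h1 h2 h3
  have ht := Yv_tail (t := t) (by linarith) (fun i => by linarith [h3 i])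
  simp only [ht, Finset.sum_const, Finset.card_univ, Fintype.card_fin, nsmul_eq_mul] at h1
  have h4 : t 0 = t 1 := by
    have : ((k : ℝ) + 2) * (t 0 - t 1) = 0 := by push_cast at h1; linarith
    rcases mul_eq_zero.1 this with h | h
    · have : (0 : ℝ) ≤ k := Nat.cast_nonneg k
      linarith
    · linarith
  induction i using Fin.cases with
  | zero => rfl
  | succ i => rw [ht, h4]

theorem Vv_face {k : ℕ} {t : Fin (k + 3) → ℝ} (i : Fin (k + 2)) (h : t i.succ = 0) : Vv k t = (1, 0) :=
  B_face 1 _ i h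

theorem Vv_ne {k : ℕ} {t : Fin (k + 3) → ℝ} (ht : t ∈ stdSimplex ℝ (Fin (k + 3))) (h : ∃ j, t j = 0) :
    Vv k t ≠ 0 := by
  obtain ⟨j, hj⟩ := h
  induction j using Fin.cases with
  | zero =>
    refine B_ne _ _ ?_
    have := ht.2
    rwa [Fin.sum_univ_succ, hj, zero_add] at this
  | succ i =>
    rw [Vv_face i hj]
    intro h
    have := congrArg Prod.fst h
    simp at this

theorem mix_ne {k : ℕ} {t : Fin (k + 3) → ℝ} (ht : t ∈ stdSimplex ℝ (Fin (k + 3))) (h : ∃ j, t j = 0)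
    {s : ℝ} (h0 : 0 ≤ s) (h1 : s ≤ 1) : (1 - s) • Yv k t + s • Vv k t ≠ 0 := by
  rcases eq_or_lt_of_le h1 with rfl | h1
  · simpa using Vv_ne ht h
  intro he
  have e1 := congrArg (fun p : TT k => p.1.re) he
  have e2 := congrArg (fun p : TT k => p.1.im) he
  have e3 := fun i => congrFun (congrArg (fun p : TT k => p.2) he) i
  by_cases hf : ∃ i : Fin (k + 2), t i.succ = 0
  · obtain ⟨i, hi⟩ := hf
    rw [Vv_face i hi] at e1 e2 e3
    simp [Yv] at e1 e2 e3
    have h4 : t 2 = t 1 := by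
      rcases e2 with h | h <;> linarith
    have ht' := Yv_tail (t := t) h4 (fun i => by rcases e3 i with h | h <;> linarith)
    have h5 : ∀ i : Fin (k + 2), t i.succ = 0 := fun j => by rw [ht', ← ht' i, hi]
    have h6 := ht.2
    rw [Fin.sum_univ_succ] at h6
    simp only [h5, Finset.sum_const_zero, add_zero] at h6
    simp only [h5, h6, Finset.sum_const_zero, mul_one, sub_zero] at e1
    have : 0 < (1 - s) * ((k : ℝ) + 2) := by
      have : (0 : ℝ) ≤ k := Nat.cast_nonneg k
      have : 0 < 1 - s := by linarith
      positivity
    linarith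
  · push Not at hf
    have hpos : ∀ i : Fin (k + 2), 0 < t i.succ := fun i => lt_of_le_of_ne (ht.1 _) (Ne.symm (hf i))
    have hz : t 0 = 0 := by
      obtain ⟨j, hj⟩ := h
      induction j using Fin.cases with
      | zero => exact hj
      | succ i => exact absurd hj (hf i)
    have hs1 : ∑ i : Fin (k + 2), t i.succ = 1 := by
      have := ht.2
      rwa [Fin.sum_univ_succ, hz, zero_add] at this
    have p1 : 0 < t 1 := hpos 0
    have p2 : 0 < t 2 := hpos 1
    set C : ℝ := (k + 2 : ℝ) ^ (k + 1) / 2 * ∏ i : Fin k, t i.succ.succ.succ with hC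
    have hCpos : 0 < C := by
      have : 0 < ∏ i : Fin k, t i.succ.succ.succ := Finset.prod_pos fun i _ => hpos _
      positivity
    set θ : ℝ := 2 * Real.pi * (t 1 / (t 1 + t 2)) with hθ
    have hV : Vv k t = (1 + ((C * (t 1 + t 2) * (Real.cos θ - 1) : ℝ) + (C * (t 1 + t 2) * Real.sin θ : ℝ) * Complex.I),
        fun i => ‖qq k (t 1 + t 2) (1 * t 1) (fun i => t i.succ.succ.succ)‖ * (2 * t i.succ.succ.succ - (t 1 + t 2))) := by
      unfold Vv B BB
      refine Prod.ext ?_ ?_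
      · simp only
        congr 1
        unfold qq
        have : (1 * t 1 / (t 1 + t 2)) = t 1 / (t 1 + t 2) := by rw [one_mul]
        have e : ((2 * Real.pi * (((1 : ℤ) : ℝ) * t (Fin.succ 0) / (t (Fin.succ 0) + t (Fin.succ 1))) : ℝ)) = θ := by
          rw [hθ]; simp
        rw [e, Complex.exp_mul_I, ← Complex.ofReal_cos, ← Complex.ofReal_sin, ← hC]
        simp only [Fin.succ_zero_eq_one, Fin.succ_one_eq_two]
        push_cast
        ring
      · funext i
        simp
    rw [hV] at e1 e2 e3
    set N := ‖qq k (t 1 + t 2) (1 * t 1) (fun i => t i.succ.succ.succ)‖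
    have hN : 0 ≤ N := norm_nonneg _
    simp [Yv, hz, hs1] at e1 e2 e3
    rw [← Complex.ofReal_cos, Complex.ofReal_re] at e1
    rw [← Complex.ofReal_sin, Complex.ofReal_re] at e2
    have hD : ∀ i : Fin k, 2 * t i.succ.succ.succ = t 1 + t 2 := by
      intro i
      have : ((1 - s) + s * N) * (2 * t i.succ.succ.succ - (t 1 + t 2)) = 0 := by
        have := e3 i; linarith
      rcases mul_eq_zero.1 this with h | h
      · nlinarith [mul_nonneg h0 hN]
      · linarith
    have hsp : 0 < t 1 + t 2 := by linarith
    have hθ0 : 0 < θ := by positivity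
    have h12 : t 2 = t 1 := by
      rcases lt_trichotomy (t 1) (t 2) with h | h | h
      · have : θ < Real.pi := by
          rw [hθ]
          have : t 1 / (t 1 + t 2) < 1 / 2 := by
            rw [div_lt_div_iff₀ hsp (by norm_num)]; linarith
          nlinarith [Real.pi_pos]
        have hsin := Real.sin_pos_of_pos_of_lt_pi hθ0 this
        have : 0 ≤ s * (C * (t 1 + t 2) * Real.sin θ) := by positivity
        nlinarith
      · exact h.symm
      · have a1 : Real.pi < θ := by
          rw [hθ]
          have : 1 / 2 < t 1 / (t 1 + t 2) := by
            rw [div_lt_div_iff₀ (by norm_num) hsp]; linarith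
          nlinarith [Real.pi_pos]
        have a2 : θ < 2 * Real.pi := by
          rw [hθ]
          have : t 1 / (t 1 + t 2) < 1 := by
            rw [div_lt_one hsp]; linarith
          nlinarith [Real.pi_pos]
        have hsin : Real.sin θ < 0 := by
          rw [← Real.sin_sub_two_pi]
          exact Real.sin_neg_of_neg_of_neg_pi_lt (by linarith) (by linarith)
        have : 0 ≤ s * (C * (t 1 + t 2) * (-Real.sin θ)) := by
          have : 0 ≤ - Real.sin θ := by linarith
          positivity
        nlinarith
    have htail := Yv_tail (t := t) h12 hD
    have ht1 : ((k : ℝ) + 2) * t 1 = 1 := by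
      rw [← hs1]; simp only [htail]; simp
    have hθ' : θ = Real.pi := by
      rw [hθ, h12]; field_simp; norm_num
    have hC' : C * (t 1 + t 2) = 1 := by
      rw [hC, h12]
      simp only [htail, Finset.prod_const, Finset.card_univ, Fintype.card_fin]
      calc _ = (((k : ℝ) + 2) * t 1) ^ (k + 1) := by rw [mul_pow]; ring
        _ = 1 := by rw [ht1, one_pow]
    rw [hθ', hC'] at e1
    simp at e1
    linarith

/-- section of Yv -/
noncomputable def Zv (k : ℕ) (g : TT k) : Fin (k + 3) → ℝ :=
  let u : Fin (k + 2) → ℝ := Fin.cons (-g.1.im / 2) (Fin.cons (g.1.im / 2) (fun i => g.2 i / 2))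
  Fin.cons ((g.1.re + ∑ i, u i) / (k + 2)) u

theorem Yv_Zv {k : ℕ} (g : TT k) : Yv k (Zv k g) = g := by
  have e1 : Zv k g 1 = -g.1.im / 2 := rfl
  have e2 : Zv k g 2 = g.1.im / 2 := rfl
  have e3 : ∀ i : Fin k, Zv k g i.succ.succ.succ = g.2 i / 2 := fun i => rfl
  unfold Yv
  simp only [e1, e2, e3]
  refine Prod.ext (Complex.ext ?_ ?_) ?_
  · simp only [Zv, Fin.cons_zero, Fin.cons_succ]
    have : ((k : ℝ) + 2) ≠ 0 := by positivity
    field_simp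
    ring
  · simp only; ring
  · funext i; simp only; ring

theorem Zv_cont {k : ℕ} : Continuous (Zv k) := by
  unfold Zv
  have : Continuous fun g : TT k => (Fin.cons (-g.1.im / 2) (Fin.cons (g.1.im / 2) (fun i => g.2 i / 2)) : Fin (k + 2) → ℝ) := by
    refine continuous_pi fun i => ?_
    induction i using Fin.cases with
    | zero => simp only [Fin.cons_zero]; fun_prop
    | succ i =>
      induction i using Fin.cases with
      | zero => simp only [Fin.cons_succ, Fin.cons_zero]; fun_prop
      | succ i => simp only [Fin.cons_succ]; fun_prop
  refine continuous_pi fun i => ?_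
  induction i using Fin.cases with
  | zero =>
    simp only [Fin.cons_zero]
    refine Continuous.div_const (Continuous.add (by fun_prop) ?_) _
    exact continuous_finsetSum _ fun i _ => (continuous_apply i).comp this
  | succ i => exact (continuous_apply i).comp this

theorem Yv_sub {k : ℕ} (a b : Fin (k + 3) → ℝ) : Yv k (a - b) = Yv k a - Yv k b := by
  unfold Yv
  refine Prod.ext (Complex.ext ?_ ?_) ?_
  · simp only [Pi.sub_apply, Prod.fst_sub, Complex.sub_re, Finset.sum_sub_distrib]; ring
  · simp only [Pi.sub_apply, Prod.fst_sub, Complex.sub_im]; ring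
  · funext i; simp only [Pi.sub_apply, Prod.snd_sub]; ring

/-- minimum coordinate -/
noncomputable def mn (n : ℕ) (x : Fin (n + 1) → ℝ) : ℝ := Finset.univ.inf' Finset.univ_nonempty x

theorem mn_cont {n : ℕ} : Continuous (mn n) :=
  Continuous.finset_inf'_apply (ι := Fin (n + 1)) (s := Finset.univ)
      (f := fun i (x : Fin (n + 1) → ℝ) => x i) Finset.univ_nonempty (fun i _ => continuous_apply i)

theorem mn_le {n : ℕ} (x : Fin (n + 1) → ℝ) (j) : mn n x ≤ x j := Finset.inf'_le _ (Finset.mem_univ j)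

theorem mn_ex {n : ℕ} (x : Fin (n + 1) → ℝ) : ∃ j, x j = mn n x := by
  obtain ⟨j, -, hj⟩ := Finset.exists_mem_eq_inf' (Finset.univ_nonempty (α := Fin (n + 1))) x
  exact ⟨j, hj.symm⟩

/-- φ has a non-surjective replacement -/
def Ext {S : Type*} [TopologicalSpace S] {n : ℕ} (φ : S → Fin (n + 1) → ℝ) : Prop :=
  ∃ ψ : S → Fin (n + 1) → ℝ, Continuous ψ ∧ ∀ x, (∀ i, 0 ≤ ψ x i) ∧ (∃ i, ψ x i = 0) ∧
    (∃ i, 0 < ψ x i) ∧ ((∃ i, φ x i = 0) → ψ x = φ x)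

theorem Ext_of_Yv {S : Type*} [TopologicalSpace S] {k : ℕ} {φ : S → Fin (k + 3) → ℝ}
    (hφ : ∀ x i, 0 ≤ φ x i) (G : S → TT k) (hG : Continuous G) (h0 : ∀ x, G x ≠ 0)
    (h : ∀ x, (∃ i, φ x i = 0) → G x = Yv k (φ x)) : Ext (n := k + 2) φ := by
  refine ⟨fun x i => Zv k (G x) i - mn (k + 2) (Zv k (G x)), ?_, fun x => ⟨fun i => ?_, ?_, ?_, ?_⟩⟩
  · refine continuous_pi fun i => ?_
    exact ((continuous_apply i).comp (Zv_cont.comp hG)).sub (mn_cont.comp (Zv_cont.comp hG))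
  · linarith [mn_le (Zv k (G x)) i]
  · obtain ⟨j, hj⟩ := mn_ex (Zv k (G x))
    exact ⟨j, by beta_reduce; rw [hj, sub_self]⟩
  · by_contra hc
    push Not at hc
    have hconst : ∀ i, Zv k (G x) i = Zv k (G x) 0 := fun i => by
      have a := hc i
      have b := hc 0
      have c := mn_le (Zv k (G x)) i
      have d := mn_le (Zv k (G x)) 0
      linarith
    apply h0 x
    rw [← Yv_Zv (G x)]
    refine Prod.ext (Complex.ext ?_ ?_) ?_
    · simp [Yv, hconst]
    · simp only [Yv]; rw [hconst 1, hconst 2]; simp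
    · funext i; simp only [Yv]; rw [hconst 1, hconst 2, hconst _]; simp; ring
  · intro hx
    have e : Yv k (Zv k (G x) - φ x) = 0 := by rw [Yv_sub, Yv_Zv, h x hx, sub_self]
    have e' := Yv_zero e
    simp only [Pi.sub_apply] at e'
    set c := Zv k (G x) 0 - φ x 0
    have hm : mn (k + 2) (Zv k (G x)) = c := by
      apply le_antisymm
      · obtain ⟨i, hi⟩ := hx
        have := mn_le (Zv k (G x)) i
        have := e' i
        linarith
      · obtain ⟨j, hj⟩ := mn_ex (Zv k (G x))
        rw [← hj]
        have := e' j
        have := hφ x j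
        linarith
    funext i
    have := e' i
    beta_reduce
    rw [hm]; linarith

theorem interp {S : Type*} [TopologicalSpace S] {k : ℕ} {φ t : S → Fin (k + 3) → ℝ}
    (hφc : Continuous φ) (htc : Continuous t) (hφ : ∀ x, φ x ∈ stdSimplex ℝ (Fin (k + 3)))
    (ht : ∀ x, t x ∈ stdSimplex ℝ (Fin (k + 3))) {η : ℝ} (hη : 0 < η)
    (h1 : ∀ x, mn (k + 2) (φ x) ≤ η → ∃ j, t x j = 0 ∧ (k + 3) * φ x j < 1)
    (ψ : S → TT k) (hψ : Continuous ψ) (hψ0 : ∀ x, ψ x ≠ 0)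
    (hψV : ∀ x, mn (k + 2) (φ x) ≤ η → ψ x = Vv k (t x)) : Ext (n := k + 2) φ := by
  let μ : S → ℝ := fun x => mn (k + 2) (φ x)
  have hμ : Continuous μ := mn_cont.comp hφc
  let s1 : S → ℝ := fun x => min 1 (2 * (μ x / η))
  let s2 : S → ℝ := fun x => max 0 (min 1 (2 * (μ x / η) - 1))
  have hμ0 : ∀ x, 0 ≤ μ x := fun x => by
    obtain ⟨j, hj⟩ := mn_ex (φ x)
    show 0 ≤ mn (k + 2) (φ x)
    rw [← hj]; exact (hφ x).1 j
  refine Ext_of_Yv (fun x => (hφ x).1)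
    (fun x => (1 - s2 x) • Yv k ((1 - s1 x) • φ x + s1 x • t x) + s2 x • ψ x) ?_ ?_ ?_
  · have c1 : Continuous s1 := by fun_prop
    have c2 : Continuous s2 := by fun_prop
    have := (Yv_cont (k := k)).comp (((continuous_const (y := (1 : ℝ))).sub c1).smul hφc |>.add (c1.smul htc))
    exact (((continuous_const (y := (1 : ℝ))).sub c2).smul this).add (c2.smul hψ)
  · intro x
    by_cases hx : μ x ≤ η
    · obtain ⟨j, hj, hj'⟩ := h1 x hx
      by_cases hx2 : μ x ≤ η / 2
      · have hle : 2 * (μ x / η) ≤ 1 := by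
          rw [← mul_div_assoc, div_le_one hη]; linarith
        have e2 : s2 x = 0 := max_eq_left ((min_le_right _ _).trans (by linarith))
        have e10 : 0 ≤ s1 x := le_min zero_le_one (by have := hμ0 x; positivity)
        have e11 : s1 x ≤ 1 := min_le_left _ _
        simp only [e2, sub_zero, one_smul, zero_smul, add_zero]
        intro h
        have hY := Yv_zero h
        have hsum : ∑ i, ((1 - s1 x) • φ x + s1 x • t x) i = 1 := by
          simp only [Pi.add_apply, Pi.smul_apply, smul_eq_mul, Finset.sum_add_distrib, ← Finset.mul_sum,
            (hφ x).2, (ht x).2]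
          ring
        have hj0 := hY j
        simp only [hY] at hsum
        rw [← hj0] at hsum
        simp [hj] at hsum
        have := (hφ x).1 j
        have hk : (0 : ℝ) ≤ k := Nat.cast_nonneg k
        have : 0 ≤ ((k : ℝ) + 3) * φ x j := by positivity
        nlinarith
      · have hle : 1 ≤ 2 * (μ x / η) := by
          rw [← mul_div_assoc, le_div_iff₀ hη]; linarith
        have e1 : s1 x = 1 := min_eq_left hle
        simp only [e1, sub_self, zero_smul, one_smul, zero_add]
        rw [hψV x hx]
        exact mix_ne (ht x) ⟨j, hj⟩ (le_max_left _ _) (max_le zero_le_one (min_le_left _ _))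
    · have hle : 1 ≤ (μ x / η) := by
        rw [le_div_iff₀ hη]; linarith
      have e2 : s2 x = 1 := by
        show max 0 (min 1 (2 * (μ x / η) - 1)) = 1
        rw [min_eq_left (by linarith), max_eq_right zero_le_one]
      simpa [e2] using hψ0 x
  · rintro x ⟨i, hi⟩
    have h0 : μ x = 0 := le_antisymm (hi ▸ mn_le (φ x) i) (hμ0 x)
    have e1 : s1 x = 0 := by simp [s1, h0]
    have e2 : s2 x = 0 := by simp [s2, h0]
    simp [e1, e2]

end MDP

namespace MDP

section nerve
variable {S : Type*} [TopologicalSpace S] {k N : ℕ}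

/-- support of a family at a point -/
noncomputable def supp (θ : Fin N → S → ℝ) (x : S) : Finset (Fin N) := by
  classical exact Finset.univ.filter (fun i => θ i x ≠ 0)

theorem mem_supp {θ : Fin N → S → ℝ} {x : S} {i : Fin N} : i ∈ supp θ x ↔ θ i x ≠ 0 := by
  simp [supp]

/-- label sums -/
noncomputable def lab (Λ : Fin N → Fin (k + 3)) (θ : Fin N → S → ℝ) (x : S) (j : Fin (k + 3)) : ℝ :=
  ∑ i with Λ i = j, θ i x

/-- skeleton map -/
noncomputable def FS (k : ℕ) (z : Finset (Fin N) → ℤ) (θ : Fin N → S → ℝ) (τ : Finset (Fin N)) (x : S) : TT k :=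
  if h : τ.card = k + 2 then B k (z τ) (fun i => θ (τ.orderEmbOfFin h i) x) else (1, 0)

theorem FS_supp (z : Finset (Fin N) → ℤ) (θ : Fin N → S → ℝ) (τ : Finset (Fin N)) (x : S)
    (hc : τ.card ≤ k + 2) (hx : supp θ x ⊆ τ) : FS k z θ τ x = FS k z θ (supp θ x) x := by
  by_cases he : supp θ x = τ
  · rw [he]
  have hlt : (supp θ x).card < τ.card := Finset.card_lt_card (lt_of_le_of_ne hx he)
  have e1 : FS k z θ (supp θ x) x = (1, 0) := by
    rw [FS, dif_neg (by omega)]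
  rw [e1, FS]
  split_ifs with h
  · obtain ⟨i, hi, hi'⟩ := Finset.exists_of_ssubset (lt_of_le_of_ne hx he)
    have : i ∈ Set.range (τ.orderEmbOfFin h) := by rw [Finset.range_orderEmbOfFin]; exact hi
    obtain ⟨j, rfl⟩ := this
    refine B_face _ _ j ?_
    by_contra hne
    exact hi' (mem_supp.2 hne)
  · rfl

theorem lab_zero {Λ : Fin N → Fin (k + 3)} {θ : Fin N → S → ℝ} {x : S} {j : Fin (k + 3)}
    (h : ∀ i ∈ supp θ x, Λ i ≠ j) : lab Λ θ x j = 0 := by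
  refine Finset.sum_eq_zero fun i hi => ?_
  by_contra hne
  exact h i (mem_supp.2 hne) (Finset.mem_filter.1 hi).2

theorem lab_simplex {Λ : Fin N → Fin (k + 3)} {θ : Fin N → S → ℝ} {x : S}
    (h0 : ∀ i, 0 ≤ θ i x) (h1 : ∑ i, θ i x = 1) : lab Λ θ x ∈ stdSimplex ℝ (Fin (k + 3)) := by
  refine ⟨fun j => Finset.sum_nonneg fun i _ => h0 i, ?_⟩
  rw [← h1]
  exact Finset.sum_fiberwise _ _ _

theorem lab_cont {Λ : Fin N → Fin (k + 3)} {θ : Fin N → S → ℝ} (h : ∀ i, Continuous (θ i)) :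
    Continuous (lab Λ θ) :=
  continuous_pi fun _ => continuous_finsetSum _ fun i _ => h i

theorem Vv_lab {Λ : Fin N → Fin (k + 3)} (hΛ : Monotone Λ) {θ : Fin N → S → ℝ} {x : S}
    (z : Finset (Fin N) → ℤ) (hc : (supp θ x).card ≤ k + 2)
    (hz1 : ∀ h : (supp θ x).card = k + 2, (∀ i, Λ ((supp θ x).orderEmbOfFin h i) = i.succ) → z (supp θ x) = 1)
    (hz0 : ∀ h : (supp θ x).card = k + 2, (¬ ∀ i, Λ ((supp θ x).orderEmbOfFin h i) = i.succ) → z (supp θ x) = 0) :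
    Vv k (lab Λ θ x) = FS k z θ (supp θ x) x := by
  unfold FS
  split_ifs with h
  · set g := (supp θ x).orderEmbOfFin h with hg
    have hmem : ∀ j, g j ∈ supp θ x := fun j => Finset.orderEmbOfFin_mem _ _ _
    have hsurj : ∀ i ∈ supp θ x, ∃ j, g j = i := fun i hi => by
      have : i ∈ Set.range g := by rw [hg, Finset.range_orderEmbOfFin]; exact hi
      exact this
    by_cases hb : ∀ i, Λ (g i) = i.succ
    · rw [hz1 h hb]
      unfold Vv
      congr 1
      funext i
      unfold lab
      rw [Finset.sum_eq_single (g i)]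
      · intro u hu hne
        by_contra hn
        obtain ⟨j, rfl⟩ := hsurj u (mem_supp.2 hn)
        have := (Finset.mem_filter.1 hu).2
        rw [hb] at this
        exact hne (by rw [Fin.succ_injective _ this])
      · intro hn
        exact absurd (by simp [hb i]) hn
    · rw [hz0 h hb, B_zero]
      have : ∃ i : Fin (k + 2), ∀ u ∈ supp θ x, Λ u ≠ i.succ := by
        by_contra hcon
        push Not at hcon
        apply hb
        have : ∀ i : Fin (k + 2), ∃ j, Λ (g j) = i.succ := fun i => by
          obtain ⟨u, hu, hu'⟩ := hcon i
          obtain ⟨j, rfl⟩ := hsurj u hu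
          exact ⟨j, hu'⟩
        choose r hr using this
        have hrm : StrictMono r := by
          intro i i' hii
          have : Λ (g (r i)) < Λ (g (r i')) := by rw [hr, hr]; exact Fin.succ_lt_succ_iff.2 hii
          exact (hΛ.comp g.monotone).reflect_lt this
        have hid : r = id := by
          apply (StrictMono.range_inj hrm strictMono_id).1
          rw [Set.range_id, Set.range_eq_univ]
          exact Finite.injective_iff_surjective.1 hrm.injective
        intro i
        have := hr i
        rwa [hid] at this
      obtain ⟨i, hi⟩ := this
      exact Vv_face i (lab_zero hi)
  · have : ∃ i : Fin (k + 2), ∀ u ∈ supp θ x, Λ u ≠ i.succ := by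
      by_contra hcon
      push Not at hcon
      choose r hr hr' using hcon
      have hinj : Function.Injective r := fun i i' hii => by
        have h1 := hr' i
        rw [hii, hr' i'] at h1
        exact (Fin.succ_injective _ h1).symm
      have := Finset.card_le_card_of_injOn (s := Finset.univ) (t := supp θ x) r (fun i _ => hr i) hinj.injOn
      simp at this
      omega
    obtain ⟨i, hi⟩ := this
    exact Vv_face i (lab_zero hi)

theorem emb_erase {σ : Finset (Fin N)} {n : ℕ} (h : σ.card = n + 1) (j : Fin (n + 1))
    (h' : (σ.erase (σ.orderEmbOfFin h j)).card = n) (i : Fin n) :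
    (σ.erase (σ.orderEmbOfFin h j)).orderEmbOfFin h' i = σ.orderEmbOfFin h (j.succAbove i) := by
  have := Finset.orderEmbOfFin_unique (s := σ.erase (σ.orderEmbOfFin h j)) h'
    (f := fun i => σ.orderEmbOfFin h (j.succAbove i))
    (fun i => Finset.mem_erase.2 ⟨fun he => Fin.succAbove_ne j i ((σ.orderEmbOfFin h).injective he),
      Finset.orderEmbOfFin_mem _ _ _⟩)
    ((σ.orderEmbOfFin h).strictMono.comp (Fin.strictMono_succAbove j))
  exact (congrFun this i).symm

theorem piece {Λ : Fin N → Fin (k + 3)} (hΛ : Monotone Λ) {θ : Fin N → S → ℝ}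
    (hθc : ∀ i, Continuous (θ i)) (hθ0 : ∀ i x, 0 ≤ θ i x) (hθ1 : ∀ x, ∑ i, θ i x = 1)
    (z : Finset (Fin N) → ℤ) (Q : Finset (Fin N) → Prop) (hQ : ∀ σ τ, τ ⊆ σ → Q σ → Q τ)
    (hQ1 : ∀ σ, Q σ → ∃ j, ∀ u ∈ σ, Λ u ≠ j)
    (hz1 : ∀ τ, Q τ → ∀ h : τ.card = k + 2, (∀ i, Λ (τ.orderEmbOfFin h i) = i.succ) → z τ = 1)
    (hz0 : ∀ τ, Q τ → ∀ h : τ.card = k + 2, (¬ ∀ i, Λ (τ.orderEmbOfFin h i) = i.succ) → z τ = 0)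
    (σ : Finset (Fin N)) (hσ : σ.card = k + 3)
    (hz : ∑ j : Fin (k + 3), (-1) ^ (j : ℕ) * z (σ.erase (σ.orderEmbOfFin hσ j)) = 0) :
    ∃ G : S → TT k, ContinuousOn G {x | supp θ x ⊆ σ} ∧ (∀ x, supp θ x ⊆ σ → G x ≠ 0) ∧
      (∀ x, supp θ x ⊆ σ → supp θ x ≠ σ → G x = FS k z θ (supp θ x) x) ∧
      (Q σ → ∀ x, supp θ x ⊆ σ → G x = Vv k (lab Λ θ x)) := by
  by_cases hq : Q σ
  · refine ⟨fun x => Vv k (lab Λ θ x), (Vv_cont.comp (lab_cont hθc)).continuousOn, ?_, ?_, fun _ _ _ => rfl⟩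
    · intro x hx
      obtain ⟨j, hj⟩ := hQ1 σ hq
      exact Vv_ne (lab_simplex (fun i => hθ0 i x) (hθ1 x)) ⟨j, lab_zero fun u hu => hj u (hx hu)⟩
    · intro x hx hne
      have hlt := Finset.card_lt_card (lt_of_le_of_ne hx hne)
      have hqs := hQ _ _ hx hq
      exact Vv_lab hΛ z (by omega) (hz1 _ hqs) (hz0 _ hqs)
  · obtain ⟨G, hG1, hG2⟩ := RR_all (k := k)
      (fun j => if h : j < k + 3 then z (σ.erase (σ.orderEmbOfFin hσ ⟨j, h⟩)) else 0) (by
        rw [Finset.sum_range, ← hz]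
        refine Finset.sum_congr rfl fun j _ => ?_
        rw [dif_pos j.2])
    have hc : Continuous fun x => (fun i => θ (σ.orderEmbOfFin hσ i) x : Fin (k + 3) → ℝ) :=
      continuous_pi fun i => hθc _
    have hs : ∀ x, supp θ x ⊆ σ → (fun i => θ (σ.orderEmbOfFin hσ i) x) ∈ stdSimplex ℝ (Fin (k + 3)) := by
      intro x hx
      refine ⟨fun i => hθ0 _ x, ?_⟩
      rw [← hθ1 x, ← Finset.sum_subset (Finset.subset_univ σ) (fun i _ hi => by
        by_contra hn
        exact hi (hx (mem_supp.2 hn)))]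
      conv_rhs => rw [← Finset.map_orderEmbOfFin_univ σ hσ]
      rw [Finset.sum_map]
      rfl
    refine ⟨fun x => G (fun i => θ (σ.orderEmbOfFin hσ i) x), ?_, ?_, ?_, fun h => absurd h hq⟩
    · exact hG1.comp hc.continuousOn (fun x hx => hs x hx)
    · exact fun x hx => (hG2 _ (hs x hx)).1
    · intro x hx hne
      obtain ⟨i, hi, hi'⟩ := Finset.exists_of_ssubset (lt_of_le_of_ne hx hne)
      have : i ∈ Set.range (σ.orderEmbOfFin hσ) := by rw [Finset.range_orderEmbOfFin]; exact hi
      obtain ⟨j, rfl⟩ := this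
      have h0 : θ (σ.orderEmbOfFin hσ j) x = 0 := by
        by_contra hn; exact hi' (mem_supp.2 hn)
      have hcard : (σ.erase (σ.orderEmbOfFin hσ j)).card = k + 2 := by
        rw [Finset.card_erase_of_mem hi, hσ]; rfl
      rw [← FS_supp z θ (σ.erase (σ.orderEmbOfFin hσ j)) x hcard.le (fun u hu =>
        Finset.mem_erase.2 ⟨fun h => mem_supp.1 hu (h ▸ h0), hx hu⟩)]
      beta_reduce
      rw [(hG2 _ (hs x hx)).2 j h0, FS, dif_pos hcard]
      beta_reduce
      rw [dif_pos j.2]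
      congr 1
      funext i
      rw [emb_erase]
      rfl

theorem nerve_map {Λ : Fin N → Fin (k + 3)} (hΛ : Monotone Λ) {θ : Fin N → S → ℝ}
    (hθc : ∀ i, Continuous (θ i)) (hθ0 : ∀ i x, 0 ≤ θ i x) (hθ1 : ∀ x, ∑ i, θ i x = 1)
    (z : Finset (Fin N) → ℤ) (Q : Finset (Fin N) → Prop) (hQ : ∀ σ τ, τ ⊆ σ → Q σ → Q τ)
    (hQ1 : ∀ σ, Q σ → ∃ j, ∀ u ∈ σ, Λ u ≠ j)
    (hz1 : ∀ τ, Q τ → ∀ h : τ.card = k + 2, (∀ i, Λ (τ.orderEmbOfFin h i) = i.succ) → z τ = 1)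
    (hz0 : ∀ τ, Q τ → ∀ h : τ.card = k + 2, (¬ ∀ i, Λ (τ.orderEmbOfFin h i) = i.succ) → z τ = 0)
    (hz : ∀ x, ∀ hσ : (supp θ x).card = k + 3,
      ∑ j : Fin (k + 3), (-1) ^ (j : ℕ) * z ((supp θ x).erase ((supp θ x).orderEmbOfFin hσ j)) = 0)
    (hcard : ∀ x, (supp θ x).card ≤ k + 3) :
    ∃ ψ : S → TT k, Continuous ψ ∧ (∀ x, ψ x ≠ 0) ∧ ∀ x, Q (supp θ x) → ψ x = Vv k (lab Λ θ x) := by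
  let I := {σ : Finset (Fin N) // ∃ x, supp θ x = σ}
  have hp : ∀ σ : I, ∃ G : S → TT k, ContinuousOn G {x | supp θ x ⊆ σ} ∧ (∀ x, supp θ x ⊆ σ → G x ≠ 0) ∧
      (∀ x, supp θ x ⊆ σ → (supp θ x).card ≤ k + 2 → G x = FS k z θ (supp θ x) x) ∧
      (Q σ → ∀ x, supp θ x ⊆ σ → G x = Vv k (lab Λ θ x)) := by
    rintro ⟨σ, y, rfl⟩
    by_cases h : (supp θ y).card = k + 3
    · obtain ⟨G, h1, h2, h3, h4⟩ := piece hΛ hθc hθ0 hθ1 z Q hQ hQ1 hz1 hz0 _ h (hz y h)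
      refine ⟨G, h1, h2, fun x hx hc => h3 x hx fun he => ?_, h4⟩
      rw [he] at hc; omega
    · have hle : (supp θ y).card ≤ k + 2 := by have := hcard y; omega
      refine ⟨FS k z θ (supp θ y), ?_, ?_, ?_, ?_⟩
      · unfold FS
        split_ifs with h'
        · exact ((B_cont _).comp (continuous_pi fun i => hθc _)).continuousOn
        · exact continuousOn_const
      · intro x hx
        unfold FS
        split_ifs with h'
        · refine B_ne _ _ ?_
          rw [← hθ1 x, ← Finset.sum_subset (Finset.subset_univ (supp θ y)) (fun i _ hi => by
            by_contra hn
            exact hi (hx (mem_supp.2 hn)))]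
          conv_rhs => rw [← Finset.map_orderEmbOfFin_univ (supp θ y) h']
          rw [Finset.sum_map]
          rfl
        · intro h
          have := congrArg Prod.fst h
          simp at this
      · intro x hx _
        exact FS_supp z θ _ x hle hx
      · intro hq x hx
        have hqs := hQ _ _ hx hq
        rw [FS_supp z θ _ x hle hx]
        exact (Vv_lab hΛ z ((Finset.card_le_card hx).trans hle) (hz1 _ hqs) (hz0 _ hqs)).symm
  choose G h1 h2 h3 h4 using hp
  obtain ⟨g, hg1, hg2⟩ := glue_closed (ι := I) (fun σ => {x | supp θ x ⊆ σ}) G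
    (fun σ => by
      have : {x | supp θ x ⊆ σ} = ⋂ i : Fin N, ⋂ _ : i ∉ σ.1, {x | θ i x = 0} := by
        ext x
        simp only [Set.mem_ofPred_eq, Set.mem_iInter]
        constructor
        · intro h i hi
          by_contra hn
          exact hi (h (mem_supp.2 hn))
        · intro h i hi
          by_contra hn
          exact mem_supp.1 hi (h i hn)
      rw [this]
      exact isClosed_iInter fun i => isClosed_iInter fun _ => isClosed_eq (hθc i) continuous_const)
    h1 (by
      intro σ τ x hx hx'
      by_cases hc : (supp θ x).card ≤ k + 2
      · rw [h3 σ x hx hc, h3 τ x hx' hc]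
      · have hcc : (supp θ x).card = k + 3 := by have := hcard x; omega
        have key : ∀ ρ : I, supp θ x ⊆ ρ → supp θ x = ρ := by
          rintro ⟨ρ, y, rfl⟩ h
          exact Finset.eq_of_subset_of_card_le h ((hcard y).trans hcc.ge)
        have : σ = τ := Subtype.ext ((key σ hx).symm.trans (key τ hx'))
        rw [this])
  have hu : (⋃ σ : I, {x | supp θ x ⊆ σ}) = Set.univ :=
    Set.eq_univ_of_forall fun x => Set.mem_iUnion.2 ⟨⟨supp θ x, x, rfl⟩, fun _ h => h⟩
  rw [hu, continuousOn_univ] at hg1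
  refine ⟨g, hg1, fun x => ?_, fun x hx => ?_⟩
  · rw [hg2 ⟨supp θ x, x, rfl⟩ x (fun _ h => h)]
    exact h2 _ x (fun _ h => h)
  · rw [hg2 ⟨supp θ x, x, rfl⟩ x (fun _ h => h)]
    exact h4 _ hx x (fun _ h => h)

end nerve
end MDP

namespace MDP
open FreeAbelianGroup

/-- covering dimension at most m, metric form -/
def FD (m : ℕ) (X : Type*) [MetricSpace X] : Prop :=
  ∀ δ > (0 : ℝ), ∃ (N : ℕ) (U : Fin N → Set X), (∀ i, IsOpen (U i)) ∧ (∀ x, ∃ i, x ∈ U i) ∧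
    (∀ i, ∀ x ∈ U i, ∀ y ∈ U i, dist x y < δ) ∧
    ∀ x, ∀ s : Finset (Fin N), (∀ i ∈ s, x ∈ U i) → s.card ≤ m + 1

theorem pou {X : Type*} [TopologicalSpace X] [NormalSpace X] {ι : Type*} [Fintype ι] (U : ι → Set X) (hU : ∀ i, IsOpen (U i))
    (hc : ∀ x, ∃ i, x ∈ U i) : ∃ θ : ι → X → ℝ, (∀ i, Continuous (θ i)) ∧ (∀ i x, 0 ≤ θ i x) ∧
      (∀ x, ∑ i, θ i x = 1) ∧ ∀ i x, θ i x ≠ 0 → x ∈ U i := by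
  obtain ⟨f, hf⟩ := PartitionOfUnity.exists_isSubordinate_of_locallyFinite isClosed_univ U hU
    (locallyFinite_of_finite U) (fun x _ => Set.mem_iUnion.2 (hc x))
  refine ⟨fun i x => f i x, fun i => (f i).continuous, fun i x => f.nonneg i x, fun x => ?_, fun i x h => ?_⟩
  · rw [← f.sum_eq_one (Set.mem_univ x), finsum_eq_sum_of_fintype]
  · exact hf i (subset_tsupport _ h)

theorem bdl_ofFn {V : Type*} (n : ℕ) (f : Fin (n + 1) → V) :
    bdl (List.ofFn f) = ∑ j : Fin (n + 1), (-1 : ℤ) ^ (j : ℕ) • of (List.ofFn (fun i => f (j.succAbove i))) := by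
  induction n with
  | zero => simp [bdl]
  | succ n ih =>
    conv_rhs => rw [Fin.sum_univ_succ]
    rw [List.ofFn_succ, bdl, ih, map_sum, sub_eq_add_neg, ← Finset.sum_neg_distrib]
    refine congrArg₂ (· + ·) (by simp) (Finset.sum_congr rfl fun j _ => ?_)
    rw [map_zsmul, cn_of, Fin.val_succ, pow_succ, mul_neg_one, neg_smul, List.ofFn_succ]
    simp

theorem hopf {S : Type*} [MetricSpace S] [CompactSpace S] {k : ℕ} (hFD : FD (k + 2) S)
    (φ : S → Fin (k + 3) → ℝ) (hφc : Continuous φ) (hφ : ∀ x, φ x ∈ stdSimplex ℝ (Fin (k + 3)))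
    (hE : ¬ Ext (n := k + 2) φ) :
    ∃ (A : Set S) (ε0 : ℝ) (c : List S → ℤ), 0 < ε0 ∧ Coc A ε0 (k + 2) c ∧ Ess A (k + 2) c := by
  classical
  have hne : Nonempty S := by
    by_contra h
    rw [not_nonempty_iff] at h
    exact hE ⟨φ, hφc, fun x => h.elim x⟩
  obtain ⟨s0⟩ := hne
  have hmax : ∀ x, ∃ j, ∀ i, φ x i ≤ φ x j := fun x => Finite.exists_max (φ x)
  choose lb hlb using hmax
  have hk : (0 : ℝ) < k + 3 := by positivity
  have hlb1 : ∀ x, 1 / ((k : ℝ) + 3) ≤ φ x (lb x) := by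
    intro x
    rw [div_le_iff₀ hk]
    have := Finset.sum_le_sum (s := Finset.univ) (fun i _ => hlb x i)
    rw [(hφ x).2] at this
    simp at this
    linarith
  set η : ℝ := 1 / (2 * ((k : ℝ) + 3)) with hη
  have hη0 : 0 < η := by positivity
  have hηη : η + η = 1 / ((k : ℝ) + 3) := by rw [hη]; field_simp; norm_num
  obtain ⟨ρ, hρ, hρ'⟩ := Metric.uniformContinuous_iff.1 (CompactSpace.uniformContinuous_of_continuous hφc) η hη0
  have hlab : ∀ a, mn (k + 2) (φ a) ≤ η → ∃ j, φ a j ≤ η ∧ ∀ y, dist y a < ρ → lb y ≠ j := by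
    intro a ha
    obtain ⟨j, hj⟩ := mn_ex (φ a)
    refine ⟨j, hj ▸ ha, ?_⟩
    rintro y hy rfl
    have h1 := (dist_le_pi_dist (φ y) (φ a) (lb y)).trans_lt (hρ' hy)
    rw [Real.dist_eq] at h1
    have h2 := abs_lt.1 h1
    have := hlb1 y
    linarith [hj ▸ ha]
  let A : Set S := {x | mn (k + 2) (φ x) ≤ η}
  let e0 : List (Fin (k + 3)) → ℤ := fun l => if l = List.ofFn (Fin.succ : Fin (k + 2) → Fin (k + 3)) then 1 else 0
  let e : List S → ℤ := fun l => lift e0 (FF (of (l.map lb)))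
  let c : List S → ℤ := fun l => lift e (bdl l)
  have he : ∀ ch, lift e ch = lift e0 (FF (FreeAbelianGroup.map (List.map lb) ch)) := fun ch =>
    hom_ext (f := lift e) (g := (lift e0).comp ((FF (V := Fin (k + 3))).comp (FreeAbelianGroup.map (List.map lb))))
      (by intro l; simp [e]) ch
  have hc0 : ∀ l : List S, l.length = k + 3 → (∃ j, ∀ y ∈ l, lb y ≠ j) → c l = 0 := by
    rintro l hl ⟨j, hj⟩
    show lift e (bdl l) = 0
    rw [he, ← bd_of, ← bd_map, ← bd_FF]
    simp only [FreeAbelianGroup.map_of_apply]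
    rw [FF_card]
    · simp
    · have h1 : (l.map lb).toFinset ⊆ Finset.univ.erase j := by
        intro i hi
        rw [List.mem_toFinset, List.mem_map] at hi
        obtain ⟨y, hy, rfl⟩ := hi
        exact Finset.mem_erase.2 ⟨hj y hy, Finset.mem_univ _⟩
      have h2 := Finset.card_le_card h1
      rw [Finset.card_erase_of_mem (Finset.mem_univ _)] at h2
      simp at h2
      simp [hl]
      omega
  refine ⟨A, ρ, c, hρ, ⟨?_, ?_⟩, ?_⟩
  · rintro l hl ⟨a, ha, hl'⟩
    obtain ⟨j, -, hj⟩ := hlab a ha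
    exact hc0 l hl ⟨j, fun y hy => hj y (hl' y hy)⟩
  · intro l _ _
    exact lift_bdl_bdl e l
  · rintro ε hε ⟨b, hb1, hb2⟩
    apply hE
    let δ := min ρ (ε / 2)
    have hδ : 0 < δ := lt_min hρ (by linarith)
    obtain ⟨N, U0, hU0o, hU0c, hU0d, hU0n⟩ := hFD δ hδ
    have hp0 : ∀ i, ∃ p, (U0 i).Nonempty → p ∈ U0 i := fun i => by
      by_cases h : (U0 i).Nonempty
      · exact ⟨h.some, fun _ => h.some_mem⟩
      · exact ⟨s0, fun h' => absurd h' h⟩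
    choose p0 hp0 using hp0
    let π := Tuple.sort (fun i => lb (p0 i))
    let U : Fin N → Set S := fun i => U0 (π i)
    let p : Fin N → S := fun i => p0 (π i)
    let Λ : Fin N → Fin (k + 3) := fun i => lb (p i)
    have hΛ : Monotone Λ := Tuple.monotone_sort (fun i => lb (p0 i))
    have hUd : ∀ i, ∀ x ∈ U i, dist (p i) x < δ := fun i x hx => hU0d _ _ (hp0 _ ⟨x, hx⟩) x hx
    obtain ⟨θ, hθc, hθ0, hθ1, hθU⟩ := pou U (fun i => hU0o _) (fun x => by
      obtain ⟨i, hi⟩ := hU0c x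
      exact ⟨π.symm i, by simpa [U] using hi⟩)
    have hsU : ∀ x, ∀ i ∈ supp θ x, x ∈ U i := fun x i hi => hθU i x (mem_supp.1 hi)
    have hsd : ∀ x, ∀ i ∈ supp θ x, dist (p i) x < δ := fun x i hi => hUd i x (hsU x i hi)
    let zl : List S → ℤ := fun l => e l - b l
    let z : Finset (Fin N) → ℤ := fun τ => if h : τ.card = k + 2 then
      zl (List.ofFn (fun i => p (τ.orderEmbOfFin h i))) else 0
    let Q : Finset (Fin N) → Prop := fun σ => ∃ a ∈ A, ∀ i ∈ σ, a ∈ U i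
    have hev : ∀ τ, Q τ → ∀ h : τ.card = k + 2, z τ =
        if (∀ i, Λ (τ.orderEmbOfFin h i) = i.succ) then 1 else 0 := by
      rintro τ ⟨a, ha, haU⟩ h
      have hb : b (List.ofFn (fun i => p (τ.orderEmbOfFin h i))) = 0 := by
        refine hb1 _ (by simp) ⟨a, ha, fun x hx => ?_⟩
        rw [List.mem_ofFn] at hx
        obtain ⟨i, rfl⟩ := hx
        have := hUd _ a (haU _ (Finset.orderEmbOfFin_mem τ h i))
        exact this.trans_le ((min_le_right _ _).trans (by linarith))
      have hz' : z τ = e (List.ofFn (fun i => p (τ.orderEmbOfFin h i))) := by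
        simp only [z, dif_pos h, zl, hb, sub_zero]
      rw [hz']
      show lift e0 (FF (of (List.map lb _))) = _
      rw [List.map_ofFn]
      have hmono : Monotone (fun i => Λ (τ.orderEmbOfFin h i)) := hΛ.comp (τ.orderEmbOfFin h).monotone
      change lift e0 (FF (of (List.ofFn (fun i => Λ (τ.orderEmbOfFin h i))))) = _
      by_cases hnd : Function.Injective (fun i => Λ (τ.orderEmbOfFin h i))
      · rw [FF_sorted _ (List.pairwise_ofFn.2 fun i j hij => hmono.strictMono_of_injective hnd hij)]
        simp only [lift_apply_of, e0]
        congr 1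
        rw [List.ofFn_inj, funext_iff]
      · rw [FF_dup _ (fun h => hnd (List.nodup_ofFn.1 h)), map_zero, if_neg]
        intro hh
        exact hnd (fun i j hij => by simpa [hh] using hij)
    obtain ⟨ψ, hψc, hψ0, hψV⟩ := nerve_map hΛ hθc hθ0 hθ1 z Q
      (fun σ τ hτ => by rintro ⟨a, ha, h⟩; exact ⟨a, ha, fun i hi => h i (hτ hi)⟩)
      (by
        rintro σ ⟨a, ha, h⟩
        obtain ⟨j, -, hj⟩ := hlab a ha
        exact ⟨j, fun u hu => hj _ ((hUd u a (h u hu)).trans_le (min_le_left _ _))⟩)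
      (fun τ hq h hh => by rw [hev τ hq h, if_pos hh])
      (fun τ hq h hh => by rw [hev τ hq h, if_neg hh])
      (by
        intro x hσ
        set σ := supp θ x
        let l := List.ofFn (fun i => p (σ.orderEmbOfFin hσ i))
        have hsm : Small ε l := by
          intro y hy y' hy'
          rw [List.mem_ofFn] at hy hy'
          obtain ⟨i, rfl⟩ := hy
          obtain ⟨i', rfl⟩ := hy'
          have h1 := hsd x _ (Finset.orderEmbOfFin_mem σ hσ i)
          have h2 := hsd x _ (Finset.orderEmbOfFin_mem σ hσ i')
          have h3 := dist_triangle_right (p (σ.orderEmbOfFin hσ i)) (p (σ.orderEmbOfFin hσ i')) x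
          have : δ ≤ ε / 2 := min_le_right _ _
          linarith
        have h0 : lift zl (bdl l) = 0 := by
          have := hb2 l (by simp [l]) hsm
          rw [lift_sub', ← this]
          exact sub_self _
        rw [bdl_ofFn, map_sum] at h0
        rw [← h0]
        refine Finset.sum_congr rfl fun j _ => ?_
        have hcard : (σ.erase (σ.orderEmbOfFin hσ j)).card = k + 2 := by
          rw [Finset.card_erase_of_mem (Finset.orderEmbOfFin_mem σ hσ j), hσ]; rfl
        rw [map_zsmul, lift_apply_of, smul_eq_mul]
        simp only [z, emb_erase]
        exact congrArg _ (dif_pos hcard))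
      (by
        intro x
        have := hU0n x ((supp θ x).map π.toEmbedding) (by
          intro i hi
          obtain ⟨j, hj, rfl⟩ := Finset.mem_map.1 hi
          exact hsU x j hj)
        simpa using this)
    refine interp (t := lab Λ θ) hφc (lab_cont hθc) hφ (fun x => lab_simplex (fun i => hθ0 i x) (hθ1 x)) hη0 ?_ ψ hψc hψ0 ?_
    · intro x hx
      obtain ⟨j, hj, hj'⟩ := hlab x hx
      refine ⟨j, lab_zero fun i hi => hj' _ ((hsd x i hi).trans_le (min_le_left _ _)), ?_⟩
      calc _ ≤ ((k : ℝ) + 3) * η := by gcongr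
        _ = 1 / 2 := by rw [hη]; field_simp
        _ < 1 := by norm_num
    · intro x hx
      exact hψV x ⟨x, hx, hsU x⟩

end MDP

namespace MDP

theorem reduce_bad {X : Type*} [MetricSpace X] {k N : ℕ}
    (hX : ∀ S : Set X, IsClosed S → ∀ φ : S → Fin (k + 3) → ℝ, Continuous φ →
      (∀ x, φ x ∈ stdSimplex ℝ (Fin (k + 3))) → Ext (n := k + 2) φ)
    (φ : Fin N → X → ℝ) (hc : ∀ i, Continuous (φ i)) (h0 : ∀ i x, 0 ≤ φ i x) (h1 : ∀ x, ∃ i, 0 < φ i x)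
    (hcard : ∀ x, (supp φ x).card ≤ k + 3) (ρ : Finset (Fin N)) (hρ : ρ.card = k + 3) :
    ∃ φ' : Fin N → X → ℝ, (∀ i, Continuous (φ' i)) ∧ (∀ i x, 0 ≤ φ' i x) ∧ (∀ x, ∃ i, 0 < φ' i x) ∧
      (∀ x, supp φ' x ⊆ supp φ x) ∧ ∀ x, supp φ' x ≠ ρ := by
  classical
  let T : X → ℝ := fun x => ∑ i, φ i x
  have hTc : Continuous T := continuous_finsetSum _ fun i _ => hc i
  have hT : ∀ x, 0 < T x := fun x => by
    obtain ⟨i, hi⟩ := h1 x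
    exact Finset.sum_pos' (fun i _ => h0 i x) ⟨i, Finset.mem_univ _, hi⟩
  let S : Set X := {x | supp φ x ⊆ ρ}
  have hS : IsClosed S := by
    have : S = ⋂ i : Fin N, ⋂ _ : i ∉ ρ, {x | φ i x = 0} := by
      ext x
      simp only [Set.mem_iInter]
      constructor
      · intro h i hi
        by_contra hn
        exact hi (h (mem_supp.2 hn))
      · intro h i hi
        by_contra hn
        exact mem_supp.1 hi (h i hn)
    rw [this]
    exact isClosed_iInter fun i => isClosed_iInter fun _ => isClosed_eq (hc i) continuous_const
  let C : Set X := {x | ∃ i ∈ ρ, φ i x = 0}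
  have hC : IsClosed C := by
    have : C = ⋃ i ∈ ρ, {x | φ i x = 0} := by
      ext x; simp [C]
    rw [this]
    exact ρ.finite_toSet.isClosed_biUnion fun i _ => isClosed_eq (hc i) continuous_const
  let g := ρ.orderEmbOfFin hρ
  have hgs : ∀ i ∈ ρ, ∃ j, g j = i := fun i hi => by
    have : i ∈ Set.range g := by rw [Finset.range_orderEmbOfFin]; exact hi
    exact this
  have hgm : ∀ j, g j ∈ ρ := fun j => Finset.orderEmbOfFin_mem _ _ _
  obtain ⟨ψ, hψc, hψ⟩ := hX S hS (fun x j => φ (g j) x / T x)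
    (continuous_pi fun j => ((hc _).comp continuous_subtype_val).div (hTc.comp continuous_subtype_val)
      fun x => (hT x).ne')
    (fun x => ⟨fun j => div_nonneg (h0 _ _) (hT x).le, by
      rw [← Finset.sum_div, div_eq_one_iff_eq (hT x).ne']
      show _ = ∑ i, φ i x
      rw [← Finset.sum_subset (Finset.subset_univ ρ) (fun i _ hi => by
        by_contra hn
        exact hi (x.2 (mem_supp.2 hn)))]
      conv_rhs => rw [← Finset.map_orderEmbOfFin_univ ρ hρ]
      rw [Finset.sum_map]
      rfl⟩)
  let f1 : X → Fin N → ℝ := fun x i => if h : x ∈ S ∧ i ∈ ρ then ψ ⟨x, h.1⟩ ((ρ.orderIsoOfFin hρ).symm ⟨i, h.2⟩) else 0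
  have hf1g : ∀ x (hx : x ∈ S) j, f1 x (g j) = ψ ⟨x, hx⟩ j := by
    intro x hx j
    simp only [f1]
    rw [dif_pos ⟨hx, hgm j⟩]
    congr 1
    rw [OrderIso.symm_apply_eq]
    exact Subtype.ext rfl
  have hf1n : ∀ x i, i ∉ ρ → f1 x i = 0 := fun x i hi => dif_neg fun h => hi h.2
  have hf1c : ContinuousOn f1 S := by
    rw [continuousOn_iff_continuous_domRestrict]
    refine continuous_pi fun i => ?_
    by_cases hi : i ∈ ρ
    · obtain ⟨j, rfl⟩ := hgs i hi
      have : (fun x : S => S.domRestrict f1 x (g j)) = fun x => ψ x j := by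
        funext x; exact hf1g x x.2 j
      rw [this]
      exact (continuous_apply j).comp hψc
    · have : (fun x : S => S.domRestrict f1 x i) = fun x => 0 := by
        funext x; exact hf1n x i hi
      rw [this]; exact continuous_const
  let f2 : X → Fin N → ℝ := fun x i => φ i x / T x
  have hf2c : Continuous f2 := continuous_pi fun i => (hc i).div hTc fun x => (hT x).ne'
  have hag : ∀ x ∈ S, x ∈ C → f1 x = f2 x := by
    rintro x hx ⟨i, hi, hi0⟩
    obtain ⟨j, rfl⟩ := hgs i hi
    have := (hψ ⟨x, hx⟩).2.2.2 ⟨j, by simp [hi0]⟩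
    funext i
    by_cases hi : i ∈ ρ
    · obtain ⟨j, rfl⟩ := hgs i hi
      rw [hf1g x hx, this]
    · rw [hf1n x i hi]
      have : φ i x = 0 := by
        by_contra hn; exact hi (hx (mem_supp.2 hn))
      simp [f2, this]
  have hcov : ∀ x, x ∈ S ∨ x ∈ C := by
    intro x
    by_cases h : x ∈ C
    · exact Or.inr h
    · left
      have hsub : ρ ⊆ supp φ x := fun i hi => mem_supp.2 fun h' => h ⟨i, hi, h'⟩
      have := Finset.eq_of_subset_of_card_le hsub (by rw [hρ]; exact hcard x)
      show supp φ x ⊆ ρ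
      rw [← this]
  obtain ⟨F, hF1, hF2⟩ := glue_closed (ι := Bool) (fun b => if b then S else C) (fun b => if b then f1 else f2)
    (by rintro (_ | _) <;> simpa) (by rintro (_ | _); · simpa using hf2c.continuousOn
                                      · simpa using hf1c)
    (by rintro (_ | _) (_ | _) x hx hx'
        · rfl
        · simpa using (hag x (by simpa using hx') (by simpa using hx)).symm
        · simpa using hag x (by simpa using hx) (by simpa using hx')
        · rfl)
  have hu : (⋃ b : Bool, if b then S else C) = Set.univ := by
    refine Set.eq_univ_of_forall fun x => Set.mem_iUnion.2 ?_
    rcases hcov x with h | h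
    · exact ⟨true, by simpa using h⟩
    · exact ⟨false, by simpa using h⟩
  rw [hu, continuousOn_univ] at hF1
  have hFS : ∀ x ∈ S, F x = f1 x := fun x hx => by simpa using hF2 true x (by simpa using hx)
  have hFC : ∀ x ∈ C, F x = f2 x := fun x hx => by simpa using hF2 false x (by simpa using hx)
  have hSC : ∀ x, x ∉ C → x ∈ S := fun x hx => (hcov x).resolve_right hx
  refine ⟨fun i x => F x i, fun i => (continuous_apply i).comp hF1, fun i x => ?_, fun x => ?_, fun x i hi => ?_, fun x => ?_⟩
  · beta_reduce
    by_cases hx : x ∈ C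
    · rw [hFC x hx]; exact div_nonneg (h0 _ _) (hT x).le
    · rw [hFS x (hSC x hx)]
      by_cases hi : i ∈ ρ
      · obtain ⟨j, rfl⟩ := hgs i hi
        rw [hf1g x (hSC x hx)]
        exact (hψ _).1 j
      · rw [hf1n x i hi]
  · by_cases hx : x ∈ C
    · obtain ⟨i, hi⟩ := h1 x
      exact ⟨i, by beta_reduce; rw [hFC x hx]; exact div_pos hi (hT x)⟩
    · obtain ⟨j, hj⟩ := (hψ ⟨x, hSC x hx⟩).2.2.1
      exact ⟨g j, by beta_reduce; rw [hFS x (hSC x hx), hf1g x (hSC x hx)]; exact hj⟩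
  · rw [mem_supp] at hi ⊢
    by_cases hx : x ∈ C
    · intro h
      apply hi
      beta_reduce
      rw [hFC x hx]
      simp [f2, h]
    · intro h
      apply hi
      beta_reduce
      rw [hFS x (hSC x hx), hf1n]
      intro hi'
      exact hx ⟨i, hi', h⟩
  · intro he
    by_cases hx : x ∈ C
    · obtain ⟨i, hi, hi'⟩ := hx
      rw [← he, mem_supp] at hi
      apply hi
      beta_reduce
      rw [hFC x ⟨i, he ▸ mem_supp.2 hi, hi'⟩]
      simp [f2, hi']
    · obtain ⟨j, hj⟩ := (hψ ⟨x, hSC x hx⟩).2.1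
      have := hgm j
      rw [← he, mem_supp] at this
      apply this
      beta_reduce
      rw [hFS x (hSC x hx), hf1g x (hSC x hx)]; exact hj

theorem exists_nonExt {X : Type*} [MetricSpace X] {k : ℕ} (h2 : FD (k + 2) X) (h1 : ¬ FD (k + 1) X) :
    ∃ S : Set X, IsClosed S ∧ ∃ φ : S → Fin (k + 3) → ℝ, Continuous φ ∧
      (∀ x, φ x ∈ stdSimplex ℝ (Fin (k + 3))) ∧ ¬ Ext (n := k + 2) φ := by
  classical
  by_contra hcon
  push Not at hcon
  apply h1
  intro δ hδ
  obtain ⟨N, U, hUo, hUc, hUd, hUn⟩ := h2 δ hδ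
  have main : ∀ (n : ℕ) (φ : Fin N → X → ℝ), (∀ i, Continuous (φ i)) → (∀ i x, 0 ≤ φ i x) →
      (∀ x, ∃ i, 0 < φ i x) → (∀ x, (supp φ x).card ≤ k + 3) →
      (Finset.univ.filter fun ρ : Finset (Fin N) => ρ.card = k + 3 ∧ ∃ x, supp φ x = ρ).card ≤ n →
      ∃ φ' : Fin N → X → ℝ, (∀ i, Continuous (φ' i)) ∧ (∀ i x, 0 ≤ φ' i x) ∧ (∀ x, ∃ i, 0 < φ' i x) ∧
        (∀ x, supp φ' x ⊆ supp φ x) ∧ ∀ x, (supp φ' x).card ≤ k + 2 := by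
    intro n
    induction n with
    | zero =>
      intro φ a b c d e
      refine ⟨φ, a, b, c, fun x => Finset.Subset.refl _, fun x => ?_⟩
      by_contra hx
      have hx' : (supp φ x).card = k + 3 := by have := d x; omega
      have : supp φ x ∈ (Finset.univ.filter fun ρ : Finset (Fin N) => ρ.card = k + 3 ∧ ∃ x, supp φ x = ρ) :=
        Finset.mem_filter.2 ⟨Finset.mem_univ _, hx', x, rfl⟩
      rw [Nat.le_zero, Finset.card_eq_zero] at e
      rw [e] at this
      simp at this
    | succ n ih =>
      intro φ a b c d e
      by_cases hb : ∃ ρ : Finset (Fin N), ρ.card = k + 3 ∧ ∃ x, supp φ x = ρ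
      · obtain ⟨ρ, hρ, hρ'⟩ := hb
        obtain ⟨φ1, a1, b1, c1, s1, t1⟩ := reduce_bad hcon φ a b c d ρ hρ
        obtain ⟨φ2, a2, b2, c2, s2, t2⟩ := ih φ1 a1 b1 c1
          (fun x => (Finset.card_le_card (s1 x)).trans (d x)) (by
            refine Nat.le_of_lt_succ (lt_of_lt_of_le (Finset.card_lt_card ?_) e)
            refine Finset.ssubset_iff_of_subset ?_ |>.2 ?_
            · intro σ hσ
              obtain ⟨-, hσ1, x, hx⟩ := Finset.mem_filter.1 hσ
              refine Finset.mem_filter.2 ⟨Finset.mem_univ _, hσ1, x, ?_⟩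
              rw [← hx]
              refine (Finset.eq_of_subset_of_card_le (s1 x) ?_).symm
              rw [hx, hσ1]; exact d x
            · refine ⟨ρ, Finset.mem_filter.2 ⟨Finset.mem_univ _, hρ, hρ'⟩, fun h => ?_⟩
              obtain ⟨-, -, x, hx⟩ := Finset.mem_filter.1 h
              exact t1 x hx)
        exact ⟨φ2, a2, b2, c2, fun x => (s2 x).trans (s1 x), t2⟩
      · refine ih φ a b c d ?_
        rw [Finset.filter_false_of_mem]
        · simp
        · intro ρ _ h
          exact hb ⟨ρ, h⟩
  obtain ⟨θ, hθc, hθ0, hθ1, hθU⟩ := pou U hUo hUc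
  obtain ⟨φ, a, b, c, s, t⟩ := main _ θ hθc hθ0 (fun x => by
    by_contra h
    push Not at h
    have := Finset.sum_nonpos (s := Finset.univ) (fun i _ => h i)
    rw [hθ1] at this
    linarith) (fun x => hUn x _ fun i hi => hθU i x (mem_supp.1 hi)) le_rfl
  refine ⟨N, fun i => {x | φ i x ≠ 0}, fun i => isOpen_ne_fun (a i) continuous_const, fun x => ?_, ?_, ?_⟩
  · obtain ⟨i, hi⟩ := c x
    exact ⟨i, hi.ne'⟩
  · intro i x hx y hy
    have key : ∀ x, φ i x ≠ 0 → x ∈ U i := fun x hx => hθU i x (mem_supp.1 (s x (mem_supp.2 hx)))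
    exact hUd i x (key x hx) y (key y hy)
  · intro x r hr
    exact (Finset.card_le_card fun i hi => mem_supp.2 (hr i hi)).trans (t x)

theorem FD.sub {X : Type*} [MetricSpace X] {m : ℕ} (h : FD m X) (S : Set X) : FD m S := by
  intro δ hδ
  obtain ⟨N, U, hUo, hUc, hUd, hUn⟩ := h δ hδ
  exact ⟨N, fun i => Subtype.val ⁻¹' U i, fun i => (hUo i).preimage continuous_subtype_val,
    fun x => hUc x, fun i x hx y hy => hUd i x hx y hy, fun x s hs => hUn x s hs⟩

end MDP

namespace MDP
open MeanDimPaper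

theorem ord_le {X : Type*} [TopologicalSpace X] {α : Set (Set X)} {m : ℕ} :
    ord α ≤ (m : ℕ∞) ↔ ∀ s : Finset (Set X), (↑s : Set (Set X)) ⊆ α → ∀ x, (∀ V ∈ s, x ∈ V) → s.card ≤ m + 1 := by
  classical
  constructor
  · intro h s hs x hx
    rcases Nat.eq_zero_or_pos s.card with h0 | h0
    · omega
    · obtain ⟨c, hc⟩ : ∃ c, s.card = c + 1 := ⟨s.card - 1, by omega⟩
      have : (c : ℕ∞) ≤ ord α := by
        refine le_iSup₂_of_le (f := fun (n : ℕ) (_ : n ∈ {n : ℕ | ∃ f : Fin (n + 1) → Set X,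
          Function.Injective f ∧ (∀ i, f i ∈ α) ∧ (⋂ i, f i).Nonempty}) => (n : ℕ∞)) c ?_ le_rfl
        refine ⟨fun i => ((s.equivFinOfCardEq hc).symm i).1, ?_, ?_, x, ?_⟩
        · exact Subtype.val_injective.comp (Equiv.injective _)
        · intro i; exact hs ((s.equivFinOfCardEq hc).symm i).2
        · exact Set.mem_iInter.2 fun i => hx _ ((s.equivFinOfCardEq hc).symm i).2
      have := this.trans h
      have := Nat.cast_le.1 this
      omega
  · intro h
    refine iSup₂_le ?_
    rintro n ⟨f, hf, hfα, x, hx⟩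
    have := h (Finset.univ.image f) (by
      intro V hV
      simp only [Finset.coe_image, Finset.coe_univ, Set.image_univ, Set.mem_range] at hV
      obtain ⟨i, rfl⟩ := hV
      exact hfα i) x (by
      intro V hV
      obtain ⟨i, -, rfl⟩ := Finset.mem_image.1 hV
      exact Set.mem_iInter.1 hx i)
    rw [Finset.card_image_of_injective _ hf, Finset.card_univ, Fintype.card_fin] at this
    exact Nat.cast_le.2 (by omega)

theorem biInf_le_nat {ι : Type*} {p : ι → Prop} {f : ι → ℕ∞} {m : ℕ} (h : ⨅ i, ⨅ _ : p i, f i ≤ (m : ℕ∞)) :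
    ∃ i, p i ∧ f i ≤ m := by
  by_contra hn
  push Not at hn
  have : ((m + 1 : ℕ) : ℕ∞) ≤ ⨅ i, ⨅ _ : p i, f i := by
    refine le_iInf₂ fun i hi => ?_
    have := Order.add_one_le_of_lt (hn i hi)
    exact_mod_cast this
  have := Nat.cast_le.1 (this.trans h)
  omega

theorem covD_le {X : Type*} [TopologicalSpace X] {α : Set (Set X)} {m : ℕ} (h : covD α ≤ (m : ℕ∞)) :
    ∃ β, IsOpenCover β ∧ Refines β α ∧ ord β ≤ m := by
  obtain ⟨β, h1, h2⟩ := biInf_le_nat h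
  exact ⟨β, h1.1, h1.2, h2⟩

theorem FD_of_topDim {X : Type*} [MetricSpace X] [CompactSpace X] {m : ℕ} (h : topDim X ≤ (m : ℕ∞)) : FD m X := by
  classical
  intro δ hδ
  have hα : IsOpenCover (Set.range fun x : X => Metric.ball x (δ / 2)) := by
    constructor
    · rintro _ ⟨x, rfl⟩; exact Metric.isOpen_ball
    · refine Set.eq_univ_of_forall fun x => ⟨_, ⟨x, rfl⟩, Metric.mem_ball_self (by positivity)⟩
  obtain ⟨β, hβ, hr, ho⟩ := covD_le ((le_iSup₂ (f := fun (α : Set (Set X)) (_ : α ∈ {α : Set (Set X) | IsOpenCover α}) => covD α) _ hα).trans h)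
  rw [ord_le] at ho
  obtain ⟨t, ht⟩ := isCompact_univ.elim_finite_subcover (fun V : β => V.1) (fun V => hβ.1 _ V.2)
    (by rw [← hβ.2, Set.sUnion_eq_iUnion])
  refine ⟨t.card, fun i => (t.equivFin.symm i).1.1, fun i => hβ.1 _ (t.equivFin.symm i).1.2, fun x => ?_, ?_, ?_⟩
  · obtain ⟨V, hV⟩ := Set.mem_iUnion.1 (ht (Set.mem_univ x))
    obtain ⟨hVt, hx⟩ := Set.mem_iUnion.1 hV
    exact ⟨t.equivFin ⟨V, hVt⟩, by simpa using hx⟩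
  · intro i x hx y hy
    obtain ⟨_, ⟨z, rfl⟩, hz⟩ := hr _ (t.equivFin.symm i).1.2
    have h1 := Metric.mem_ball.1 (hz hx)
    have h2 := Metric.mem_ball.1 (hz hy)
    have := dist_triangle_right x y z
    linarith
  · intro x s hs
    have hinj : Function.Injective (fun i : Fin t.card => (t.equivFin.symm i).1.1) :=
      Subtype.val_injective.comp (Subtype.val_injective.comp (Equiv.injective _))
    have := ho (s.image fun i : Fin t.card => (t.equivFin.symm i).1.1) (by
      intro V hV
      obtain ⟨i, -, rfl⟩ := Finset.mem_image.1 (Finset.mem_coe.1 hV)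
      exact (t.equivFin.symm i).1.2) x (by
      intro V hV
      obtain ⟨i, hi, rfl⟩ := Finset.mem_image.1 hV
      exact hs i hi)
    rwa [Finset.card_image_of_injective _ hinj] at this

theorem topDim_le_of {X : Type*} [MetricSpace X] [CompactSpace X] {m : ℕ}
    (h : ∀ δ > 0, ∃ β : Set (Set X), IsOpenCover β ∧ ord β ≤ (m : ℕ∞) ∧ ∀ V ∈ β, V.Nonempty ∧ ∀ x ∈ V, ∀ y ∈ V, dist x y < δ) :
    topDim X ≤ (m : ℕ∞) := by
  refine iSup₂_le fun α hα => ?_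
  obtain ⟨δ, hδ, hL⟩ := lebesgue_number_lemma_of_metric_sUnion isCompact_univ hα.1 (by rw [hα.2])
  obtain ⟨β, hβ, ho, hd⟩ := h δ hδ
  refine (iInf₂_le β ⟨hβ, fun V hV => ?_⟩).trans ho
  obtain ⟨⟨x, hx⟩, hV2⟩ := hd V hV
  obtain ⟨U, hU, hb⟩ := hL x (Set.mem_univ x)
  exact ⟨U, hU, fun y hy => hb (Metric.mem_ball.2 (hV2 y hy x hx))⟩

theorem ostrand {X Z : Type*} [MetricSpace X] [TopologicalSpace Z] {m k : ℕ} (hX : FD m X)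
    (π : Fin k → Z → X) (hπ : ∀ j, Continuous (π j)) {δ : ℝ} (hδ : 0 < δ) :
    ∃ β : Set (Set Z), IsOpenCover β ∧ ord β ≤ ((k * m : ℕ) : ℕ∞) ∧
      ∀ V ∈ β, V.Nonempty ∧ ∀ x ∈ V, ∀ y ∈ V, ∀ j, dist (π j x) (π j y) < δ := by
  classical
  obtain ⟨N, U, hUo, hUc, hUd, hUn⟩ := hX δ hδ
  obtain ⟨θ, hθc, hθ0, hθ1, hθU⟩ := pou U hUo hUc
  let L := k * m + 1
  let t : Fin L → ℝ := fun i => ((i : ℕ) + 1 : ℝ) / ((L + 1 : ℝ) * (m + 1))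
  have ht0 : ∀ i, 0 < t i := fun i => by simp only [t]; positivity
  have ht1 : ∀ i, t i < 1 / (m + 1) := fun i => by
    simp only [t]
    rw [div_lt_div_iff₀ (by positivity) (by positivity), one_mul]
    have : ((i : ℕ) : ℝ) + 1 < L + 1 := by
      have := i.2
      have : ((i : ℕ) : ℝ) < (L : ℝ) := by exact_mod_cast this
      linarith
    exact mul_lt_mul_of_pos_right this (by positivity)
  have htinj : ∀ i j, t i = t j → i = j := fun i j h => by
    simp only [t] at h
    rw [div_left_inj' (by positivity)] at h
    have : ((i : ℕ) : ℝ) = (j : ℕ) := by linarith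
    exact Fin.ext (by exact_mod_cast this)
  have hbig : ∀ x, ∃ s, 1 / ((m : ℝ) + 1) ≤ θ s x := by
    intro x
    by_contra hn
    push Not at hn
    have hcard : (supp θ x).card ≤ m + 1 := hUn x _ fun i hi => hθU i x (mem_supp.1 hi)
    have hsum : ∑ i ∈ supp θ x, θ i x = 1 := by
      rw [← hθ1 x]
      refine Finset.sum_subset (Finset.subset_univ _) fun i _ hi => ?_
      by_contra h; exact hi (mem_supp.2 h)
    have hne : (supp θ x).Nonempty := by
      by_contra h
      rw [Finset.not_nonempty_iff_eq_empty] at h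
      rw [h] at hsum; simp at hsum
    have h1 := Finset.sum_lt_sum_of_nonempty hne (fun i _ => hn i)
    rw [hsum, Finset.sum_const, nsmul_eq_mul] at h1
    have h2 : ((supp θ x).card : ℝ) ≤ m + 1 := by exact_mod_cast hcard
    have h3 : ((supp θ x).card : ℝ) * (1 / ((m : ℝ) + 1)) ≤ (m + 1) * (1 / ((m : ℝ) + 1)) :=
      mul_le_mul_of_nonneg_right h2 (by positivity)
    rw [mul_one_div_cancel (by positivity)] at h3
    linarith
  let bad : X → Finset (Fin L) := fun x => Finset.univ.filter fun i => ∃ s, θ s x = t i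
  have hbad : ∀ x, (bad x).card ≤ m := by
    intro x
    obtain ⟨s0, hs0⟩ := hbig x
    have hcard : (supp θ x).card ≤ m + 1 := hUn x _ fun i hi => hθU i x (mem_supp.1 hi)
    have hs0m : s0 ∈ supp θ x := mem_supp.2 (lt_of_lt_of_le (by positivity) hs0).ne'
    have hch : ∀ i, ∃ s, i ∈ bad x → θ s x = t i := fun i => by
      by_cases hi : i ∈ bad x
      · obtain ⟨s, hs⟩ := (Finset.mem_filter.1 hi).2
        exact ⟨s, fun _ => hs⟩
      · exact ⟨s0, fun h => absurd h hi⟩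
    choose g hg using hch
    have : (bad x).card ≤ ((supp θ x).erase s0).card := by
      refine Finset.card_le_card_of_injOn g ?_ ?_
      · intro i hi
        have hgi := hg i hi
        refine Finset.mem_coe.2 (Finset.mem_erase.2 ⟨?_, mem_supp.2 ?_⟩)
        · intro h
          rw [h] at hgi
          have := ht1 i
          linarith
        · rw [hgi]; exact (ht0 i).ne'
      · intro i hi j hj hij
        exact htinj i j (by rw [← hg i hi, ← hg j hj, hij])
    rw [Finset.card_erase_of_mem hs0m] at this
    omega
  let A : Fin L → Finset (Fin N) → Set X := fun i S => {x | ∀ s, if s ∈ S then t i < θ s x else θ s x < t i}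
  have hAo : ∀ i S, IsOpen (A i S) := by
    intro i S
    have : A i S = ⋂ s, {x | if s ∈ S then t i < θ s x else θ s x < t i} := by
      ext x; simp [A]
    rw [this]
    refine isOpen_iInter_of_finite fun s => ?_
    by_cases hs : s ∈ S
    · simp only [hs, if_true]; exact isOpen_lt continuous_const (hθc s)
    · simp only [hs, if_false]; exact isOpen_lt (hθc s) continuous_const
  have hAuniq : ∀ i S S' x, x ∈ A i S → x ∈ A i S' → S = S' := by
    intro i S S' x h h'
    ext s
    have h1 := h s
    have h2 := h' s
    by_cases hs : s ∈ S <;> by_cases hs' : s ∈ S' <;> simp only [hs, hs', if_true, if_false] at h1 h2 ⊢ <;> linarith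
  have hAd : ∀ i S x y, x ∈ A i S → y ∈ A i S → dist x y < δ := by
    intro i S x y hx hy
    obtain ⟨s, hs⟩ := hbig x
    have hsS : s ∈ S := by
      by_contra h
      have := hx s
      rw [if_neg h] at this
      have := ht1 i
      linarith
    have h1 := hx s
    have h2 := hy s
    rw [if_pos hsS] at h1 h2
    exact hUd s x (hθU s x ((ht0 i).trans h1).ne') y (hθU s y ((ht0 i).trans h2).ne')
  have hAc : ∀ i x, i ∉ bad x → ∃ S, x ∈ A i S := by
    intro i x hi
    refine ⟨Finset.univ.filter fun s => t i < θ s x, fun s => ?_⟩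
    by_cases hs : t i < θ s x
    · simp [hs]
    · simp only [Finset.mem_filter, Finset.mem_univ, true_and, hs, if_false]
      refine lt_of_le_of_ne (not_lt.1 hs) fun h => hi (Finset.mem_filter.2 ⟨Finset.mem_univ _, s, h⟩)
  let W : Fin L × (Fin k → Finset (Fin N)) → Set Z := fun p => {z | ∀ j, π j z ∈ A p.1 (p.2 j)}
  refine ⟨{V | V.Nonempty ∧ ∃ p, V = W p}, ⟨?_, ?_⟩, ?_, ?_⟩
  · rintro V ⟨-, p, rfl⟩
    have : W p = ⋂ j, (π j) ⁻¹' A p.1 (p.2 j) := by ext z; simp [W]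
    rw [this]
    exact isOpen_iInter_of_finite fun j => (hAo _ _).preimage (hπ j)
  · refine Set.eq_univ_of_forall fun z => ?_
    have hB : (Finset.univ.biUnion fun j => bad (π j z)).card < (Finset.univ : Finset (Fin L)).card := by
      refine lt_of_le_of_lt (Finset.card_biUnion_le_card_mul _ _ m fun j _ => hbad _) ?_
      simp [L]
    obtain ⟨i, -, hi⟩ := Finset.exists_mem_notMem_of_card_lt_card hB
    have : ∀ j, ∃ S, π j z ∈ A i S := fun j => hAc i _ fun h =>
      hi (Finset.mem_biUnion.2 ⟨j, Finset.mem_univ _, h⟩)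
    choose S hS using this
    exact ⟨W (i, S), ⟨⟨z, hS⟩, _, rfl⟩, hS⟩
  · rw [ord_le]
    intro s hs z hz
    have hch : ∀ V, ∃ p, V ∈ s → V = W p := fun V => by
      by_cases hV : V ∈ s
      · obtain ⟨-, p, hp⟩ := hs hV
        exact ⟨p, fun _ => hp⟩
      · exact ⟨(⟨0, Nat.succ_pos _⟩, fun _ => ∅), fun h => absurd h hV⟩
    choose g hg using hch
    have : s.card ≤ (Finset.univ : Finset (Fin L)).card := by
      refine Finset.card_le_card_of_injOn (fun V => (g V).1) (fun _ _ => Finset.mem_coe.2 (Finset.mem_univ _)) ?_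
      intro V hV V' hV' h
      have h1 := hz V hV
      have h2 := hz V' hV'
      rw [hg V hV] at h1
      rw [hg V' hV'] at h2
      rw [hg V hV, hg V' hV']
      congr 1
      refine Prod.ext h (funext fun j => ?_)
      have h2j := h2 j
      have h' : (g V).1 = (g V').1 := h
      rw [← h'] at h2j
      exact hAuniq _ _ _ _ (h1 j) h2j
    simpa [L] using this
  · rintro V ⟨hne, p, rfl⟩
    exact ⟨hne, fun x hx y hy j => hAd _ _ _ _ (hx j) (hy j)⟩

theorem topDim_le_of_FD {X : Type*} [MetricSpace X] [CompactSpace X] {m : ℕ} (h : FD m X) : topDim X ≤ (m : ℕ∞) := by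
  refine topDim_le_of fun δ hδ => ?_
  obtain ⟨β, h1, h2, h3⟩ := ostrand (k := 1) h (fun _ => id) (fun _ => continuous_id) hδ
  exact ⟨β, h1, by simpa using h2, fun V hV => ⟨(h3 V hV).1, fun x hx y hy => (h3 V hV).2 x hx y hy 0⟩⟩

theorem topDim_pi_le {X : Type*} [MetricSpace X] [CompactSpace X] {m n : ℕ} (h : FD m X) :
    topDim (Fin n → X) ≤ ((n * m : ℕ) : ℕ∞) := by
  refine topDim_le_of fun δ hδ => ?_
  obtain ⟨β, h1, h2, h3⟩ := ostrand (k := n) h (fun j (z : Fin n → X) => z j) (fun j => continuous_apply j) hδ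
  exact ⟨β, h1, h2, fun V hV => ⟨(h3 V hV).1, fun x hx y hy => (dist_pi_lt_iff hδ).2 ((h3 V hV).2 x hx y hy)⟩⟩

end MDP

namespace MDP
open MeanDimPaper

section metr
variable {K : Type*} [MetricSpace K] [CompactSpace K] {d : (ℤ → K) → (ℤ → K) → ℝ}

theorem d_cont {Z : Type*} [τ : TopologicalSpace Z] {d : Z → Z → ℝ} (hd : IsCompatMetric d) :
    Continuous fun p : Z × Z => d p.1 p.2 := by
  let inst : PseudoMetricSpace Z := PseudoMetricSpace.ofDistTopology d hd.refl hd.symm hd.triangle hd.isOpen_iff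
  exact continuous_dist (α := Z)

theorem d_nonneg {Z : Type*} [TopologicalSpace Z] {d : Z → Z → ℝ} (hd : IsCompatMetric d) (x y : Z) : 0 ≤ d x y := by
  have h1 := hd.triangle x y x
  rw [hd.refl, hd.symm y x] at h1
  linarith

theorem d_bdd {Z : Type*} [TopologicalSpace Z] [CompactSpace Z] {d : Z → Z → ℝ} (hd : IsCompatMetric d) :
    ∃ C, ∀ x y, d x y ≤ C := by
  obtain ⟨C, hC⟩ := (isCompact_range (d_cont hd)).bddAbove
  exact ⟨C, fun x y => hC ⟨(x, y), rfl⟩⟩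

theorem coord_of_d (hd : IsCompatMetric d) {η : ℝ} (hη : 0 < η) :
    ∃ ε > 0, ∀ x y, d x y < ε → dist (x 0) (y 0) < η := by
  let E : Set ((ℤ → K) × (ℤ → K)) := {p | η ≤ dist (p.1 0) (p.2 0)}
  have hE : IsCompact E := by
    refine IsClosed.isCompact (isClosed_le continuous_const ?_)
    exact (((continuous_apply 0).comp continuous_fst)).dist ((continuous_apply 0).comp continuous_snd)
  rcases E.eq_empty_or_nonempty with h | h
  · refine ⟨1, one_pos, fun x y _ => ?_⟩
    by_contra hn
    have : (x, y) ∈ E := not_lt.1 hn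
    rw [h] at this
    exact this
  · obtain ⟨p, hp, hmin⟩ := hE.exists_isMinOn h (d_cont hd).continuousOn
    refine ⟨d p.1 p.2, lt_of_le_of_ne (d_nonneg hd _ _) fun h0 => ?_, fun x y hxy => ?_⟩
    · have := hd.eq_of _ _ h0.symm
      have hp' : η ≤ dist (p.1 0) (p.2 0) := hp
      rw [this, dist_self] at hp'
      linarith
    · by_contra hn
      have : (x, y) ∈ E := not_lt.1 hn
      have := isMinOn_iff.1 hmin _ this
      exact absurd hxy (not_lt.2 this)

theorem d_of_coord (hd : IsCompatMetric d) {ε : ℝ} (hε : 0 < ε) :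
    ∃ M : ℕ, ∃ δ > 0, ∀ x y : ℤ → K, (∀ i : ℤ, |i| ≤ M → dist (x i) (y i) < δ) → d x y < ε := by
  classical
  have huc := CompactSpace.uniformContinuous_of_continuous (d_cont hd)
  have hmem : {p : (ℤ → K) × (ℤ → K) | d p.1 p.2 < ε} ∈ uniformity (ℤ → K) := by
    have h2 : Tendsto (fun p : (ℤ → K) × (ℤ → K) => ((p.1, p.1), (p.1, p.2)))
        (uniformity (ℤ → K)) (uniformity ((ℤ → K) × (ℤ → K))) := by
      rw [uniformity_prod]
      refine tendsto_inf.2 ⟨tendsto_comap_iff.2 ?_, tendsto_comap_iff.2 ?_⟩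
      · exact tendsto_diag_uniformity _ _
      · exact tendsto_id
    have h3 := Tendsto.comp huc h2
    have h4 := h3 (Metric.dist_mem_uniformity hε)
    refine Filter.mem_of_superset h4 fun p hp => ?_
    have hp' : dist (d p.1 p.1) (d p.1 p.2) < ε := hp
    rw [hd.refl, Real.dist_eq] at hp'
    have := (abs_lt.1 hp').1
    show d p.1 p.2 < ε
    linarith
  rw [Pi.uniformity, Filter.mem_iInf'] at hmem
  obtain ⟨I, hI, V, hV, -, hs, -⟩ := hmem
  have hch : ∀ i, ∃ δ > 0, ∀ p : (ℤ → K) × (ℤ → K), dist (p.1 i) (p.2 i) < δ → p ∈ V i := by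
    intro i
    obtain ⟨t, ht, hts⟩ := Filter.mem_comap.1 (hV i)
    obtain ⟨δ, hδ, h⟩ := Metric.mem_uniformity_dist.1 ht
    exact ⟨δ, hδ, fun p hp => hts (h hp)⟩
  choose δ hδ hδV using hch
  obtain ⟨δ0, hδ0, hle⟩ : ∃ δ0 > 0, ∀ i ∈ hI.toFinset, δ0 ≤ δ i := by
    generalize hI.toFinset = J
    induction J using Finset.induction_on with
    | empty => exact ⟨1, one_pos, by simp⟩
    | insert a J _ ih =>
      obtain ⟨e, he, h⟩ := ih
      refine ⟨min e (δ a), lt_min he (hδ a), fun i hi => ?_⟩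
      rcases Finset.mem_insert.1 hi with rfl | hi
      · exact min_le_right _ _
      · exact (min_le_left _ _).trans (h i hi)
  refine ⟨hI.toFinset.sup Int.natAbs, δ0, hδ0, fun x y h => ?_⟩
  have : (x, y) ∈ ⋂ i ∈ I, V i := by
    refine Set.mem_iInter₂.2 fun i hi => hδV i _ ?_
    have hi' := hI.mem_toFinset.2 hi
    refine lt_of_lt_of_le (h i ?_) (hle i hi')
    have := Finset.le_sup (f := Int.natAbs) hi'
    rw [Int.abs_eq_natAbs]
    exact_mod_cast this
  rw [← hs] at this
  exact this

end metr

section dyn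
variable {Z : Type*} [TopologicalSpace Z] {d : Z → Z → ℝ} {T : Z → Z}

theorem le_dynDist {N i : ℕ} (hi : i < N) (x y : Z) : d (T^[i] x) (T^[i] y) ≤ dynDist d T N x y := by
  refine le_csSup ?_ ⟨i, hi, rfl⟩
  have : {r | ∃ i < N, r = d (T^[i] x) (T^[i] y)} = (fun i => d (T^[i] x) (T^[i] y)) '' Set.Iio N := by
    ext r
    constructor
    · rintro ⟨i, hi, rfl⟩; exact ⟨i, hi, rfl⟩
    · rintro ⟨i, hi, rfl⟩; exact ⟨i, hi, rfl⟩
  rw [this]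
  exact ((Set.finite_Iio N).image _).bddAbove

theorem dynDist_le {N : ℕ} {x y : Z} {r : ℝ} (hr : 0 ≤ r) (h : ∀ i < N, d (T^[i] x) (T^[i] y) ≤ r) :
    dynDist d T N x y ≤ r := by
  refine Real.sSup_le ?_ hr
  rintro _ ⟨i, hi, rfl⟩
  exact h i hi

theorem mesh_le {α : Set (Set Z)} {r : ℝ} (hr : 0 ≤ r) (h : ∀ V ∈ α, ∀ x ∈ V, ∀ y ∈ V, d x y ≤ r) : mesh d α ≤ r := by
  refine Real.sSup_le ?_ hr
  rintro _ ⟨V, hV, rfl⟩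
  refine Real.sSup_le ?_ hr
  rintro _ ⟨x, hx, y, hy, rfl⟩
  exact h V hV x hx y hy

theorem lt_of_mesh {α : Set (Set Z)} {C ε : ℝ} (hC : 0 ≤ C) (hb : ∀ x y, d x y ≤ C) (hm : mesh d α < ε)
    {V : Set Z} (hV : V ∈ α) {x y : Z} (hx : x ∈ V) (hy : y ∈ V) : d x y < ε := by
  refine lt_of_le_of_lt ?_ hm
  have h1 : d x y ≤ diamD d V := by
    refine le_csSup ⟨C, ?_⟩ ⟨x, hx, y, hy, rfl⟩
    rintro _ ⟨x, -, y, -, rfl⟩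
    exact hb x y
  refine h1.trans (le_csSup ⟨C, ?_⟩ ⟨V, hV, rfl⟩)
  rintro _ ⟨V, hV, rfl⟩
  refine Real.sSup_le ?_ hC
  rintro _ ⟨x, -, y, -, rfl⟩
  exact hb x y

theorem widim_le {ε : ℝ} {m : ℕ} {β : Set (Set Z)} (hβ : IsOpenCover β) (hm : mesh d β < ε) (ho : ord β ≤ (m : ℕ∞)) :
    widim ε d ≤ (m : ℕ∞) := by
  refine (iInf₂_le β ⟨hβ, hm⟩).trans ((iInf₂_le β ⟨hβ, fun V hV => ⟨V, hV, subset_rfl⟩⟩).trans ho)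

theorem of_widim_le {ε : ℝ} {m : ℕ} {C : ℝ} (hC : 0 ≤ C) (hb : ∀ x y, d x y ≤ C) (h : widim ε d ≤ (m : ℕ∞)) :
    ∃ β : Set (Set Z), IsOpenCover β ∧ ord β ≤ (m : ℕ∞) ∧ ∀ V ∈ β, ∀ x ∈ V, ∀ y ∈ V, d x y < ε := by
  obtain ⟨α, hα, h2⟩ := biInf_le_nat h
  obtain ⟨β, h3, h4, h5⟩ := covD_le h2
  refine ⟨β, h3, h5, fun V hV x hx y hy => ?_⟩
  obtain ⟨U, hU, hVU⟩ := h4 V hV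
  exact lt_of_mesh hC hb hα.2 hU (hVU hx) (hVU hy)

end dyn

theorem shift_iter {K : Type*} (N : ℕ) (x : ℤ → K) (i : ℤ) : (shift K)^[N] x i = x (i + N) := by
  induction N generalizing i with
  | zero => simp
  | succ N ih =>
    rw [Function.iterate_succ_apply']
    show (shift K)^[N] x (i + 1) = _
    rw [ih]
    congr 1
    push_cast
    ring

theorem upper {K : Type*} [MetricSpace K] [CompactSpace K] {d : (ℤ → K) → (ℤ → K) → ℝ} (hd : IsCompatMetric d)
    {n m : ℕ} (hn : 1 ≤ n) (hFD : FD m (Fin n → K)) : mdim (shift K) d ≤ (m : ℝ≥0∞) / (n : ℝ≥0∞) := by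
  refine iSup₂_le fun ε hε => ?_
  obtain ⟨M, δ, hδ, hM⟩ := d_of_coord hd (half_pos hε)
  have key : ∀ N : ℕ, widim ε (dynDist d (shift K) N) ≤ ((((N + 2 * M) / n + 1) * m : ℕ) : ℕ∞) := by
    intro N
    obtain ⟨β, h1, h2, h3⟩ := ostrand (k := (N + 2 * M) / n + 1) hFD
      (fun b (z : ℤ → K) j => z (-(M : ℤ) + ((b : ℕ) * n + (j : ℕ) : ℕ)))
      (fun b => continuous_pi fun j => continuous_apply _) hδ
    refine widim_le h1 (lt_of_le_of_lt (mesh_le (half_pos hε).le fun V hV x hx y hy => ?_) (half_lt_self hε)) h2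
    refine dynDist_le (half_pos hε).le fun l hl => (hM _ _ fun i hi => ?_).le
    rw [shift_iter, shift_iter]
    obtain ⟨hi1, hi2⟩ := abs_le.1 hi
    obtain ⟨c, hc⟩ : ∃ c : ℕ, i + l = -(M : ℤ) + c := ⟨(i + l + M).toNat, by omega⟩
    have hcN : c < N + 2 * M := by omega
    have hb : c / n < (N + 2 * M) / n + 1 := Nat.lt_succ_of_le (Nat.div_le_div_right hcN.le)
    have h := (dist_pi_lt_iff hδ).1 ((h3 V hV).2 x hx y hy ⟨c / n, hb⟩) ⟨c % n, Nat.mod_lt _ hn⟩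
    have he : c / n * n + c % n = c := by rw [mul_comm]; exact Nat.div_add_mod c n
    simp only [he] at h
    rw [hc]
    exact h
  have hn0 : (0 : ℝ) < n := by exact_mod_cast hn
  have hle : ∀ᶠ N : ℕ in atTop, ((widim ε (dynDist d (shift K) N) : ℕ∞) : ℝ≥0∞) / (N : ℝ≥0∞) ≤
      ENNReal.ofReal ((m : ℝ) / n + ((2 * M + n : ℝ) * m / n) / N) := by
    filter_upwards [eventually_ge_atTop 1] with N hN
    have hN0 : (0 : ℝ) < N := by exact_mod_cast hN
    have h1 : ((widim ε (dynDist d (shift K) N) : ℕ∞) : ℝ≥0∞) ≤ ((((N + 2 * M) / n + 1) * m : ℕ) : ℝ≥0∞) := by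
      have := ENat.toENNReal_le.2 (key N)
      simpa using this
    refine (ENNReal.div_le_div_right h1 _).trans ?_
    rw [← ENNReal.ofReal_natCast, ← ENNReal.ofReal_natCast, ← ENNReal.ofReal_div_of_pos hN0]
    refine ENNReal.ofReal_le_ofReal ?_
    push_cast
    have h2 : (((N + 2 * M) / n : ℕ) : ℝ) ≤ (N + 2 * M : ℝ) / n := by
      have := Nat.cast_div_le (α := ℝ) (m := N + 2 * M) (n := n)
      push_cast at this
      exact this
    rw [div_le_iff₀ hN0]
    calc ((((N + 2 * M) / n : ℕ) : ℝ) + 1) * m ≤ ((N + 2 * M : ℝ) / n + 1) * m :=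
          mul_le_mul_of_nonneg_right (by linarith) (Nat.cast_nonneg _)
      _ = _ := by field_simp; ring
  have hlim : Tendsto (fun N : ℕ => ENNReal.ofReal ((m : ℝ) / n + ((2 * M + n : ℝ) * m / n) / N)) atTop
      (nhds (ENNReal.ofReal ((m : ℝ) / n + 0))) :=
    ENNReal.tendsto_ofReal (tendsto_const_nhds.add (tendsto_const_div_atTop_nhds_zero_nat _))
  refine (liminf_le_liminf hle).trans ?_
  rw [hlim.liminf_eq, add_zero, ENNReal.ofReal_div_of_pos hn0, ENNReal.ofReal_natCast, ENNReal.ofReal_natCast]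

theorem lower {K : Type*} [MetricSpace K] [CompactSpace K] {d : (ℤ → K) → (ℤ → K) → ℝ} (hd : IsCompatMetric d)
    {n : ℕ} (hn : 1 ≤ n) (S : Set (Fin n → K)) [CompactSpace S] {F : Type} [Field F] {A : Set S} {ε0 : ℝ} (he : 0 < ε0)
    {q : ℕ} {u : List S → F} (hu : Coc A ε0 q u) (hE : Ess A q u) :
    (q : ℝ≥0∞) / (n : ℝ≥0∞) ≤ mdim (shift K) d := by
  classical
  obtain ⟨ε, hε, hcoord⟩ := coord_of_d hd (show 0 < ε0 / 3 by positivity)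
  obtain ⟨C, hC⟩ := d_bdd hd
  refine le_iSup₂_of_le ε hε ?_
  have key : ∀ N : ℕ, ((N / n * q : ℕ) : ℕ∞) ≤ widim ε (dynDist d (shift K) N) := by
    intro N
    rcases Nat.eq_zero_or_pos (N / n * q) with h0 | h0
    · rw [h0]; simp
    by_contra hlt
    rw [not_le] at hlt
    obtain ⟨c, hc⟩ : ∃ c, N / n * q = c + 1 := ⟨N / n * q - 1, by omega⟩
    have hle : widim ε (dynDist d (shift K) N) ≤ (c : ℕ∞) := by
      rw [hc] at hlt
      push_cast at hlt
      exact Order.le_of_lt_add_one hlt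
    obtain ⟨k, hk⟩ : ∃ k, N / n = k + 1 := ⟨N / n - 1, by
      have : N / n ≠ 0 := fun h => by rw [h] at h0; simp at h0
      have := Nat.pos_of_ne_zero this
      exact (Nat.sub_add_cancel this).symm⟩
    obtain ⟨β, hβ, ho, hsm⟩ := of_widim_le (C := max C 0) (le_max_right _ _) (fun x y =>
      dynDist_le (le_max_right _ _) fun i _ => (hC _ _).trans (le_max_left _ _)) hle
    obtain ⟨Y, _, _, π, B, w, hπ, hdist, hw, hwE⟩ := power_ess he hu hE k
    let J : Y → ℤ → K := fun y l => (π (Fin.ofNat (k + 1) (l.toNat / n)) y).1 ⟨l.toNat % n, Nat.mod_lt _ hn⟩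
    have hJ : Continuous J := continuous_pi fun l =>
      (continuous_apply _).comp (continuous_subtype_val.comp (hπ _))
    rw [ord_le] at ho
    refine no_cover he hw hwE ((fun V => J ⁻¹' V) '' β) ?_ ?_ ?_ ?_
    · rintro _ ⟨V, hV, rfl⟩
      exact (hβ.1 V hV).preimage hJ
    · refine Set.eq_univ_of_forall fun y => ?_
      have : J y ∈ ⋃₀ β := by rw [hβ.2]; exact Set.mem_univ _
      obtain ⟨V, hV, hy⟩ := this
      exact ⟨_, ⟨V, hV, rfl⟩, hy⟩
    · rintro _ ⟨V, hV, rfl⟩ x hx y hy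
      have hxy := hsm V hV _ hx _ hy
      refine hdist x y _ (by positivity) fun i => ?_
      rw [Subtype.dist_eq]
      refine (dist_pi_lt_iff (by positivity)).2 fun j => ?_
      have hl : (i : ℕ) * n + j < N := by
        have h1 : ((i : ℕ) + 1) * n ≤ N / n * n := Nat.mul_le_mul_right _ (by omega)
        have h2 := Nat.div_mul_le_self N n
        have h3 := j.2
        rw [add_mul, one_mul] at h1
        omega
      have h1 := hcoord _ _ (lt_of_le_of_lt (le_dynDist hl (J x) (J y)) hxy)
      rw [shift_iter, shift_iter] at h1
      have hdiv : ((i : ℕ) * n + j) / n = i := by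
        rw [mul_comm, Nat.mul_add_div hn, Nat.div_eq_of_lt j.2, add_zero]
      have hmod : ((i : ℕ) * n + j) % n = j := by
        rw [mul_comm, Nat.mul_add_mod, Nat.mod_eq_of_lt j.2]
      have hJv : ∀ y, J y (0 + (((i : ℕ) * n + j : ℕ) : ℤ)) = (π i y).1 j := by
        intro y
        simp only [J, zero_add, Int.toNat_natCast, hdiv, hmod]
        have hi : Fin.ofNat (k + 1) (i : ℕ) = i := Fin.ext (Nat.mod_eq_of_lt i.2)
        rw [hi]
      rw [hJv, hJv] at h1
      exact h1
    · intro s hs y hy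
      have hch : ∀ V, ∃ V', V ∈ s → V' ∈ β ∧ J ⁻¹' V' = V := fun V => by
        by_cases hV : V ∈ s
        · obtain ⟨V', h1, h2⟩ := hs hV
          exact ⟨V', fun _ => ⟨h1, h2⟩⟩
        · exact ⟨∅, fun h => absurd h hV⟩
      choose g hg using hch
      have h1 := ho (s.image g) (by
        intro V hV
        obtain ⟨W, hW, rfl⟩ := Finset.mem_image.1 (Finset.mem_coe.1 hV)
        exact (hg W hW).1) (J y) (by
        intro V hV
        obtain ⟨W, hW, rfl⟩ := Finset.mem_image.1 hV
        have h2 := hy W hW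
        rw [← (hg W hW).2] at h2
        exact h2)
      rw [Finset.card_image_of_injOn (by
        intro V hV W hW h
        rw [← (hg V hV).2, ← (hg W hW).2, h])] at h1
      rw [← hk]
      omega
  have hn0 : (0 : ℝ) < n := by exact_mod_cast hn
  have hle : ∀ᶠ N : ℕ in atTop, ENNReal.ofReal ((q : ℝ) / n - (q : ℝ) / N) ≤
      ((widim ε (dynDist d (shift K) N) : ℕ∞) : ℝ≥0∞) / (N : ℝ≥0∞) := by
    filter_upwards [eventually_ge_atTop 1] with N hN
    have hN0 : (0 : ℝ) < N := by exact_mod_cast hN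
    have h1 : ((N / n * q : ℕ) : ℝ≥0∞) ≤ ((widim ε (dynDist d (shift K) N) : ℕ∞) : ℝ≥0∞) := by
      have := ENat.toENNReal_le.2 (key N)
      simpa using this
    refine le_trans ?_ (ENNReal.div_le_div_right h1 _)
    rw [← ENNReal.ofReal_natCast, ← ENNReal.ofReal_natCast, ← ENNReal.ofReal_div_of_pos hN0]
    refine ENNReal.ofReal_le_ofReal ?_
    push_cast
    have h2 : (N : ℝ) / n - 1 ≤ ((N / n : ℕ) : ℝ) := by
      have h3 := Nat.div_add_mod N n
      have h4 := Nat.mod_lt N hn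
      have h5 : N ≤ n * (N / n) + n := by omega
      have h6 : (N : ℝ) ≤ n * ((N / n : ℕ) : ℝ) + n := by exact_mod_cast h5
      rw [sub_le_iff_le_add, div_le_iff₀ hn0]
      linarith
    rw [le_div_iff₀ hN0]
    calc ((q : ℝ) / n - q / N) * N = ((N : ℝ) / n - 1) * q := by field_simp
      _ ≤ _ := mul_le_mul_of_nonneg_right h2 (Nat.cast_nonneg _)
  have hlim : Tendsto (fun N : ℕ => ENNReal.ofReal ((q : ℝ) / n - (q : ℝ) / N)) atTop
      (nhds (ENNReal.ofReal ((q : ℝ) / n - 0))) :=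
    ENNReal.tendsto_ofReal (tendsto_const_nhds.sub (tendsto_const_div_atTop_nhds_zero_nat _))
  refine le_trans (le_of_eq ?_) (liminf_le_liminf hle)
  rw [hlim.liminf_eq, sub_zero, ENNReal.ofReal_div_of_pos hn0, ENNReal.ofReal_natCast, ENNReal.ofReal_natCast]

theorem final {K : Type*} [MetricSpace K] [CompactSpace K]
    (hfin : topDim K ≠ ⊤)
    (d : (ℤ → K) → (ℤ → K) → ℝ) (hd : IsCompatMetric d) (n : ℕ) (hn : 1 ≤ n) :
    ((topDim (Fin n → K) : ℝ≥0∞) - 1) / (n : ℝ≥0∞) ≤ mdim (shift K) d ∧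
      mdim (shift K) d ≤ (topDim (Fin n → K) : ℝ≥0∞) / (n : ℝ≥0∞) := by
  obtain ⟨r, hr⟩ := ENat.ne_top_iff_exists.1 hfin
  have hK : FD r K := FD_of_topDim hr.symm.le
  have hle := topDim_pi_le (n := n) hK
  obtain ⟨m, hm⟩ := ENat.ne_top_iff_exists.1 (ne_top_of_le_ne_top (ENat.natCast_ne_top _) hle)
  have hFD : FD m (Fin n → K) := FD_of_topDim hm.symm.le
  rw [← hm, ENat.toENNReal_coe]
  refine ⟨?_, upper hd hn hFD⟩
  rcases m with _ | _ | k
  · simp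
  · simp
  have h1 : ¬ FD (k + 1) (Fin n → K) := fun h => by
    have := topDim_le_of_FD h
    rw [← hm] at this
    have := Nat.cast_le.1 this
    omega
  obtain ⟨S, hS, φ, hφc, hφ, hext⟩ := exists_nonExt hFD h1
  have : CompactSpace S := isCompact_iff_compactSpace.1 hS.isCompact
  obtain ⟨A, ε0, c, he, hc, hE⟩ := hopf (hFD.sub S) φ hφc hφ hext
  obtain ⟨F, _, q, ε, u, hq, hε, hu, huE⟩ := to_field he (m := k + 1) hc hE
  refine le_trans (ENNReal.div_le_div_right ?_ _) (lower hd hn S hε hu huE)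
  have : ((k + 1 + 1 : ℕ) : ℝ≥0∞) - 1 = ((k + 1 : ℕ) : ℝ≥0∞) := by
    rw [Nat.cast_add (k + 1) 1, Nat.cast_one, ENNReal.add_sub_cancel_right ENNReal.one_ne_top]
  rw [this]
  exact_mod_cast hq

end MDP

namespace MeanDimPaper

variable {X : Type*} [TopologicalSpace X]

/-- for a finite dimensional compact metric space `K` and every `n ≥ 1`,
`(dim Kⁿ - 1)/n ≤ mdim(K^ℤ, σ) ≤ (dim Kⁿ)/n`. -/
theorem mdim_fullshift_bounds {K : Type*} [MetricSpace K] [CompactSpace K]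
    (hfin : topDim K ≠ ⊤)
    (d : (ℤ → K) → (ℤ → K) → ℝ) (hd : IsCompatMetric d) (n : ℕ) (hn : 1 ≤ n) :
    ((topDim (Fin n → K) : ℝ≥0∞) - 1) / (n : ℝ≥0∞) ≤ mdim (shift K) d ∧
      mdim (shift K) d ≤ (topDim (Fin n → K) : ℝ≥0∞) / (n : ℝ≥0∞) := by
  exact MDP.final hfin d hd n hn

end MeanDimPaper
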